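/- For every Jordan curve C in the plane, there exists a homeomorphism h of ℝ² onto itself such that h(C) is the unit circle S¹ = {x ∈ ℝ² : |x| = 1} (the Schönflies theorem). -/

import Mathlib

namespace Schoen
open Set Filter Topology

def HasLog (f : ℂ → ℂ) (K : Set ℂ) : Prop :=
  ∃ g : ℂ → ℂ, ContinuousOn g K ∧ ∀ z ∈ K, Complex.exp (g z) = f z

lemma HasLog.mono {f : ℂ → ℂ} {K L : Set ℂ} (h : HasLog f K) (hL : L ⊆ K) : HasLog f L := by
  obtain ⟨g, hg, he⟩ := h
  exact ⟨g, hg.mono hL, fun z hz => he z (hL hz)⟩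

lemma HasLog.congr {f f' : ℂ → ℂ} {K : Set ℂ} (h : HasLog f K) (hf : ∀ z ∈ K, f z = f' z) :
    HasLog f' K := by
  obtain ⟨g, hg, he⟩ := h
  exact ⟨g, hg, fun z hz => (he z hz).trans (hf z hz)⟩

lemma HasLog.mul {f f' : ℂ → ℂ} {K : Set ℂ} (h : HasLog f K) (h' : HasLog f' K) :
    HasLog (fun z => f z * f' z) K := by
  obtain ⟨g, hg, he⟩ := h
  obtain ⟨g', hg', he'⟩ := h'
  exact ⟨fun z => g z + g' z, hg.add hg', fun z hz => by
    rw [Complex.exp_add, he z hz, he' z hz]⟩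

lemma HasLog.inv {f : ℂ → ℂ} {K : Set ℂ} (h : HasLog f K) :
    HasLog (fun z => (f z)⁻¹) K := by
  obtain ⟨g, hg, he⟩ := h
  exact ⟨fun z => - g z, hg.neg, fun z hz => by rw [Complex.exp_neg, he z hz]⟩

lemma hasLog_const {c : ℂ} (hc : c ≠ 0) (K : Set ℂ) : HasLog (fun _ => c) K :=
  ⟨fun _ => Complex.log c, continuousOn_const, fun _ _ => Complex.exp_log hc⟩

lemma hasLog_of_slitPlane {f : ℂ → ℂ} {K : Set ℂ} (hf : ContinuousOn f K)
    (h : ∀ z ∈ K, f z ∈ Complex.slitPlane) : HasLog f K :=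
  ⟨fun z => Complex.log (f z), hf.clog h, fun z hz =>
    Complex.exp_log (Complex.slitPlane_ne_zero (h z hz))⟩

lemma hasLog_of_near_one {f : ℂ → ℂ} {K : Set ℂ} (hf : ContinuousOn f K)
    (h : ∀ z ∈ K, ‖f z - 1‖ < 1) : HasLog f K :=
  hasLog_of_slitPlane hf fun z hz => by
    have := Complex.mem_slitPlane_of_norm_lt_one (h z hz)
    simpa using this

lemma hasLog_of_near {f : ℂ → ℂ} {K : Set ℂ} (hf : ContinuousOn f K) (c : ℂ)
    (h : ∀ z ∈ K, ‖f z - c‖ < ‖c‖) : HasLog f K := by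
  by_cases hc : c = 0
  · subst hc
    have : K = ∅ := by
      ext z; simp only [mem_empty_iff_false, iff_false]; intro hz
      have := h z hz
      simp at this
      linarith [norm_nonneg (f z)]
    subst this
    exact ⟨f, hf, by simp⟩
  have h1 : HasLog (fun z => f z / c) K := by
    apply hasLog_of_near_one (hf.div_const c)
    intro z hz
    have : f z / c - 1 = (f z - c) / c := by field_simp
    rw [this, norm_div, div_lt_one (norm_pos_iff.mpr hc)]
    exact h z hz
  exact (h1.mul (hasLog_const hc K)).congr fun z _ => by field_simp

/-- the difference of two logarithms is constant on preconnected sets -/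
lemma log_diff_const {X : Type*} [TopologicalSpace X] {S : Set X} (hS : IsPreconnected S)
    {g h : X → ℂ} (hg : ContinuousOn g S) (hh : ContinuousOn h S)
    (he : ∀ x ∈ S, Complex.exp (g x) = Complex.exp (h x)) :
    ∀ x ∈ S, ∀ y ∈ S, g x - h x = g y - h y := by
  intro x hx y hy
  have key : ∀ z ∈ S, ∃ n : ℤ, g z - h z = n * (2 * Real.pi * Complex.I) := by
    intro z hz
    obtain ⟨n, hn⟩ := Complex.exp_eq_exp_iff_exists_int.mp (he z hz)
    exact ⟨n, by rw [hn]; ring⟩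
  have hne : (2 * Real.pi * Complex.I : ℂ) ≠ 0 := Complex.two_pi_I_ne_zero
  have hd : IsDiscrete (range ((↑) : ℤ → ℝ)) :=
    Int.isClosedEmbedding_coe_real.isEmbedding.isInducing.isDiscrete_range
  have hc : ContinuousOn (fun z => ((g z - h z) / (2 * Real.pi * Complex.I)).re) S :=
    Complex.continuous_re.comp_continuousOn ((hg.sub hh).div_const _)
  have := hS.constant_of_mapsTo (T := range ((↑) : ℤ → ℝ)) hd hc (by
    intro z hz
    obtain ⟨n, hn⟩ := key z hz
    exact ⟨n, by simp only [hn]; rw [mul_div_cancel_right₀ _ hne]; simp⟩) hx hy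
  obtain ⟨n, hn⟩ := key x hx
  obtain ⟨m, hm⟩ := key y hy
  simp only [hn, hm] at this
  rw [mul_div_cancel_right₀ _ hne, mul_div_cancel_right₀ _ hne] at this
  rw [hn, hm]
  have : (n : ℝ) = m := by simpa using this
  have : n = m := by exact_mod_cast this
  rw [this]

lemma hasLog_union_of_eq {f : ℂ → ℂ} {K L : Set ℂ} (hK : IsClosed K) (hL : IsClosed L)
    {g h : ℂ → ℂ} (hg : ContinuousOn g K) (hh : ContinuousOn h L)
    (hge : ∀ z ∈ K, Complex.exp (g z) = f z) (hhe : ∀ z ∈ L, Complex.exp (h z) = f z)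
    (heq : ∀ z ∈ K ∩ L, g z = h z) : HasLog f (K ∪ L) := by
  classical
  refine ⟨K.piecewise g h, ?_, ?_⟩
  · apply ContinuousOn.union_of_isClosed _ _ hK hL
    · exact hg.congr fun z hz => by simp [hz]
    · refine hh.congr fun z hz => ?_
      by_cases hzK : z ∈ K
      · simp [hzK, heq z ⟨hzK, hz⟩]
      · simp [hzK]
  · intro z hz
    by_cases hzK : z ∈ K
    · simp [hzK, hge z hzK]
    · simp [hzK, hhe z (hz.resolve_left hzK)]

lemma hasLog_union {f : ℂ → ℂ} {K L : Set ℂ} (hK : IsClosed K) (hL : IsClosed L)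
    (hf : HasLog f K) (hf' : HasLog f L) (hc : IsPreconnected (K ∩ L)) : HasLog f (K ∪ L) := by
  obtain ⟨g, hg, he⟩ := hf
  obtain ⟨h, hh, he'⟩ := hf'
  rcases (K ∩ L).eq_empty_or_nonempty with hem | ⟨z0, hz0⟩
  · exact hasLog_union_of_eq hK hL hg hh he he' (by simp [hem])
  · have hd := log_diff_const hc (hg.mono inter_subset_left) (hh.mono inter_subset_right)
      (fun z hz => by rw [he z hz.1, he' z hz.2])
    refine hasLog_union_of_eq (h := fun z => h z + (g z0 - h z0)) hK hL hg
      (hh.add continuousOn_const) he ?_ ?_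
    · intro z hz
      rw [Complex.exp_add, he' z hz, Complex.exp_sub, he z0 hz0.1, he' z0 hz0.2, div_self, mul_one]
      rw [← he z0 hz0.1]; exact Complex.exp_ne_zero _
    · intro z hz
      rw [← hd z hz z0 hz0]; ring

/-- Eilenberg criterion, easy direction -/
lemma hasLog_of_connected {K S : Set ℂ} (hK : IsClosed K) (hS : IsPreconnected S)
    (hd : Disjoint S K) {a b : ℂ} (ha : a ∈ S) (hb : b ∈ S) :
    HasLog (fun z => (z - a) / (z - b)) K := by
  have hne : ∀ x ∈ S, ∀ z ∈ K, z - x ≠ 0 := by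
    intro x hx z hz h
    have : z = x := sub_eq_zero.mp h
    exact Set.disjoint_left.mp hd hx (this ▸ hz)
  have hsymm : ∀ x y, HasLog (fun z => (z - x) / (z - y)) K → HasLog (fun z => (z - y) / (z - x)) K := by
    intro x y h
    exact h.inv.congr fun z _ => by simp
  refine hS.induction₂ (fun x y => HasLog (fun z => (z - x) / (z - y)) K) ?_ ?_ ?_ ha hb
  · intro x hx
    have hxK : x ∈ Kᶜ := fun h => Set.disjoint_left.mp hd hx h
    obtain ⟨r, hr, hball⟩ := Metric.isOpen_iff.mp hK.isOpen_compl x hxK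
    have : Metric.ball x r ∈ 𝓝[S] x := mem_nhdsWithin_of_mem_nhds (Metric.ball_mem_nhds x hr)
    filter_upwards [this] with y hy
    apply hsymm
    apply hasLog_of_near_one
    · apply ContinuousOn.div (by fun_prop) (by fun_prop) (hne x hx)
    · intro z hz
      have h0 := hne x hx z hz
      have : (z - y) / (z - x) - 1 = (x - y) / (z - x) := by field_simp; ring
      rw [this, norm_div, div_lt_one (norm_pos_iff.mpr h0)]
      have h1 : ‖x - y‖ < r := by rw [← dist_eq_norm, dist_comm]; exact hy
      have h2 : r ≤ ‖z - x‖ := by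
        by_contra hlt
        push Not at hlt
        exact hball (show z ∈ Metric.ball x r by rwa [Metric.mem_ball, dist_eq_norm]) hz
      linarith
  · intro x y w _ hy _ h1 h2
    refine (h1.mul h2).congr fun z hz => ?_
    have := hne y hy z hz
    field_simp
  · intro x y _ _ h
    exact hsymm _ _ h

end Schoen

namespace Schoen
open Set Filter Topology

lemma log_I_mul {t : ℝ} (ht : 0 < t) :
    Complex.log (t * Complex.I) = Real.log t + Real.pi / 2 * Complex.I := by
  rw [Complex.log_ofReal_mul ht Complex.I_ne_zero, Complex.log_I]

lemma log_neg_I_mul {t : ℝ} (ht : 0 < t) :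
    Complex.log (-(t * Complex.I)) = Real.log t - Real.pi / 2 * Complex.I := by
  have : -(t * Complex.I : ℂ) = t * (-Complex.I) := by ring
  rw [this, Complex.log_ofReal_mul ht (neg_ne_zero.mpr Complex.I_ne_zero), Complex.log_neg_I]
  ring

lemma jump_above {z a : ℂ} (hre : z.re = a.re) (him : a.im < z.im) :
    Complex.log (a - z) - Complex.log (z - a) = -(Real.pi * Complex.I) := by
  have h : z - a = ((z.im - a.im : ℝ) : ℂ) * Complex.I := by
    apply Complex.ext <;> simp [hre]
  have h' : a - z = -(((z.im - a.im : ℝ) : ℂ) * Complex.I) := by rw [← h]; ring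
  rw [h', h, log_I_mul (by linarith), log_neg_I_mul (by linarith)]
  ring

lemma jump_below {z a : ℂ} (hre : z.re = a.re) (him : z.im < a.im) :
    Complex.log (a - z) - Complex.log (z - a) = Real.pi * Complex.I := by
  have := jump_above (z := a) (a := z) hre.symm him
  linear_combination -this

lemma half_cont {K : Set ℂ} {a : ℂ} (ha : a ∉ K) (h : ∀ z ∈ K, a.re ≤ z.re) :
    ContinuousOn (fun z => Complex.log (z - a)) K := by
  apply ContinuousOn.clog (by fun_prop)
  intro z hz
  rw [Complex.mem_slitPlane_iff]
  have hza : z ≠ a := fun e => ha (e ▸ hz)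
  rcases (h z hz).lt_or_eq with h1 | h1
  · left; simp; exact h1
  · right
    intro h2
    apply hza
    apply Complex.ext h1.symm
    simp at h2; linarith

lemma half_cont' {K : Set ℂ} {a : ℂ} (ha : a ∉ K) (h : ∀ z ∈ K, z.re ≤ a.re) :
    ContinuousOn (fun z => Complex.log (a - z)) K := by
  apply ContinuousOn.clog (by fun_prop)
  intro z hz
  rw [Complex.mem_slitPlane_iff]
  have hza : z ≠ a := fun e => ha (e ▸ hz)
  rcases (h z hz).lt_or_eq with h1 | h1
  · left; simp; exact h1
  · right
    intro h2
    apply hza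
    apply Complex.ext h1
    simp at h2; linarith

/-- functions with a prescribed jump -/
lemma exists_jump {K : Set ℂ} (hK : IsClosed K) (hKc : IsPreconnected Kᶜ) (c ya yb : ℝ)
    (ha : (⟨c, ya⟩ : ℂ) ∉ K) (hb : (⟨c, yb⟩ : ℂ) ∉ K) (hab : ya < yb) :
    ∃ p q : ℂ → ℂ, ContinuousOn p (K ∩ {z | z.re ≤ c}) ∧ ContinuousOn q (K ∩ {z | c ≤ z.re}) ∧
      (∀ z ∈ K ∩ {z | z.re ≤ c}, Complex.exp (p z) = 1) ∧
      (∀ z ∈ K ∩ {z | c ≤ z.re}, Complex.exp (q z) = 1) ∧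
      (∀ z, z.re = c → z.im < ya → p z - q z = 0) ∧
      (∀ z, z.re = c → ya < z.im → z.im < yb → p z - q z = -(2 * Real.pi * Complex.I)) := by
  set a : ℂ := ⟨c, ya⟩ with hadef
  set b : ℂ := ⟨c, yb⟩ with hbdef
  obtain ⟨l, hl, hle⟩ := hasLog_of_connected (a := a) (b := b) hK hKc disjoint_compl_left ha hb
  refine ⟨fun z => (Complex.log (a - z) - Complex.log (b - z)) - l z,
    fun z => (Complex.log (z - a) - Complex.log (z - b)) - l z, ?_, ?_, ?_, ?_, ?_, ?_⟩
  · refine ((half_cont' (fun h => ha h.1) ?_).sub (half_cont' (fun h => hb h.1) ?_)).sub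
      (hl.mono inter_subset_left)
    · intro z hz; exact hz.2
    · intro z hz; exact hz.2
  · refine ((half_cont (fun h => ha h.1) ?_).sub (half_cont (fun h => hb h.1) ?_)).sub
      (hl.mono inter_subset_left)
    · intro z hz; exact hz.2
    · intro z hz; exact hz.2
  · intro z hz
    have h1 : a - z ≠ 0 := sub_ne_zero.mpr fun e => ha (e ▸ hz.1)
    have h2 : b - z ≠ 0 := sub_ne_zero.mpr fun e => hb (e ▸ hz.1)
    have h1' : z - a ≠ 0 := sub_ne_zero.mpr fun e => ha (e ▸ hz.1)
    have h2' : z - b ≠ 0 := sub_ne_zero.mpr fun e => hb (e ▸ hz.1)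
    rw [Complex.exp_sub, Complex.exp_sub, Complex.exp_log h1, Complex.exp_log h2, hle z hz.1]
    rw [div_eq_one_iff_eq (div_ne_zero h1' h2'), div_eq_div_iff h2 h2']
    ring
  · intro z hz
    have h1' : z - a ≠ 0 := sub_ne_zero.mpr fun e => ha (e ▸ hz.1)
    have h2' : z - b ≠ 0 := sub_ne_zero.mpr fun e => hb (e ▸ hz.1)
    rw [Complex.exp_sub, Complex.exp_sub, Complex.exp_log h1', Complex.exp_log h2', hle z hz.1]
    rw [div_eq_one_iff_eq (div_ne_zero h1' h2')]
  · intro z hz hz1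
    have e1 := jump_below (z := z) (a := a) hz hz1
    have e2 := jump_below (z := z) (a := b) hz (hz1.trans hab)
    linear_combination e1 - e2
  · intro z hz hz1 hz2
    have e1 := jump_above (z := z) (a := a) hz hz1
    have e2 := jump_below (z := z) (a := b) hz hz2
    linear_combination e1 - e2

lemma borsuk_step {K : Set ℂ} (hK : IsCompact K) (hKc : IsPreconnected Kᶜ) {f : ℂ → ℂ} (c : ℝ)
    (hl : HasLog f (K ∩ {z | z.re ≤ c})) (hr : HasLog f (K ∩ {z | c ≤ z.re})) : HasLog f K := by
  obtain ⟨g0, hg0, hg0e⟩ := hl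
  obtain ⟨h0, hh0, hh0e⟩ := hr
  set T : Set ℂ := K ∩ {z | z.re = c} with hT
  have hTc : IsCompact T := hK.inter_right (isClosed_eq Complex.continuous_re continuous_const)
  have hTl : T ⊆ K ∩ {z | z.re ≤ c} := fun z hz => ⟨hz.1, le_of_eq hz.2⟩
  have hTr : T ⊆ K ∩ {z | c ≤ z.re} := fun z hz => ⟨hz.1, ge_of_eq hz.2⟩
  have hpi : (2 * Real.pi * Complex.I : ℂ) ≠ 0 := Complex.two_pi_I_ne_zero
  have hintg : ∀ z ∈ T, ∃ n : ℤ, g0 z - h0 z = n * (2 * Real.pi * Complex.I) := by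
    intro z hz
    have : Complex.exp (g0 z) = Complex.exp (h0 z) := by rw [hg0e z (hTl hz), hh0e z (hTr hz)]
    obtain ⟨n, hn⟩ := Complex.exp_eq_exp_iff_exists_int.mp this
    exact ⟨n, by rw [hn]; ring⟩
  have hucont := hTc.uniformContinuousOn_of_continuous
    (f := fun z => g0 z - h0 z) ((hg0.mono hTl).sub (hh0.mono hTr))
  rw [Metric.uniformContinuousOn_iff] at hucont
  obtain ⟨δ, hδ, hunif⟩ := hucont 1 one_pos
  have hconst : ∀ z ∈ T, ∀ w ∈ T, |z.im - w.im| < δ → g0 z - h0 z = g0 w - h0 w := by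
    intro z hz w hw hzw
    have hd : dist z w < δ := by
      have : z - w = ((z.im - w.im : ℝ) : ℂ) * Complex.I := by
        apply Complex.ext <;> simp [show z.re = c from hz.2, show w.re = c from hw.2]
      rw [dist_eq_norm, this, norm_mul, Complex.norm_I, mul_one, Complex.norm_real]
      exact hzw
    have h1 := hunif z hz w hw hd
    obtain ⟨n, hn⟩ := hintg z hz
    obtain ⟨m, hm⟩ := hintg w hw
    simp only [dist_eq_norm] at h1
    rw [hn, hm, ← sub_mul, norm_mul] at h1
    have h2 : ‖(2 * Real.pi * Complex.I : ℂ)‖ = 2 * Real.pi := by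
      simp [abs_of_pos Real.pi_pos]
    rw [h2] at h1
    have h3 : ‖((n : ℂ) - m)‖ = |((n - m : ℤ) : ℝ)| := by
      rw [← Int.cast_sub, Complex.norm_intCast]
    rw [h3] at h1
    have h4 : |((n - m : ℤ) : ℝ)| < 1 := by
      have := Real.pi_gt_three
      have h5 := abs_nonneg ((n - m : ℤ) : ℝ)
      nlinarith
    have h5 : n - m = 0 := by
      have : |n - m| < 1 := by exact_mod_cast h4
      exact Int.abs_lt_one_iff.mp this
    have h6 : n = m := by omega
    rw [hn, hm, h6]
  obtain ⟨R, hR0, hR⟩ := hK.isBounded.exists_pos_norm_lt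
  have hRim : ∀ z ∈ K, |z.im| < R := fun z hz => (Complex.abs_im_le_norm z).trans_lt (hR z hz)
  set η := δ / 3 with hη
  have hη0 : 0 < η := by positivity
  have main : ∀ j : ℕ, ∃ N : ℂ, ∃ g h : ℂ → ℂ, ContinuousOn g (K ∩ {z | z.re ≤ c}) ∧
      ContinuousOn h (K ∩ {z | c ≤ z.re}) ∧
      (∀ z ∈ K ∩ {z | z.re ≤ c}, Complex.exp (g z) = f z) ∧
      (∀ z ∈ K ∩ {z | c ≤ z.re}, Complex.exp (h z) = f z) ∧
      (∀ z ∈ T, z.im ≤ -R + j * η → g z = h z) ∧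
      (∀ z ∈ T, -R + j * η - η ≤ z.im → g z - h z = g0 z - h0 z + N) := by
    intro j
    induction j with
    | zero =>
      refine ⟨0, g0, h0, hg0, hh0, hg0e, hh0e, ?_, ?_⟩
      · intro z hz h
        have := (abs_lt.mp (hRim z hz.1)).1
        simp at h; linarith
      · intro z _ _; simp
    | succ j ih =>
      obtain ⟨N, g, h, hg, hh, hge, hhe, hlow, hup⟩ := ih
      set y : ℝ := -R + j * η with hy
      have hy1 : -R + ((j + 1 : ℕ) : ℝ) * η = y + η := by push_cast; rw [hy]; ring
      rw [hy1]
      by_cases hA : ∃ w ∈ T, y - η ≤ w.im ∧ w.im ≤ y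
      · obtain ⟨w, hw, hw1, hw2⟩ := hA
        refine ⟨N, g, h, hg, hh, hge, hhe, ?_, ?_⟩
        · intro z hz hzy
          by_cases hzy' : z.im ≤ y
          · exact hlow z hz hzy'
          · push Not at hzy'
            have e1 := hup z hz (by linarith)
            have e2 := hup w hw hw1
            have e3 := hlow w hw hw2
            have e4 := hconst z hz w hw (by rw [abs_lt]; constructor <;> linarith)
            have : g z - h z = 0 := by
              rw [e1, e4, ← e2, e3, sub_self]
            exact sub_eq_zero.mp this
        · intro z hz hzy
          exact hup z hz (by linarith)
      · push Not at hA
        by_cases hB : ∃ w ∈ T, y ≤ w.im ∧ w.im ≤ y + η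
        · obtain ⟨w, hw, hw1, hw2⟩ := hB
          have hwint : ∃ n : ℤ, g w - h w = n * (2 * Real.pi * Complex.I) := by
            have : Complex.exp (g w) = Complex.exp (h w) := by rw [hge w (hTl hw), hhe w (hTr hw)]
            obtain ⟨n, hn⟩ := Complex.exp_eq_exp_iff_exists_int.mp this
            exact ⟨n, by rw [hn]; ring⟩
          obtain ⟨n, hn⟩ := hwint
          have ha : (⟨c, y - η / 2⟩ : ℂ) ∉ K := by
            intro hmem
            have := hA ⟨c, y - η / 2⟩ ⟨hmem, rfl⟩ (by simp; linarith)
            simp at this; linarith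
          have hb : (⟨c, max R (y + η)⟩ : ℂ) ∉ K := by
            intro hmem
            have := (abs_lt.mp (hRim _ hmem)).2
            simp at this
          obtain ⟨p, q, hp, hq, hpe, hqe, hpq0, hpq1⟩ := exists_jump hK.isClosed hKc c _ _ ha hb
            (by have := le_max_right R (y + η); linarith)
          have hdiff : ∀ z ∈ T, y ≤ z.im → (p z - q z) = -(2 * Real.pi * Complex.I) := by
            intro z hz hzy
            refine hpq1 z hz.2 (by linarith) ?_
            have := (abs_lt.mp (hRim _ hz.1)).2
            exact this.trans_le (le_max_left _ _)
          have hnew : ∀ z ∈ T, y ≤ z.im →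
              (g z + n * p z) - (h z + n * q z) = g0 z - h0 z + (N - n * (2 * Real.pi * Complex.I)) := by
            intro z hz hzy
            have e1 := hdiff z hz hzy
            have e2 := hup z hz (by linarith)
            linear_combination e2 + n * e1
          refine ⟨N - n * (2 * Real.pi * Complex.I), fun z => g z + n * p z, fun z => h z + n * q z,
            hg.add (continuousOn_const.mul hp), hh.add (continuousOn_const.mul hq), ?_, ?_, ?_, ?_⟩
          · intro z hz
            rw [Complex.exp_add, hge z hz, Complex.exp_int_mul, hpe z hz]; simp
          · intro z hz
            rw [Complex.exp_add, hhe z hz, Complex.exp_int_mul, hqe z hz]; simp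
          · intro z hz hzy
            by_cases hzy' : z.im ≤ y
            · have h1 : z.im < y - η := by
                by_contra hcon
                push Not at hcon
                have := hA z hz hcon
                linarith
              have h2 := hpq0 z hz.2 (by linarith)
              have h3 := hlow z hz hzy'
              simp only
              linear_combination h3 + n * h2
            · push Not at hzy'
              have e1 := hnew z hz hzy'.le
              have e2 := hup w hw (by linarith)
              have e4 := hconst z hz w hw (by rw [abs_lt]; constructor <;> linarith)
              have : (g z + n * p z) - (h z + n * q z) = 0 := by
                rw [e1, e4]
                linear_combination hn - e2
              exact sub_eq_zero.mp this
          · intro z hz hzy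
            exact hnew z hz (by linarith)
        · push Not at hB
          refine ⟨N, g, h, hg, hh, hge, hhe, ?_, ?_⟩
          · intro z hz hzy
            by_cases hzy' : z.im ≤ y
            · exact hlow z hz hzy'
            · push Not at hzy'
              have := hB z hz hzy'.le
              linarith
          · intro z hz hzy
            exact hup z hz (by linarith)
  obtain ⟨j, hj⟩ := exists_nat_gt (2 * R / η)
  obtain ⟨N, g, h, hg, hh, hge, hhe, hlow, -⟩ := main j
  have hj' : 2 * R < j * η := by rwa [div_lt_iff₀ hη0] at hj
  have huni : K = (K ∩ {z | z.re ≤ c}) ∪ (K ∩ {z | c ≤ z.re}) := by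
    rw [← inter_union_distrib_left]
    symm
    apply inter_eq_left.mpr
    intro z _
    exact le_total z.re c
  rw [huni]
  refine hasLog_union_of_eq (hK.isClosed.inter (isClosed_le Complex.continuous_re continuous_const))
    (hK.isClosed.inter (isClosed_le continuous_const Complex.continuous_re)) hg hh hge hhe ?_
  intro z hz
  refine hlow z ⟨hz.1.1, le_antisymm hz.1.2 hz.2.2⟩ ?_
  have := (abs_lt.mp (hRim z hz.1.1)).2
  linarith

lemma compl_conn_le {K : Set ℂ} (hK : IsCompact K) (hKc : IsPreconnected Kᶜ) (c : ℝ) :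
    IsPreconnected (K ∩ {z | z.re ≤ c})ᶜ := by
  obtain ⟨R, hR0, hR⟩ := hK.isBounded.exists_pos_norm_lt
  rw [compl_inter]
  have h2 : IsPreconnected ({z : ℂ | z.re ≤ c}ᶜ) := by
    have : {z : ℂ | z.re ≤ c}ᶜ = {z | c < z.re} := by ext; simp
    rw [this]
    exact (convex_halfSpace_re_gt c).isPreconnected
  refine IsPreconnected.union ((max R (c + 1) : ℝ) : ℂ) ?_ ?_ hKc h2
  · intro h
    have := hR _ h
    rw [Complex.norm_real] at this
    have h3 := le_abs_self (max R (c + 1))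
    have h4 := le_max_left R (c + 1)
    simp only [Real.norm_eq_abs] at this
    linarith
  · simp

lemma compl_conn_ge {K : Set ℂ} (hK : IsCompact K) (hKc : IsPreconnected Kᶜ) (c : ℝ) :
    IsPreconnected (K ∩ {z | c ≤ z.re})ᶜ := by
  obtain ⟨R, hR0, hR⟩ := hK.isBounded.exists_pos_norm_lt
  rw [compl_inter]
  have h2 : IsPreconnected ({z : ℂ | c ≤ z.re}ᶜ) := by
    have : {z : ℂ | c ≤ z.re}ᶜ = {z | z.re < c} := by ext; simp
    rw [this]
    exact (convex_halfSpace_re_lt c).isPreconnected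
  refine IsPreconnected.union ((min (-R) (c - 1) : ℝ) : ℂ) ?_ ?_ hKc h2
  · intro h
    have := hR _ h
    rw [Complex.norm_real] at this
    have h3 := neg_le_abs (min (-R) (c - 1))
    have h4 := min_le_left (-R) (c - 1)
    simp only [Real.norm_eq_abs] at this
    linarith
  · simp

lemma isClosed_re_le (c : ℝ) : IsClosed {z : ℂ | z.re ≤ c} :=
  isClosed_le Complex.continuous_re continuous_const
lemma isClosed_re_ge (c : ℝ) : IsClosed {z : ℂ | c ≤ z.re} :=
  isClosed_le continuous_const Complex.continuous_re

lemma borsuk_strips {K : Set ℂ} (hK : IsCompact K) (hKc : IsPreconnected Kᶜ) {f : ℂ → ℂ}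
    {δ : ℝ} (hδ : 0 < δ) (h : ∀ c : ℝ, HasLog f (K ∩ {z | c ≤ z.re} ∩ {z | z.re ≤ c + δ})) :
    HasLog f K := by
  obtain ⟨R, hR0, hR⟩ := hK.isBounded.exists_pos_norm_lt
  have hRre : ∀ z ∈ K, |z.re| < R := fun z hz => (Complex.abs_re_le_norm z).trans_lt (hR z hz)
  have main : ∀ j : ℕ, HasLog f (K ∩ {z | z.re ≤ -R + j * δ}) := by
    intro j
    induction j with
    | zero =>
      have : K ∩ {z | z.re ≤ -R + (0 : ℕ) * δ} = ∅ := by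
        ext z
        simp only [mem_inter_iff, mem_ofPred_eq, mem_empty_iff_false, iff_false, not_and]
        intro hz
        have := (abs_lt.mp (hRre z hz)).1
        simp; linarith
      rw [this]
      exact ⟨f, continuousOn_empty f, by simp⟩
    | succ j ih =>
      refine borsuk_step (hK.inter_right (isClosed_re_le _)) (compl_conn_le hK hKc _)
        (-R + j * δ) ?_ ?_
      · refine ih.mono fun z hz => ⟨hz.1.1, hz.2⟩
      · refine (h (-R + j * δ)).mono fun z hz => ⟨⟨hz.1.1, hz.2⟩, ?_⟩
        have : z.re ≤ -R + ((j + 1 : ℕ) : ℝ) * δ := hz.1.2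
        push_cast at this
        simp only [mem_ofPred_eq]; linarith
  obtain ⟨j, hj⟩ := exists_nat_gt (2 * R / δ)
  have hj' : 2 * R < j * δ := by rwa [div_lt_iff₀ hδ] at hj
  refine (main j).mono fun z hz => ⟨hz, ?_⟩
  have := (abs_lt.mp (hRre z hz)).2
  simp only [mem_ofPred_eq]; linarith

/-- rotation invariance -/
lemma borsuk_strips_im {K : Set ℂ} (hK : IsCompact K) (hKc : IsPreconnected Kᶜ) {f : ℂ → ℂ}
    {δ : ℝ} (hδ : 0 < δ) (h : ∀ c : ℝ, HasLog f (K ∩ {z | c ≤ z.im} ∩ {z | z.im ≤ c + δ})) :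
    HasLog f K := by
  let e : ℂ ≃ₜ ℂ := Homeomorph.mulLeft₀ Complex.I Complex.I_ne_zero
  have he : ∀ z, e z = Complex.I * z := fun z => rfl
  have hK' : IsCompact (e ⁻¹' K) := e.isCompact_preimage.mpr hK
  have hKc' : IsPreconnected (e ⁻¹' K)ᶜ := by
    rw [← preimage_compl]
    exact (e.isPreconnected_preimage).mpr hKc
  have key : HasLog (fun z => f (e z)) (e ⁻¹' K) := by
    refine borsuk_strips hK' hKc' hδ fun c => ?_
    obtain ⟨g, hg, hge⟩ := h c
    refine ⟨fun z => g (e z), ?_, ?_⟩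
    · refine hg.comp e.continuous.continuousOn ?_
      intro z hz
      refine ⟨⟨hz.1.1, ?_⟩, ?_⟩
      · have := hz.1.2
        simpa [he] using this
      · have := hz.2
        simpa [he] using this
    · intro z hz
      refine hge (e z) ⟨⟨hz.1.1, ?_⟩, ?_⟩
      · have := hz.1.2
        simpa [he] using this
      · have := hz.2
        simpa [he] using this
  obtain ⟨g, hg, hge⟩ := key
  refine ⟨fun z => g (e.symm z), hg.comp e.symm.continuous.continuousOn ?_, ?_⟩
  · intro z hz; simpa using hz
  · intro z hz
    have := hge (e.symm z) (by simpa using hz)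
    simpa using this

/-- Borsuk theorem -/
theorem borsuk {K : Set ℂ} (hK : IsCompact K) (hKc : IsPreconnected Kᶜ) {f : ℂ → ℂ}
    (hf : ContinuousOn f K) (hf0 : ∀ z ∈ K, f z ≠ 0) : HasLog f K := by
  rcases K.eq_empty_or_nonempty with he | hne
  · subst he; exact ⟨f, hf, by simp⟩
  obtain ⟨z0, hz0, hmin⟩ := hK.exists_isMinOn hne hf.norm
  have hm : 0 < ‖f z0‖ := norm_pos_iff.mpr (hf0 z0 hz0)
  have hu := hK.uniformContinuousOn_of_continuous hf
  rw [Metric.uniformContinuousOn_iff] at hu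
  obtain ⟨δ, hδ, hunif⟩ := hu _ hm
  have hδ3 : 0 < δ / 3 := by positivity
  refine borsuk_strips hK hKc hδ3 fun c => ?_
  have hK1 : IsCompact (K ∩ {z | c ≤ z.re}) := hK.inter_right (isClosed_re_ge _)
  refine borsuk_strips_im (hK1.inter_right (isClosed_re_le _))
    (compl_conn_le hK1 (compl_conn_ge hK hKc _) _) hδ3 fun d => ?_
  rcases Set.eq_empty_or_nonempty
    (K ∩ {z | c ≤ z.re} ∩ {z | z.re ≤ c + δ / 3} ∩ {z | d ≤ z.im} ∩ {z | z.im ≤ d + δ / 3}) with he | ⟨w, hw⟩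
  · rw [he]; exact ⟨f, continuousOn_empty f, by simp⟩
  refine hasLog_of_near (hf.mono fun z hz => hz.1.1.1.1) (f w) ?_
  intro z hz
  have hd : dist z w < δ := by
    rw [dist_eq_norm]
    refine (Complex.norm_le_abs_re_add_abs_im _).trans_lt ?_
    obtain ⟨⟨⟨⟨a1, a2⟩, a3⟩, a4⟩, a5⟩ := hz
    obtain ⟨⟨⟨⟨b1, b2⟩, b3⟩, b4⟩, b5⟩ := hw
    simp only [mem_ofPred_eq] at a2 a3 a4 a5 b2 b3 b4 b5
    have h1 : |(z - w).re| ≤ δ / 3 := by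
      rw [Complex.sub_re, abs_le]; constructor <;> linarith
    have h2 : |(z - w).im| ≤ δ / 3 := by
      rw [Complex.sub_im, abs_le]; constructor <;> linarith
    linarith
  have := hunif z hz.1.1.1.1 w hw.1.1.1.1 hd
  rw [dist_eq_norm] at this
  exact this.trans_le (hmin hw.1.1.1.1)

end Schoen

namespace Schoen
open Set Filter Topology

lemma exists_lift_real {u : ℝ → ℂ} (hu : Continuous u) (h0 : ∀ t, u t ≠ 0) :
    ∃ g : ℝ → ℂ, Continuous g ∧ ∀ t, Complex.exp (g t) = u t := by
  obtain ⟨F, ⟨-, hF⟩, -⟩ := Complex.isCoveringMapOn_exp.existsUnique_continuousMap_lifts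
    (⟨u, hu⟩ : C(ℝ, ℂ)) (a₀ := 0) (e₀ := Complex.log (u 0)) (Complex.exp_log (h0 0))
    (fun a => by simpa using h0 a)
  exact ⟨F, F.continuous, fun t => congrFun hF t⟩

lemma compl_closedBall_preconnected (a : ℂ) {R : ℝ} (hR : 0 < R) :
    IsPreconnected (Metric.closedBall a R)ᶜ := by
  have h1 : (Metric.closedBall a R)ᶜ = (fun w => a + Complex.exp w) '' {w : ℂ | Real.log R < w.re} := by
    ext z
    simp only [mem_compl_iff, Metric.mem_closedBall, not_le, mem_image, mem_ofPred_eq, dist_eq_norm]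
    constructor
    · intro h
      have h0 : z - a ≠ 0 := by
        rw [← norm_pos_iff]; linarith
      refine ⟨Complex.log (z - a), ?_, ?_⟩
      · rw [Complex.log_re]; exact Real.log_lt_log hR h
      · rw [Complex.exp_log h0]; ring
    · rintro ⟨w, hw, rfl⟩
      simp only [add_sub_cancel_left, Complex.norm_exp]
      rwa [← Real.log_lt_iff_lt_exp hR]
  rw [h1]
  exact ((convex_halfSpace_re_gt _).isPreconnected).image _ (by fun_prop)

lemma no_log_circle (a : ℂ) {R : ℝ} (hR : 0 < R) (n : ℤ)
    (h : HasLog (fun z => (z - a) ^ n) (Metric.sphere a R)) : n = 0 := by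
  obtain ⟨g, hg, hge⟩ := h
  let γ : ℝ → ℂ := fun t => circleMap a R t
  have hγ : Continuous γ := continuous_circleMap a R
  have hmem : ∀ t, γ t ∈ Metric.sphere a R := fun t => circleMap_mem_sphere a hR.le t
  have hc : Continuous (fun t => g (γ t)) := by
    rw [← continuousOn_univ]
    exact hg.comp hγ.continuousOn fun t _ => hmem t
  have hR' : (R : ℂ) ≠ 0 := by exact_mod_cast hR.ne'
  have key := log_diff_const (S := (univ : Set ℝ)) isPreconnected_univ (g := fun t => g (γ t))
    (h := fun t : ℝ => n * (Complex.log R + t * Complex.I)) hc.continuousOn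
    (by fun_prop) (by
      intro t _
      rw [hge _ (hmem t), Complex.exp_int_mul, Complex.exp_add, Complex.exp_log hR']
      simp [γ, circleMap])
  have h2 := key 0 trivial (2 * Real.pi) trivial
  have h3 : γ (2 * Real.pi) = γ 0 := by
    have := periodic_circleMap a R 0
    simpa [γ] using this
  simp only [h3] at h2
  have h4 : (n : ℂ) * (2 * Real.pi * Complex.I) = 0 := by
    push_cast at h2
    linear_combination h2
  rcases mul_eq_zero.mp h4 with h5 | h5
  · exact_mod_cast h5
  · exact absurd h5 Complex.two_pi_I_ne_zero

/-- key lemma for the converse of the Eilenberg criterion -/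
lemma eilenberg_aux {K V : Set ℂ} (hK : IsCompact K) (hV : IsOpen V)
    (hVb : Bornology.IsBounded V) (hfr : frontier V ⊆ K) {a : ℂ} (ha : a ∈ V) {h : ℂ → ℂ}
    (hh : ContinuousOn h (V ∪ K)) (hh0 : ∀ z ∈ V ∪ K, h z ≠ 0) (n : ℤ)
    (hlog : HasLog (fun z => (z - a) ^ n * h z) K) : n = 0 := by
  classical
  obtain ⟨g, hg, hge⟩ := hlog
  obtain ⟨G, hG⟩ := ContinuousMap.exists_restrict_eq hK.isClosed
    (⟨K.domRestrict g, hg.domRestrict⟩ : C(K, ℂ))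
  have hGe : ∀ z ∈ K, G z = g z := fun z hz => by
    exact DFunLike.congr_fun hG ⟨z, hz⟩
  have hclV : closure V ⊆ V ∪ K := by
    intro z hz
    by_cases hzV : z ∈ V
    · exact Or.inl hzV
    · right; apply hfr; rw [frontier, hV.interior_eq]; exact ⟨hz, hzV⟩
  let F : ℂ → ℂ := V.piecewise (fun z => Complex.exp (G z) / h z) (fun z => (z - a) ^ n)
  have hzne : ∀ z ∉ V, z - a ≠ 0 := fun z hz e => hz (by rw [sub_eq_zero.mp e]; exact ha)
  have hF : Continuous F := by
    apply continuous_piecewise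
    · intro z hz
      have hzK := hfr hz
      have h1 := hge z hzK
      rw [hGe z hzK, h1, mul_div_cancel_right₀ _ (hh0 z (Or.inr hzK))]
    · refine ContinuousOn.div (by fun_prop) (hh.mono hclV) fun z hz => hh0 z (hclV hz)
    · rw [closure_compl, hV.interior_eq]
      apply ContinuousOn.zpow₀ (by fun_prop)
      intro z hz
      exact Or.inl (hzne z hz)
  have hF0 : ∀ z, F z ≠ 0 := by
    intro z
    by_cases hz : z ∈ V
    · simp only [F, piecewise_eq_of_mem _ _ _ hz]
      exact div_ne_zero (Complex.exp_ne_zero _) (hh0 z (Or.inl hz))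
    · simp only [F, piecewise_eq_of_notMem _ _ _ hz]
      exact zpow_ne_zero _ (hzne z hz)
  obtain ⟨R, hR0, hR⟩ := hVb.subset_ball_lt 0 a
  have hlogF : HasLog F (Metric.closedBall a R) :=
    borsuk (isCompact_closedBall a R) (compl_closedBall_preconnected a hR0) hF.continuousOn
      (fun z _ => hF0 z)
  apply no_log_circle a hR0 n
  refine (hlogF.mono Metric.sphere_subset_closedBall).congr ?_
  intro z hz
  have : z ∉ V := fun hzV => by
    have h1 := hR hzV
    rw [Metric.mem_ball] at h1
    rw [Metric.mem_sphere] at hz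
    linarith
  simp only [F, piecewise_eq_of_notMem _ _ _ this]

lemma frontier_comp_subset {K : Set ℂ} (hK : IsClosed K) (x : ℂ) :
    frontier (connectedComponentIn Kᶜ x) ⊆ K := by
  intro z hz
  by_contra hzK
  have hVo : IsOpen (connectedComponentIn Kᶜ x) := hK.isOpen_compl.connectedComponentIn
  rw [frontier, hVo.interior_eq] at hz
  have hWo : IsOpen (connectedComponentIn Kᶜ z) := hK.isOpen_compl.connectedComponentIn
  have hzW : z ∈ connectedComponentIn Kᶜ z := mem_connectedComponentIn hzK
  obtain ⟨y, hyW, hyV⟩ := mem_closure_iff.mp hz.1 _ hWo hzW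
  have e1 := connectedComponentIn_eq hyW
  have e2 := connectedComponentIn_eq hyV
  apply hz.2
  rw [e2, ← e1]; exact hzW

lemma bounded_or {K : Set ℂ} (hK : IsCompact K) {a b : ℂ}
    (hab : b ∉ connectedComponentIn Kᶜ a) (hb : b ∈ Kᶜ) :
    Bornology.IsBounded (connectedComponentIn Kᶜ a) ∨
    Bornology.IsBounded (connectedComponentIn Kᶜ b) := by
  obtain ⟨R, hR0, hR⟩ := hK.isBounded.subset_closedBall_lt 0 0
  by_contra hcon
  push Not at hcon
  obtain ⟨h1, h2⟩ := hcon
  have ex : ∀ V : Set ℂ, ¬ Bornology.IsBounded V → ∃ z ∈ V, z ∈ (Metric.closedBall (0 : ℂ) R)ᶜ := by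
    intro V hV
    by_contra hc
    push Not at hc
    exact hV ((Metric.isBounded_closedBall (x := (0:ℂ)) (r := R)).subset fun z hz => by simpa using hc z hz)
  obtain ⟨x, hx, hxR⟩ := ex _ h1
  obtain ⟨y, hy, hyR⟩ := ex _ h2
  have hsub : (Metric.closedBall (0 : ℂ) R)ᶜ ⊆ connectedComponentIn Kᶜ x :=
    (compl_closedBall_preconnected 0 hR0).subset_connectedComponentIn hxR (compl_subset_compl.mpr hR)
  have e1 := connectedComponentIn_eq hx
  have e2 := connectedComponentIn_eq hy
  have e3 := connectedComponentIn_eq (hsub hyR)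
  apply hab
  rw [e1, e3, ← e2]
  exact mem_connectedComponentIn hb

/-- Eilenberg criterion, hard direction -/
lemma same_comp_of_hasLog {K : Set ℂ} (hK : IsCompact K) {a b : ℂ} (ha : a ∈ Kᶜ) (hb : b ∈ Kᶜ)
    (h : HasLog (fun z => (z - a) / (z - b)) K) : b ∈ connectedComponentIn Kᶜ a := by
  by_contra hab
  have haV := mem_connectedComponentIn ha
  have hbV := mem_connectedComponentIn hb
  rcases bounded_or hK hab hb with h1 | h1
  · have hne : ∀ z ∈ connectedComponentIn Kᶜ a ∪ K, z - b ≠ 0 := by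
      intro z hz e
      have e := sub_eq_zero.mp e
      subst e
      rcases hz with hz | hz
      · exact hab hz
      · exact hb hz
    have := eilenberg_aux (h := fun z => (z - b)⁻¹) hK hK.isClosed.isOpen_compl.connectedComponentIn h1
      (frontier_comp_subset hK.isClosed a) haV (ContinuousOn.inv₀ (by fun_prop) hne)
      (fun z hz => inv_ne_zero (hne z hz)) 1 (h.congr fun z _ => by simp [div_eq_mul_inv])
    omega
  · have hne : ∀ z ∈ connectedComponentIn Kᶜ b ∪ K, z - a ≠ 0 := by
      intro z hz e
      have e := sub_eq_zero.mp e
      subst e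
      rcases hz with hz | hz
      · apply hab
        rw [← connectedComponentIn_eq hz]
        exact hbV
      · exact ha hz
    have := eilenberg_aux (h := fun z => (z - a)) hK hK.isClosed.isOpen_compl.connectedComponentIn h1
      (frontier_comp_subset hK.isClosed b) hbV (by fun_prop)
      hne (-1) (h.congr fun z _ => by simp [div_eq_mul_inv, mul_comm])
    omega

lemma hasLog_descend {X : Type*} [TopologicalSpace X] [CompactSpace X] {j : X → ℂ}
    (hj : Continuous j) (hinj : Function.Injective j) {u : ℂ → ℂ} {G : X → ℂ} (hG : Continuous G)
    (he : ∀ x, Complex.exp (G x) = u (j x)) : HasLog u (range j) := by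
  let e := (hj.isClosedEmbedding hinj).isEmbedding.toHomeomorph
  have hej : ∀ x, e x = ⟨j x, mem_range_self x⟩ := fun x => rfl
  classical
  refine ⟨fun z => if h : z ∈ range j then G (e.symm ⟨z, h⟩) else 0, ?_, ?_⟩
  · rw [continuousOn_iff_continuous_domRestrict]
    have : (range j).domRestrict (fun z => if h : z ∈ range j then G (e.symm ⟨z, h⟩) else 0)
        = G ∘ e.symm := by
      ext z
      exact dif_pos z.2
    rw [this]
    exact hG.comp e.symm.continuous
  · rintro z ⟨x, rfl⟩
    have : e.symm ⟨j x, mem_range_self x⟩ = x := by rw [← hej]; simp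
    simp [this, he]

lemma hasLog_arc {c : ℝ → ℂ} {a b : ℝ} (hab : a ≤ b) (hc : Continuous c) (hinj : InjOn c (Icc a b))
    {u : ℂ → ℂ} (hu : ContinuousOn u (c '' Icc a b)) (hu0 : ∀ z ∈ c '' Icc a b, u z ≠ 0) :
    HasLog u (c '' Icc a b) := by
  have hcont : Continuous (fun t => u (c (projIcc a b hab t))) := by
    rw [← continuousOn_univ]
    refine hu.comp (f := fun t => c (projIcc a b hab t)) ?_ ?_
    · exact (hc.comp (continuous_subtype_val.comp continuous_projIcc)).continuousOn
    · intro t _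
      exact ⟨_, (projIcc a b hab t).2, rfl⟩
  obtain ⟨g, hg, hge⟩ := exists_lift_real hcont
    (fun t => hu0 _ ⟨_, (projIcc a b hab t).2, rfl⟩)
  have := hasLog_descend (X := Icc a b) (j := fun t => c t) (hc.comp continuous_subtype_val)
    (fun x y hxy => Subtype.ext (hinj x.2 y.2 hxy)) (u := u) (G := fun t => g t)
    (hg.comp continuous_subtype_val) (by
      intro x
      rw [hge, projIcc_of_mem hab x.2])
  rwa [show range (fun t : Icc a b => c t) = c '' Icc a b by
    rw [image_eq_range]] at this

lemma compl_preconnected_of_hasLog {K : Set ℂ} (hK : IsCompact K)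
    (h : ∀ u : ℂ → ℂ, ContinuousOn u K → (∀ z ∈ K, u z ≠ 0) → HasLog u K) :
    IsPreconnected Kᶜ := by
  apply isPreconnected_of_forall_pair
  intro a ha b hb
  refine ⟨connectedComponentIn Kᶜ a, connectedComponentIn_subset _ _, mem_connectedComponentIn ha,
    ?_, isPreconnected_connectedComponentIn⟩
  have hne : ∀ x ∈ Kᶜ, ∀ z ∈ K, z - x ≠ 0 := by
    intro x hx z hz e
    rw [sub_eq_zero.mp e] at hz
    exact hx hz
  exact same_comp_of_hasLog hK ha hb (h _ (ContinuousOn.div (by fun_prop) (by fun_prop) (hne b hb))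
    fun z hz => div_ne_zero (hne a ha z hz) (hne b hb z hz))

end Schoen

namespace Schoen
open Set Filter Topology

lemma circle_exp_quot : IsQuotientMap Circle.exp :=
  isLocalHomeomorph_circleExp.isOpenMap.isQuotientMap Circle.exp.continuous Circle.exp_surjective

lemma cont_coe : Continuous (fun x : Circle => (x : ℂ)) := by
  exact continuous_subtype_val (p := fun z => z ∈ Submonoid.unitSphere ℂ)

def HasIdx (f : Circle → ℂ) (u : ℂ → ℂ) (n : ℤ) : Prop :=
  ∃ g : ℝ → ℂ, Continuous g ∧ (∀ t, Complex.exp (g t) = u (f (Circle.exp t))) ∧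
    ∀ t, g (t + 2 * Real.pi) = g t + n * (2 * Real.pi * Complex.I)

lemma exists_idx {f : Circle → ℂ} (hf : Continuous f) {u : ℂ → ℂ} (hu : ContinuousOn u (range f))
    (h0 : ∀ z ∈ range f, u z ≠ 0) : ∃ n, HasIdx f u n := by
  have hc : Continuous (fun t => u (f (Circle.exp t))) := by
    rw [← continuousOn_univ]
    exact hu.comp (f := fun t => f (Circle.exp t)) (hf.comp Circle.exp.continuous).continuousOn
      (fun t _ => mem_range_self _)
  obtain ⟨g, hg, hge⟩ := exists_lift_real hc (fun t => h0 _ (mem_range_self _))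
  have hper : ∀ t, Complex.exp (g (t + 2 * Real.pi)) = Complex.exp (g t) := by
    intro t
    rw [hge, hge, Circle.exp_add_two_pi]
  obtain ⟨n, hn⟩ := Complex.exp_eq_exp_iff_exists_int.mp (hper 0)
  have hd := log_diff_const (S := (univ : Set ℝ)) isPreconnected_univ
    (g := fun t => g (t + 2 * Real.pi)) (h := g) (by fun_prop) (by fun_prop) (fun t _ => hper t)
  refine ⟨n, g, hg, hge, fun t => ?_⟩
  have h1 := hd t trivial 0 trivial
  rw [hn] at h1
  linear_combination h1

lemma HasIdx.hasLog {f : Circle → ℂ} (hf : Continuous f) (hinj : Function.Injective f) {u : ℂ → ℂ}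
    (h : HasIdx f u 0) : HasLog u (range f) := by
  obtain ⟨g, hg, hge, hp⟩ := h
  have hp' : Function.Periodic g (2 * Real.pi) := fun t => by simpa using hp t
  have hfac : ∀ t, g (Complex.arg (Circle.exp t)) = g t := by
    intro t
    have h1 : Circle.exp (Complex.arg (Circle.exp t)) = Circle.exp t := Circle.exp_arg _
    obtain ⟨m, hm⟩ := Circle.exp_eq_exp.mp h1
    rw [hm]
    exact hp'.int_mul m t
  refine hasLog_descend (X := Circle) hf hinj (G := fun z => g (Complex.arg z)) ?_ ?_
  · rw [circle_exp_quot.continuous_iff]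
    have : (fun z : Circle => g (Complex.arg z)) ∘ Circle.exp = g := funext hfac
    rw [this]; exact hg
  · intro z
    rw [hge, Circle.exp_arg]

lemma HasIdx.mul_zpow {f : Circle → ℂ} {u v : ℂ → ℂ} {m n : ℤ} (hu : HasIdx f u m)
    (hv : HasIdx f v n) (k l : ℤ) : HasIdx f (fun z => u z ^ k * v z ^ l) (k * m + l * n) := by
  obtain ⟨g, hg, hge, hp⟩ := hu
  obtain ⟨g', hg', hge', hp'⟩ := hv
  refine ⟨fun t => k * g t + l * g' t, by fun_prop, fun t => ?_, fun t => ?_⟩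
  · rw [Complex.exp_add, Complex.exp_int_mul, Complex.exp_int_mul, hge, hge']
  · simp only [hp, hp']
    push_cast
    ring

lemma compl_not_preconnected {f : Circle → ℂ} (hf : Continuous f) (hinj : Function.Injective f) :
    ¬ IsPreconnected (range f)ᶜ := by
  intro hcon
  have hK : IsCompact (range f) := isCompact_range hf
  let e := (hf.isClosedEmbedding hinj).isEmbedding.toHomeomorph
  have hej : ∀ x, e x = ⟨f x, mem_range_self x⟩ := fun x => rfl
  have hes : ∀ x, e.symm ⟨f x, mem_range_self x⟩ = x := fun x => by rw [← hej]; simp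
  classical
  obtain ⟨g, hg, hge⟩ := borsuk hK hcon
    (f := fun z => if h : z ∈ range f then ((e.symm ⟨z, h⟩ : Circle) : ℂ) else 0) (by
      rw [continuousOn_iff_continuous_domRestrict]
      have : (range f).domRestrict (fun z => if h : z ∈ range f then ((e.symm ⟨z, h⟩ : Circle) : ℂ) else 0)
          = fun z => ((e.symm z : Circle) : ℂ) := by
        ext z
        exact dif_pos z.2
      rw [this]
      exact cont_coe.comp e.symm.continuous) (by
      rintro z hz
      simp only [dif_pos hz]
      exact Circle.coe_ne_zero _)
  have hgf : Continuous (fun x => g (f x)) := by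
    rw [← continuousOn_univ]
    exact hg.comp hf.continuousOn fun x _ => mem_range_self x
  have h1 := hasLog_descend (X := Circle) (j := fun x => (x : ℂ)) cont_coe
    (fun x y h => Circle.ext h) (u := fun z => (z - 0) ^ (1:ℤ)) hgf (by
      intro x
      have h1 := hge _ (mem_range_self x)
      have h2 : (if h : f x ∈ range f then ((e.symm ⟨f x, h⟩ : Circle) : ℂ) else 0)
        = ((e.symm ⟨f x, mem_range_self x⟩ : Circle) : ℂ) := dif_pos (mem_range_self x)
      rw [hes] at h2
      rw [zpow_one, sub_zero]
      exact h1.trans h2)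
  have h2 : range (fun x : Circle => (x : ℂ)) = Metric.sphere (0:ℂ) 1 := by
    ext z
    simp only [mem_range, mem_sphere_iff_norm, sub_zero]
    constructor
    · rintro ⟨x, rfl⟩; exact x.norm_coe
    · intro h
      exact ⟨⟨z, by simpa [Submonoid.unitSphere] using h⟩, rfl⟩
  rw [h2] at h1
  exact one_ne_zero (no_log_circle 0 one_pos 1 h1)

/-- arcs of the curve -/
lemma exists_arc {f : Circle → ℂ} (hf : Continuous f) (hinj : Function.Injective f)
    (x : ℂ) (hx : x ∈ range f) {r : ℝ} (hr : 0 < r) :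
    ∃ B ⊆ range f, IsCompact B ∧ IsPreconnected B ∧ x ∉ B ∧ range f \ Metric.ball x r ⊆ B ∧
      IsPreconnected Bᶜ := by
  obtain ⟨y, rfl⟩ := hx
  obtain ⟨t0, rfl⟩ := Circle.exp_surjective y
  let c : ℝ → ℂ := fun t => f (Circle.exp t)
  have hc : Continuous c := hf.comp Circle.exp.continuous
  obtain ⟨η', hη', hηb⟩ := Metric.continuousAt_iff.mp (hc.continuousAt (x := t0)) r hr
  have hpi := Real.pi_pos
  let η := min (η' / 2) 1
  have hη : 0 < η := lt_min (by linarith) one_pos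
  have hη1 : η ≤ 1 := min_le_right _ _
  have hη2 : η ≤ η' / 2 := min_le_left _ _
  have h3 := Real.pi_gt_three
  have hle : t0 + η ≤ t0 + 2 * Real.pi - η := by linarith
  have hinjc : InjOn c (Icc (t0 + η) (t0 + 2 * Real.pi - η)) := by
    intro s hs t ht hst
    exact Circle.exp_injOn_Icc (by linarith) hs ht (hinj hst)
  have hcomp : IsCompact (c '' Icc (t0 + η) (t0 + 2 * Real.pi - η)) := isCompact_Icc.image hc
  refine ⟨c '' Icc (t0 + η) (t0 + 2 * Real.pi - η), ?_, hcomp, ?_, ?_, ?_, ?_⟩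
  · rintro z ⟨t, -, rfl⟩
    exact mem_range_self _
  · exact isPreconnected_Icc.image _ hc.continuousOn
  · rintro ⟨t, ht, h⟩
    have := hinj h
    obtain ⟨m, hm⟩ := Circle.exp_eq_exp.mp this
    rw [mem_Icc] at ht
    have h4 : (0:ℝ) < m := by
      by_contra hcon
      push Not at hcon
      nlinarith
    have h5 : (m:ℝ) < 1 := by
      by_contra hcon
      push Not at hcon
      nlinarith
    have h4' : 0 < m := by exact_mod_cast h4
    have h5' : m < 1 := by exact_mod_cast h5
    omega
  · rintro z ⟨⟨y, rfl⟩, hz⟩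
    obtain ⟨t, rfl⟩ := Circle.exp_surjective y
    obtain ⟨t', ht', he⟩ := Circle.periodic_exp.exists_mem_Ico (by positivity) t t0
    rw [he] at hz ⊢
    refine ⟨t', ⟨?_, ?_⟩, rfl⟩
    · by_contra hcon
      push Not at hcon
      apply hz
      apply hηb
      rw [Real.dist_eq, abs_lt]
      constructor <;> linarith [ht'.1]
    · by_contra hcon
      push Not at hcon
      apply hz
      have h6 : Circle.exp t' = Circle.exp (t' - 2 * Real.pi) := (Circle.exp_sub_two_pi _).symm
      rw [h6]
      apply hηb
      rw [Real.dist_eq, abs_lt]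
      constructor <;> linarith [ht'.2]
  · exact compl_preconnected_of_hasLog hcomp fun u hu hu0 => hasLog_arc hle hc hinjc hu hu0

lemma comp_unbounded_eq {K : Set ℂ} (hK : IsCompact K) {a b : ℂ} (hb : b ∈ Kᶜ)
    (h1 : ¬ Bornology.IsBounded (connectedComponentIn Kᶜ a))
    (h2 : ¬ Bornology.IsBounded (connectedComponentIn Kᶜ b)) :
    b ∈ connectedComponentIn Kᶜ a := by
  by_contra h
  rcases bounded_or hK h hb with h' | h'
  · exact h1 h'
  · exact h2 h'

lemma comp_bounded_eq {f : Circle → ℂ} (hf : Continuous f) (hinj : Function.Injective f) {a b : ℂ}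
    (ha : a ∈ (range f)ᶜ) (hb : b ∈ (range f)ᶜ)
    (h1 : Bornology.IsBounded (connectedComponentIn (range f)ᶜ a))
    (h2 : Bornology.IsBounded (connectedComponentIn (range f)ᶜ b)) :
    b ∈ connectedComponentIn (range f)ᶜ a := by
  have hK : IsCompact (range f) := isCompact_range hf
  by_contra hab
  have hne : ∀ x ∈ (range f)ᶜ, ∀ z ∈ range f, z - x ≠ 0 := by
    intro x hx z hz e
    rw [sub_eq_zero.mp e] at hz
    exact hx hz
  obtain ⟨m, hm⟩ := exists_idx hf (u := fun z => z - a) (by fun_prop) (hne a ha)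
  obtain ⟨n, hn⟩ := exists_idx hf (u := fun z => z - b) (by fun_prop) (hne b hb)
  have h3 := hm.mul_zpow hn n (-m)
  rw [show n * m + -m * n = 0 by ring] at h3
  have h4 := h3.hasLog hf hinj
  have hb' : ∀ z ∈ connectedComponentIn (range f)ᶜ a ∪ range f, z - b ≠ 0 := by
    intro z hz e
    rw [sub_eq_zero.mp e] at hz
    rcases hz with hz | hz
    · exact hab hz
    · exact hb hz
  have h5 := eilenberg_aux (h := fun z => (z - b) ^ (-m)) hK
    hK.isClosed.isOpen_compl.connectedComponentIn h1
    (frontier_comp_subset hK.isClosed a) (mem_connectedComponentIn ha)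
    (ContinuousOn.zpow₀ (by fun_prop) _ (fun z hz => Or.inl (hb' z hz)))
    (fun z hz => zpow_ne_zero _ (hb' z hz)) n h4
  subst h5
  have h6 := hn.hasLog hf hinj
  have := eilenberg_aux (h := fun z => 1) hK
    hK.isClosed.isOpen_compl.connectedComponentIn h2
    (frontier_comp_subset hK.isClosed b) (mem_connectedComponentIn hb)
    continuousOn_const (by simp) 1 (h6.congr (by simp))
  omega

lemma frontier_comp {f : Circle → ℂ} (hf : Continuous f) (hinj : Function.Injective f) {a b : ℂ}
    (ha : a ∈ (range f)ᶜ) (hb : b ∈ (range f)ᶜ) (hab : b ∉ connectedComponentIn (range f)ᶜ a) :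
    frontier (connectedComponentIn (range f)ᶜ a) = range f := by
  have hK : IsCompact (range f) := isCompact_range hf
  apply (frontier_comp_subset hK.isClosed a).antisymm
  intro x hx
  have hVo : IsOpen (connectedComponentIn (range f)ᶜ a) :=
    hK.isClosed.isOpen_compl.connectedComponentIn
  have hsub := connectedComponentIn_subset (range f)ᶜ a
  rw [frontier, hVo.interior_eq]
  refine ⟨?_, fun h => hsub h hx⟩
  by_contra hcl
  obtain ⟨r, hr, hball⟩ := Metric.isOpen_iff.mp isClosed_closure.isOpen_compl x hcl
  obtain ⟨B, hBf, hBc, -, hxB, hBr, hBcc⟩ := exists_arc hf hinj x hx hr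
  have h1 : frontier (connectedComponentIn (range f)ᶜ a) ⊆ B := by
    intro z hz
    apply hBr
    refine ⟨frontier_comp_subset hK.isClosed a hz, fun hzb => hball hzb (frontier_subset_closure hz)⟩
  have h2 : Bᶜ ⊆ connectedComponentIn (range f)ᶜ a := by
    apply hBcc.subset_of_closure_inter_subset hVo
    · exact ⟨a, fun h => ha (hBf h), mem_connectedComponentIn ha⟩
    · rintro z ⟨hz, hzB⟩
      by_contra hzV
      exact hzB (h1 (by rw [frontier, hVo.interior_eq]; exact ⟨hz, hzV⟩))
  exact hab (h2 fun h => hb (hBf h))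

/-- Jordan curve theorem -/
theorem jordan {f : Circle → ℂ} (hf : Continuous f) (hinj : Function.Injective f) :
    ∃ U E : Set ℂ, IsOpen U ∧ IsOpen E ∧ IsConnected U ∧ IsConnected E ∧ Disjoint U E ∧
      U ∪ E = (range f)ᶜ ∧ Bornology.IsBounded U ∧ ¬ Bornology.IsBounded E ∧
      frontier U = range f ∧ frontier E = range f := by
  have hK : IsCompact (range f) := isCompact_range hf
  -- point of unbounded component
  obtain ⟨R, hR0, hR⟩ := hK.isBounded.subset_closedBall_lt 0 0
  have hcb := compl_closedBall_preconnected 0 hR0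
  have hb : ∃ b ∈ (Metric.closedBall (0:ℂ) R)ᶜ, True := by
    refine ⟨((R + 1 : ℝ) : ℂ), ?_, trivial⟩
    simp only [mem_compl_iff, mem_closedBall_zero_iff, Complex.norm_real, not_le, Real.norm_eq_abs]
    exact lt_of_lt_of_le (by linarith) (le_abs_self _)
  obtain ⟨b, hb, -⟩ := hb
  have hsubR : (Metric.closedBall (0:ℂ) R)ᶜ ⊆ (range f)ᶜ := compl_subset_compl.mpr hR
  have hbC := hsubR hb
  have hEub : ¬ Bornology.IsBounded (connectedComponentIn (range f)ᶜ b) := by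
    intro hbd
    have h1 := hbd.subset (hcb.subset_connectedComponentIn hb hsubR)
    have h2 := h1.union (Metric.isBounded_closedBall (x := (0:ℂ)) (r := R))
    rw [compl_union_self] at h2
    exact NormedSpace.unbounded_univ ℝ ℂ h2
  have ha : ∃ a ∈ (range f)ᶜ, a ∉ connectedComponentIn (range f)ᶜ b := by
    by_contra hcon
    push Not at hcon
    apply compl_not_preconnected hf hinj
    rw [show (range f)ᶜ = connectedComponentIn (range f)ᶜ b from
      subset_antisymm hcon (connectedComponentIn_subset _ _)]
    exact isPreconnected_connectedComponentIn
  obtain ⟨a, ha, hab⟩ := ha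
  have hUb : Bornology.IsBounded (connectedComponentIn (range f)ᶜ a) := by
    rcases bounded_or hK hab ha with h | h
    · exact absurd h hEub
    · exact h
  have hba : b ∉ connectedComponentIn (range f)ᶜ a := by
    intro h
    rw [connectedComponentIn_eq h] at hUb
    exact hEub hUb
  refine ⟨connectedComponentIn (range f)ᶜ a, connectedComponentIn (range f)ᶜ b,
    hK.isClosed.isOpen_compl.connectedComponentIn, hK.isClosed.isOpen_compl.connectedComponentIn,
    ⟨⟨a, mem_connectedComponentIn ha⟩, isPreconnected_connectedComponentIn⟩,
    ⟨⟨b, mem_connectedComponentIn hbC⟩, isPreconnected_connectedComponentIn⟩, ?_, ?_, hUb, hEub,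
    frontier_comp hf hinj ha hbC hba, frontier_comp hf hinj hbC ha hab⟩
  · rw [Set.disjoint_left]
    intro z hz hz'
    rw [connectedComponentIn_eq hz, ← connectedComponentIn_eq hz'] at hUb
    exact hEub hUb
  · apply subset_antisymm
    · exact union_subset (connectedComponentIn_subset _ _) (connectedComponentIn_subset _ _)
    · intro z hz
      by_cases hzb : Bornology.IsBounded (connectedComponentIn (range f)ᶜ z)
      · exact Or.inl (comp_bounded_eq hf hinj ha hz hUb hzb)
      · exact Or.inr (comp_unbounded_eq hK hz hEub hzb)

end Schoen

namespace Schoen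
open Set Filter Topology

lemma ulc {f : Circle → ℂ} (hf : Continuous f) (hinj : Function.Injective f) {U : Set ℂ}
    (hU : IsPreconnected U) (hd : Disjoint U (range f)) {w0 : ℂ} (hw0 : w0 ∈ range f)
    {ε : ℝ} (hε : 0 < ε) : ∃ δ > 0, δ < ε ∧ ∀ a ∈ U ∩ Metric.ball w0 δ, ∀ b ∈ U ∩ Metric.ball w0 δ,
      ∃ W : Set ℂ, IsOpen W ∧ IsPreconnected W ∧ W ⊆ Metric.ball w0 ε ∧ W ⊆ (range f)ᶜ ∧
        a ∈ W ∧ b ∈ W := by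
  have hK : IsCompact (range f) := isCompact_range hf
  obtain ⟨B, hBf, hBc, hBp, hwB, hBr, -⟩ := exists_arc hf hinj w0 hw0 hε
  obtain ⟨δ', hδ', hball⟩ := Metric.isOpen_iff.mp hBc.isClosed.isOpen_compl w0 hwB
  refine ⟨min δ' (ε / 2), lt_min hδ' (by linarith), lt_of_le_of_lt (min_le_right _ _) (by linarith), ?_⟩
  rintro a ⟨haU, haδ⟩ b ⟨hbU, hbδ⟩
  have hsm : Metric.ball w0 (min δ' (ε / 2)) ⊆ Metric.ball w0 ε :=
    Metric.ball_subset_ball ((min_le_right _ _).trans (by linarith))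
  have hL1 : HasLog (fun z => (z - a) / (z - b)) (range f) :=
    hasLog_of_connected hK.isClosed hU hd haU hbU
  have hSc : IsClosed (Metric.sphere w0 ε) := Metric.isClosed_sphere
  have hBS : IsClosed (B ∪ Metric.sphere w0 ε) := hBc.isClosed.union hSc
  have hL2 : HasLog (fun z => (z - a) / (z - b)) (B ∪ Metric.sphere w0 ε) := by
    refine hasLog_of_connected hBS (S := Metric.ball w0 (min δ' (ε / 2)))
      (convex_ball _ _).isPreconnected ?_ haδ hbδ
    rw [Set.disjoint_left]
    rintro z hz (hzB | hzS)
    · exact hball (Metric.ball_subset_ball (min_le_left _ _) hz) hzB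
    · have := hsm hz
      rw [Metric.mem_ball] at this
      rw [Metric.mem_sphere] at hzS
      linarith
  have hintg : range f ∩ (B ∪ Metric.sphere w0 ε) = B := by
    apply subset_antisymm
    · rintro z ⟨hz, hzB | hzS⟩
      · exact hzB
      · refine hBr ⟨hz, ?_⟩
        rw [Metric.mem_sphere] at hzS
        rw [Metric.mem_ball]; linarith
    · exact fun z hz => ⟨hBf hz, Or.inl hz⟩
  have hL := hasLog_union hK.isClosed hBS hL1 hL2 (by rw [hintg]; exact hBp)
  have hcomp : IsCompact (range f ∪ (B ∪ Metric.sphere w0 ε)) :=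
    hK.union (hBc.union (isCompact_sphere _ _))
  have hmem : ∀ x ∈ U, x ∈ Metric.ball w0 (min δ' (ε / 2)) →
      x ∈ (range f ∪ (B ∪ Metric.sphere w0 ε))ᶜ := by
    rintro x hxU hx (h | h | h)
    · exact Set.disjoint_left.mp hd hxU h
    · exact Set.disjoint_left.mp hd hxU (hBf h)
    · have := hsm hx
      rw [Metric.mem_ball] at this
      rw [Metric.mem_sphere] at h
      linarith
  have haM := hmem a haU haδ
  have hbM := hmem b hbU hbδ
  have hsame := same_comp_of_hasLog hcomp haM hbM hL
  have hWsub := connectedComponentIn_subset (range f ∪ (B ∪ Metric.sphere w0 ε))ᶜ a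
  refine ⟨connectedComponentIn (range f ∪ (B ∪ Metric.sphere w0 ε))ᶜ a,
    hcomp.isClosed.isOpen_compl.connectedComponentIn, isPreconnected_connectedComponentIn, ?_,
    fun z hz h => hWsub hz (Or.inl h), mem_connectedComponentIn haM, hsame⟩
  refine (isPreconnected_connectedComponentIn).subset_left_of_subset_union Metric.isOpen_ball
    (Metric.isClosed_closedBall (x := w0) (ε := ε)).isOpen_compl ?_ ?_
    ⟨a, mem_connectedComponentIn haM, hsm haδ⟩
  · rw [Set.disjoint_left]
    intro z hz hz'
    exact hz' (Metric.ball_subset_closedBall hz)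
  · intro z hz
    have h1 : z ∉ Metric.sphere w0 ε := fun h => hWsub hz (Or.inr (Or.inr h))
    rw [Metric.mem_sphere] at h1
    rcases lt_or_gt_of_ne h1 with h | h
    · exact Or.inl h
    · right
      simpa using h

/-- Every nonvanishing continuous function on `U` has a continuous logarithm. -/
def SLog (U : Set ℂ) : Prop :=
  ∀ F : ℂ → ℂ, ContinuousOn F U → (∀ z ∈ U, F z ≠ 0) → HasLog F U

lemma preconnected_infDist_lt {A : Set ℂ} (hA : IsPreconnected A) (hne : A.Nonempty) (r : ℝ) :
    IsPreconnected {z | Metric.infDist z A < r} := by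
  have : {z | Metric.infDist z A < r} = (fun p : ℂ × ℂ => p.1 + p.2) '' (A ×ˢ Metric.ball 0 r) := by
    ext z
    simp only [mem_ofPred_eq, mem_image, mem_prod, Prod.exists, mem_ball_zero_iff]
    rw [Metric.infDist_lt_iff hne]
    constructor
    · rintro ⟨y, hy, h⟩
      exact ⟨y, z - y, ⟨hy, by rwa [← dist_eq_norm]⟩, by ring⟩
    · rintro ⟨y, w, ⟨hy, hw⟩, rfl⟩
      exact ⟨y, hy, by simpa [dist_eq_norm] using hw⟩
  rw [this]
  exact (hA.prod (convex_ball _ _).isPreconnected).image _ (by fun_prop)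

lemma slog_of_compl {U : Set ℂ} (hUo : IsOpen U) (hUc : IsConnected U)
    (hUb : Bornology.IsBounded U) (hcc : IsPreconnected Uᶜ) : SLog U := by
  intro F hF hF0
  have hne : Uᶜ.Nonempty := by
    by_contra h
    rw [not_nonempty_iff_eq_empty, compl_empty_iff] at h
    rw [h] at hUb
    exact NormedSpace.unbounded_univ ℝ ℂ hUb
  obtain ⟨z0, hz0⟩ := hUc.nonempty
  let d : ℂ → ℝ := fun z => Metric.infDist z Uᶜ
  have hd : Continuous d := Metric.continuous_infDist_pt _
  have hdU : ∀ z, 0 < d z ↔ z ∈ U := by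
    intro z
    have := hUo.isClosed_compl.notMem_iff_infDist_pos hne (x := z)
    rw [← this, notMem_compl_iff]
  let r : ℕ → ℝ := fun n => 1 / ((n:ℝ) + 1)
  have hr : ∀ n, 0 < r n := fun n => by positivity
  have hK : ∀ n, IsCompact {z | r n ≤ d z} := by
    intro n
    refine Metric.isCompact_of_isClosed_isBounded (isClosed_le continuous_const hd) (hUb.subset ?_)
    intro z hz
    exact (hdU z).mp ((hr n).trans_le hz)
  have hlog : ∀ n, HasLog F {z | r n ≤ d z} := by
    intro n
    have hsub : {z | r n ≤ d z} ⊆ U := fun z hz => (hdU z).mp ((hr n).trans_le hz)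
    refine borsuk (hK n) ?_ (hF.mono hsub) (fun z hz => hF0 z (hsub hz))
    have : {z | r n ≤ d z}ᶜ = {z | Metric.infDist z Uᶜ < r n} := by
      ext z; simp [d]
    rw [this]
    exact preconnected_infDist_lt hcc hne _
  choose g hg hge using hlog
  let O : ℕ → Set ℂ := fun n => {z | r n < d z}
  have hOo : ∀ n, IsOpen (O n) := fun n => isOpen_lt continuous_const hd
  have hOm : ∀ m n, m ≤ n → O m ⊆ O n := by
    intro m n hmn z hz
    have : r n ≤ r m := by
      simp only [r]
      apply one_div_le_one_div_of_le (by positivity)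
      have : (m:ℝ) ≤ n := by exact_mod_cast hmn
      linarith
    exact lt_of_le_of_lt this hz
  let V : ℕ → Set ℂ := fun n => connectedComponentIn (O n) z0
  have hVo : ∀ n, IsOpen (V n) := fun n => (hOo n).connectedComponentIn
  have hVm : ∀ m n, m ≤ n → V m ⊆ V n := fun m n h => connectedComponentIn_mono z0 (hOm m n h)
  have hVz0 : ∀ n z, z ∈ V n → z0 ∈ V n := fun n z hz => by
    apply mem_connectedComponentIn
    by_contra h
    have h2 : V n = ∅ := connectedComponentIn_eq_empty h
    rw [h2] at hz
    exact hz
  have hVO : ∀ n, V n ⊆ O n := fun n => connectedComponentIn_subset _ _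
  have hVK : ∀ n, V n ⊆ {z | r n ≤ d z} := fun n z hz => by
    have h : r n < d z := hVO n hz
    exact h.le
  have hex : ∀ z ∈ U, ∃ n, z ∈ V n := by
    intro z hz
    have hpc := (hUo.isConnected_iff_isPathConnected.mp hUc).joinedIn z0 hz0 z hz
    obtain ⟨γ, hγ⟩ := hpc
    have hcr : IsCompact (range γ) := isCompact_range γ.continuous
    obtain ⟨x, hx, hmin⟩ := hcr.exists_isMinOn (range_nonempty γ) hd.continuousOn
    have hxU : x ∈ U := by obtain ⟨t, rfl⟩ := hx; exact hγ t
    obtain ⟨n, hn⟩ := exists_nat_one_div_lt ((hdU x).mpr hxU)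
    refine ⟨n, ?_⟩
    have hsub : range γ ⊆ O n := by
      intro y hy
      have : d x ≤ d y := hmin hy
      exact lt_of_lt_of_le hn this
    have hpre : IsPreconnected (range γ) := isPreconnected_range γ.continuous
    exact hpre.subset_connectedComponentIn ⟨0, γ.source⟩ hsub ⟨1, γ.target⟩
  let g' : ℕ → ℂ → ℂ := fun n z => g n z - g n z0 + Complex.log (F z0)
  have hg'e : ∀ n, ∀ z ∈ V n, Complex.exp (g' n z) = F z := by
    intro n z hz
    have h0 := hF0 z0 hz0
    simp only [g']
    rw [Complex.exp_add, Complex.exp_sub, Complex.exp_log h0, hge n z (hVK n hz),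
      hge n z0 (hVK n (hVz0 n z hz))]
    field_simp
  have hg'c : ∀ n, ContinuousOn (g' n) (V n) := fun n =>
    (((hg n).mono (hVK n)).sub continuousOn_const).add continuousOn_const
  have hagree : ∀ m n, m ≤ n → ∀ z ∈ V m, g' m z = g' n z := by
    intro m n hmn z hz
    have := log_diff_const (S := V m) isPreconnected_connectedComponentIn (hg'c m)
      ((hg'c n).mono (hVm m n hmn)) (fun x hx => by rw [hg'e m x hx, hg'e n x (hVm m n hmn hx)])
      z hz z0 (hVz0 m z hz)
    simp only [g'] at this ⊢
    linear_combination this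
  have hagree' : ∀ m n, ∀ z ∈ V m, z ∈ V n → g' m z = g' n z := by
    intro m n z hm hn
    rcases le_total m n with h | h
    · exact hagree m n h z hm
    · exact (hagree n m h z hn).symm
  classical
  let G : ℂ → ℂ := fun z => if h : ∃ n, z ∈ V n then g' h.choose z else 0
  have hG : ∀ n, ∀ z ∈ V n, G z = g' n z := by
    intro n z hz
    have h : ∃ n, z ∈ V n := ⟨n, hz⟩
    simp only [G, dif_pos h]
    exact hagree' _ _ z h.choose_spec hz
  refine ⟨G, ?_, ?_⟩
  · intro z hz
    obtain ⟨n, hn⟩ := hex z hz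
    apply ContinuousAt.continuousWithinAt
    have h1 : ContinuousAt (g' n) z := (hg'c n).continuousAt ((hVo n).mem_nhds hn)
    refine h1.congr ?_
    filter_upwards [(hVo n).mem_nhds hn] with y hy
    exact (hG n y hy).symm
  · intro z hz
    obtain ⟨n, hn⟩ := hex z hz
    rw [hG n z hn, hg'e n z hn]

end Schoen

namespace Schoen
open Set Filter Topology

lemma diff_log {U : Set ℂ} (hUo : IsOpen U) {F g : ℂ → ℂ} (hF : DifferentiableOn ℂ F U)
    (hg : ContinuousOn g U) (hge : ∀ z ∈ U, Complex.exp (g z) = F z) : DifferentiableOn ℂ g U := by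
  intro z hz
  apply DifferentiableAt.differentiableWithinAt
  have hF0 : ∀ w ∈ U, F w ≠ 0 := fun w hw => by rw [← hge w hw]; exact Complex.exp_ne_zero _
  have hga : ContinuousAt g z := hg.continuousAt (hUo.mem_nhds hz)
  have hFa : DifferentiableAt ℂ F z := hF.differentiableAt (hUo.mem_nhds hz)
  have h1 : DifferentiableAt ℂ (fun w => g z + Complex.log (F w / F z)) z := by
    apply DifferentiableAt.const_add
    apply DifferentiableAt.clog (hFa.div_const _)
    rw [div_self (hF0 z hz)]
    exact Complex.one_mem_slitPlane
  refine h1.congr_of_eventuallyEq ?_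
  have h2 := Metric.continuousAt_iff.mp hga 1 one_pos
  obtain ⟨δ, hδ, hb⟩ := h2
  filter_upwards [hUo.mem_nhds hz, Metric.ball_mem_nhds z hδ] with w hw hwb
  have h3 := hb hwb
  rw [dist_eq_norm] at h3
  rw [← hge w hw, ← hge z hz, ← Complex.exp_sub, Complex.log_exp]
  · ring
  · have := (abs_le.mp (Complex.abs_im_le_norm (g w - g z))).1
    linarith [Real.pi_gt_three]
  · have := (abs_le.mp (Complex.abs_im_le_norm (g w - g z))).2
    linarith [Real.pi_gt_three]

lemma equi {U : Set ℂ} {f : ℂ → ℂ} (hf : DifferentiableOn ℂ f U)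
    (hm : MapsTo f U (Metric.ball 0 1)) {z w : ℂ} {R : ℝ} (hR : Metric.ball z R ⊆ U)
    (hw : w ∈ Metric.ball z R) : dist (f w) (f z) ≤ 2 / R * dist w z := by
  have hR0 : 0 < R := Metric.pos_of_mem_ball hw
  have hz : z ∈ U := hR (Metric.mem_ball_self hR0)
  apply Complex.dist_le_div_mul_dist_of_mapsTo_ball (hf.mono hR) _ hw
  intro x hx
  have h1 := hm (hR hx)
  have h2 := hm hz
  rw [mem_ball_zero_iff] at h1 h2
  rw [Metric.mem_closedBall, dist_eq_norm]
  exact (norm_sub_le _ _).trans (by linarith)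

lemma montel {U : Set ℂ} (hUo : IsOpen U) {f : ℕ → ℂ → ℂ}
    (hf : ∀ n, DifferentiableOn ℂ (f n) U) (hm : ∀ n, MapsTo (f n) U (Metric.ball 0 1)) :
    ∃ F : ℂ → ℂ, TendstoLocallyUniformlyOn f F (hyperfilter ℕ : Filter ℕ) U ∧
      ∀ z ∈ U, Tendsto (fun n => f n z) (hyperfilter ℕ : Filter ℕ) (𝓝 (F z)) := by
  have hlim : ∀ z, ∃ w, z ∈ U → Tendsto (fun n => f n z) (hyperfilter ℕ : Filter ℕ) (𝓝 w) := by
    intro z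
    by_cases hz : z ∈ U
    · have hK : IsCompact (Metric.closedBall (0:ℂ) 1) := isCompact_closedBall _ _
      obtain ⟨w, -, hw⟩ := hK.ultrafilter_le_nhds ((hyperfilter ℕ).map (fun n => f n z)) (by
        rw [Filter.le_principal_iff]
        apply Filter.mem_map.mpr
        apply Filter.univ_mem'
        intro n
        exact Metric.ball_subset_closedBall (hm n hz))
      exact ⟨w, fun _ => hw⟩
    · exact ⟨0, fun h => absurd h hz⟩
  choose F hF using hlim
  refine ⟨F, ?_, hF⟩
  rw [Metric.tendstoLocallyUniformlyOn_iff]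
  intro ε hε z hz
  obtain ⟨R, hR0, hR⟩ := Metric.isOpen_iff.mp hUo z hz
  let ρ := min R (ε * R / 8)
  have hρ : 0 < ρ := lt_min hR0 (by positivity)
  have hρR : ρ ≤ R := min_le_left _ _
  have hρε : 2 / R * ρ ≤ ε / 4 := by
    have : ρ ≤ ε * R / 8 := min_le_right _ _
    calc 2 / R * ρ ≤ 2 / R * (ε * R / 8) := by gcongr
      _ = ε / 4 := by field_simp; norm_num
  refine ⟨Metric.ball z ρ, mem_nhdsWithin_of_mem_nhds (Metric.ball_mem_nhds z hρ), ?_⟩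
  have hev := (Metric.tendsto_nhds.mp (hF z hz)) (ε / 4) (by positivity)
  filter_upwards [hev] with n hn y hy
  have hyR : y ∈ Metric.ball z R := Metric.ball_subset_ball hρR hy
  have h1 : ∀ m, dist (f m y) (f m z) ≤ ε / 4 := by
    intro m
    refine (equi (hf m) (hm m) hR hyR).trans (le_trans ?_ hρε)
    have : dist y z ≤ ρ := le_of_lt hy
    gcongr
  have h2 : dist (F y) (F z) ≤ ε / 4 := by
    refine le_of_tendsto ((hF y (hR hyR)).dist (hF z hz)) (Eventually.of_forall h1)
  have h3 := dist_triangle4 (F y) (F z) (f n z) (f n y)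
  have h4 := h1 n
  rw [dist_comm] at h4 hn
  linarith

lemma hurwitz {U : Set ℂ} (hUo : IsOpen U) (hUc : IsPreconnected U) {f : ℕ → ℂ → ℂ} {F : ℂ → ℂ}
    (hf : ∀ n, DifferentiableOn ℂ (f n) U) (hinj : ∀ n, InjOn (f n) U)
    {p : Filter ℕ} [p.NeBot] (hF : TendstoLocallyUniformlyOn f F p U)
    (hF' : DifferentiableOn ℂ F U) {z0 : ℂ} (hz0 : z0 ∈ U) (hd : deriv F z0 ≠ 0) : InjOn F U := by
  intro a ha b hb hab
  by_contra hne
  have hFan : AnalyticOnNhd ℂ (fun z => F z - F a) U :=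
    (hF'.sub (differentiableOn_const _)).analyticOnNhd hUo
  have hnz : ∀ᶠ z in 𝓝[≠] b, F z - F a ≠ 0 := by
    rcases (hFan b hb).eventually_eq_zero_or_eventually_ne_zero with h | h
    · exfalso
      have h1 := hFan.eqOn_zero_of_preconnected_of_eventuallyEq_zero hUc hb h
      apply hd
      have h2 : F =ᶠ[𝓝 z0] fun _ => F a := by
        filter_upwards [hUo.mem_nhds hz0] with z hz
        exact sub_eq_zero.mp (h1 hz)
      rw [h2.deriv_eq, deriv_const]
    · exact h
  rw [eventually_nhdsWithin_iff] at hnz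
  have hnear : ∀ᶠ z in 𝓝 b, (z ∈ ({b}ᶜ : Set ℂ) → F z - F a ≠ 0) ∧ z ∈ U ∧ z ≠ a := by
    have h1 : ∀ᶠ z in 𝓝 b, z ∈ U := hUo.mem_nhds hb
    have h2 : ∀ᶠ z in 𝓝 b, z ≠ a := isOpen_ne.mem_nhds (Ne.symm hne)
    exact hnz.and (h1.and h2)
  obtain ⟨r, hr, hball⟩ := Metric.nhds_basis_closedBall.eventually_iff.mp hnear
  have hcb : Metric.closedBall b r ⊆ U := fun z hz => (hball hz).2.1
  have hsph : (Metric.sphere b r).Nonempty := NormedSpace.sphere_nonempty.mpr hr.le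
  have hFc : ContinuousOn (fun z => ‖F z - F a‖) (Metric.sphere b r) := by
    apply ContinuousOn.norm
    exact (hF'.continuousOn.mono (Metric.sphere_subset_closedBall.trans hcb)).sub continuousOn_const
  obtain ⟨x, hx, hmin⟩ := (isCompact_sphere b r).exists_isMinOn hsph hFc
  have hm : 0 < ‖F x - F a‖ := by
    rw [norm_pos_iff]
    refine (hball (Metric.sphere_subset_closedBall hx)).1 ?_
    rintro rfl
    rw [Metric.mem_sphere, dist_self] at hx
    exact hr.ne hx
  set m := ‖F x - F a‖ / 4 with hmdef
  have hm4 : 0 < m := by positivity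
  have hcomp : IsCompact (insert a (Metric.closedBall b r)) := (isCompact_closedBall b r).insert a
  have hunif := (tendstoLocallyUniformlyOn_iff_forall_isCompact hUo).mp hF _
    (insert_subset ha hcb) hcomp
  obtain ⟨n, hn⟩ := ((Metric.tendstoUniformlyOn_iff.mp hunif) m hm4).exists
  have hna := hn a (mem_insert _ _)
  have hdiff : ∀ z ∈ Metric.closedBall b r, ‖(F z - F a) - (f n z - f n a)‖ < 2 * m := by
    intro z hz
    have h1 := hn z (mem_insert_of_mem _ hz)
    rw [dist_eq_norm] at h1 hna
    calc ‖(F z - F a) - (f n z - f n a)‖ = ‖(F z - f n z) - (F a - f n a)‖ := by congr 1; ring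
      _ ≤ ‖F z - f n z‖ + ‖F a - f n a‖ := norm_sub_le _ _
      _ < 2 * m := by linarith
  have hhne : ∀ z ∈ Metric.closedBall b r, f n z - f n a ≠ 0 := by
    intro z hz h
    exact (hball hz).2.2 (hinj n (hcb hz) ha (sub_eq_zero.mp h))
  have hbs : ‖f n b - f n a‖ < 2 * m := by
    have := hdiff b (Metric.mem_closedBall_self hr.le)
    rw [← hab, sub_self, zero_sub, norm_neg] at this
    exact this
  have hsp : ∀ z ∈ Metric.sphere b r, 2 * m ≤ ‖f n z - f n a‖ := by
    intro z hz
    have h1 := hdiff z (Metric.sphere_subset_closedBall hz)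
    have h2 : ‖F x - F a‖ ≤ ‖F z - F a‖ := hmin hz
    have h3 := norm_sub_norm_le (F z - F a) ((F z - F a) - (f n z - f n a))
    rw [sub_sub_cancel] at h3
    have h4 : ‖F x - F a‖ = 4 * m := by rw [hmdef]; ring
    linarith
  have hfn : DifferentiableOn ℂ (fun z => (f n z - f n a)⁻¹) (Metric.closedBall b r) :=
    (((hf n).mono hcb).sub (differentiableOn_const _)).inv hhne
  have hfc : DiffContOnCl ℂ (fun z => (f n z - f n a)⁻¹) (Metric.ball b r) := by
    apply DifferentiableOn.diffContOnCl
    rw [closure_ball _ hr.ne']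
    exact hfn
  have hmax := Complex.norm_le_of_forall_mem_frontier_norm_le Metric.isBounded_ball hfc
    (C := (2 * m)⁻¹) (by
      intro z hz
      rw [frontier_ball _ hr.ne'] at hz
      rw [norm_inv]
      exact inv_anti₀ (by positivity) (hsp z hz)) (subset_closure (Metric.mem_ball_self hr))
  rw [norm_inv] at hmax
  have h5 : 0 < ‖f n b - f n a‖ := norm_pos_iff.mpr (hhne b (Metric.mem_closedBall_self hr.le))
  have h6 := (inv_le_inv₀ h5 (by positivity)).mp hmax
  linarith

end Schoen

namespace Schoen
open Set Filter Topology

noncomputable def mob (a w : ℂ) : ℂ := (w - a) / (1 - (starRingEnd ℂ) a * w)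

lemma mob_den {a w : ℂ} (ha : ‖a‖ < 1) (hw : ‖w‖ < 1) : 1 - (starRingEnd ℂ) a * w ≠ 0 := by
  intro h
  have h1 : (starRingEnd ℂ) a * w = 1 := (sub_eq_zero.mp h).symm
  have h2 : ‖a‖ * ‖w‖ = 1 := by
    have := congrArg norm h1
    simpa using this
  nlinarith [norm_nonneg a, norm_nonneg w]

lemma mob_norm {a w : ℂ} (ha : ‖a‖ < 1) (hw : ‖w‖ < 1) : ‖mob a w‖ < 1 := by
  have hden := mob_den ha hw
  rw [mob, norm_div, div_lt_one (norm_pos_iff.mpr hden)]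
  have h1 : ‖1 - (starRingEnd ℂ) a * w‖ ^ 2 - ‖w - a‖ ^ 2 = (1 - ‖a‖ ^ 2) * (1 - ‖w‖ ^ 2) := by
    simp only [← Complex.normSq_eq_norm_sq, Complex.normSq_apply]
    simp
    ring
  have h2 : 0 < (1 - ‖a‖ ^ 2) * (1 - ‖w‖ ^ 2) := by
    apply mul_pos <;> nlinarith [norm_nonneg a, norm_nonneg w]
  apply lt_of_pow_lt_pow_left₀ 2 (norm_nonneg _)
  linarith

lemma mob_inj {a w w' : ℂ} (ha : ‖a‖ < 1) (hw : ‖w‖ < 1) (hw' : ‖w'‖ < 1)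
    (h : mob a w = mob a w') : w = w' := by
  rw [mob, mob, div_eq_div_iff (mob_den ha hw) (mob_den ha hw')] at h
  have h1 : (1 - a * (starRingEnd ℂ) a) * (w - w') = 0 := by linear_combination h
  rcases mul_eq_zero.mp h1 with h2 | h2
  · exfalso
    rw [Complex.mul_conj, Complex.normSq_eq_norm_sq] at h2
    have h3 : (1:ℝ) - ‖a‖ ^ 2 = 0 := by exact_mod_cast h2
    nlinarith [norm_nonneg a]
  · exact sub_eq_zero.mp h2

lemma mob_deriv {a : ℂ} {w : ℂ} (ha : ‖a‖ < 1) (hw : ‖w‖ < 1) :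
    HasDerivAt (mob a) ((1 - (‖a‖:ℂ) ^ 2) / (1 - (starRingEnd ℂ) a * w) ^ 2) w := by
  have hden := mob_den ha hw
  have h1 : HasDerivAt (fun w => w - a) 1 w := (hasDerivAt_id w).sub_const a
  have h2 : HasDerivAt (fun w => 1 - (starRingEnd ℂ) a * w) (-((starRingEnd ℂ) a * 1)) w :=
    ((hasDerivAt_id w).const_mul _).const_sub 1
  have h3 := h1.div h2 hden
  refine h3.congr_deriv ?_
  congr 1
  have : (‖a‖ : ℂ) ^ 2 = a * (starRingEnd ℂ) a := by
    rw [Complex.mul_conj, Complex.normSq_eq_norm_sq]; push_cast; rfl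
  rw [this]; ring

def RMFam (U : Set ℂ) (z0 : ℂ) (f : ℂ → ℂ) : Prop :=
  DifferentiableOn ℂ f U ∧ MapsTo f U (Metric.ball 0 1) ∧ InjOn f U ∧ f z0 = 0

lemma koebe {U : Set ℂ} (hUo : IsOpen U) (hS : SLog U) {z0 : ℂ} (hz0 : z0 ∈ U) {ψ : ℂ → ℂ}
    (hψ : RMFam U z0 ψ) (hd : deriv ψ z0 ≠ 0) {a : ℂ} (ha : ‖a‖ < 1) (hna : ∀ z ∈ U, ψ z ≠ a) :
    ∃ k, RMFam U z0 k ∧ ‖deriv ψ z0‖ < ‖deriv k z0‖ := by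
  obtain ⟨hψd, hψm, hψi, hψ0⟩ := hψ
  have hψn : ∀ z ∈ U, ‖ψ z‖ < 1 := fun z hz => by simpa using hψm hz
  let F : ℂ → ℂ := fun z => mob a (ψ z)
  have hF0 : ∀ z ∈ U, F z ≠ 0 := by
    intro z hz
    exact div_ne_zero (sub_ne_zero.mpr (hna z hz)) (mob_den ha (hψn z hz))
  have hFd : DifferentiableOn ℂ F U := by
    intro z hz
    exact ((mob_deriv ha (hψn z hz)).differentiableAt.comp_differentiableWithinAt z (hψd z hz))
  obtain ⟨g, hg, hge⟩ := hS F hFd.continuousOn hF0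
  have hgd := diff_log hUo hFd hg hge
  let h : ℂ → ℂ := fun z => Complex.exp (g z / 2)
  have hh2 : ∀ z ∈ U, h z ^ 2 = F z := by
    intro z hz
    rw [← hge z hz, ← Complex.exp_nat_mul]
    congr 1; push_cast; ring
  have hhd : DifferentiableOn ℂ h U := (hgd.div_const 2).cexp
  have hhn : ∀ z ∈ U, ‖h z‖ < 1 := by
    intro z hz
    have h1 : ‖h z‖ ^ 2 < 1 := by
      rw [← norm_pow, hh2 z hz]; exact mob_norm ha (hψn z hz)
    nlinarith [norm_nonneg (h z)]
  set b := h z0 with hb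
  have hbn : ‖b‖ < 1 := hhn z0 hz0
  have hb0 : b ≠ 0 := Complex.exp_ne_zero _
  have hb2 : ‖b‖ ^ 2 = ‖a‖ := by
    rw [← norm_pow, hb, hh2 z0 hz0]
    simp [F, mob, hψ0]
  refine ⟨fun z => mob b (h z), ⟨?_, ?_, ?_, ?_⟩, ?_⟩
  · intro z hz
    exact ((mob_deriv hbn (hhn z hz)).differentiableAt.comp_differentiableWithinAt z (hhd z hz))
  · intro z hz
    simpa using mob_norm hbn (hhn z hz)
  · intro z hz w hw hzw
    have h1 := mob_inj hbn (hhn z hz) (hhn w hw) hzw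
    have h2 : F z = F w := by rw [← hh2 z hz, ← hh2 w hw, h1]
    exact hψi hz hw (mob_inj ha (hψn z hz) (hψn w hw) h2)
  · simp [mob, hb]
  · have hψD : HasDerivAt ψ (deriv ψ z0) z0 := (hψd.differentiableAt (hUo.mem_nhds hz0)).hasDerivAt
    have hhD : HasDerivAt h (deriv h z0) z0 := (hhd.differentiableAt (hUo.mem_nhds hz0)).hasDerivAt
    have e1 : HasDerivAt F ((1 - (‖a‖:ℂ) ^ 2) * deriv ψ z0) z0 := by
      have h1 := mob_deriv ha (hψn z0 hz0)
      have h2 := h1.comp z0 hψD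
      refine HasDerivAt.congr_deriv (f := F) h2 ?_
      rw [hψ0]; simp
    have e2 : HasDerivAt (fun z => h z ^ 2) (2 * b * deriv h z0) z0 := by
      refine HasDerivAt.congr_deriv (f := fun z => h z ^ 2) (hhD.pow 2) ?_
      simp [hb]
    have e3 : (1 - (‖a‖:ℂ) ^ 2) * deriv ψ z0 = 2 * b * deriv h z0 := by
      refine e1.unique (e2.congr_of_eventuallyEq ?_)
      filter_upwards [hUo.mem_nhds hz0] with z hz
      exact (hh2 z hz).symm
    have e4 : HasDerivAt (fun z => mob b (h z))
        ((1 - (‖b‖:ℂ) ^ 2) / (1 - (starRingEnd ℂ) b * b) ^ 2 * deriv h z0) z0 :=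
      HasDerivAt.comp (h₂ := mob b) z0 (by exact mob_deriv hbn hbn) hhD
    have e5 : (starRingEnd ℂ) b * b = (‖b‖:ℂ) ^ 2 := by
      rw [mul_comm, Complex.mul_conj, Complex.normSq_eq_norm_sq]; push_cast; rfl
    rw [e4.deriv, e5]
    have hbp : 0 < ‖b‖ := norm_pos_iff.mpr hb0
    have hpos : 0 < 1 - ‖b‖ ^ 2 := by nlinarith
    have e6 : ‖deriv h z0‖ = (1 - ‖a‖ ^ 2) * ‖deriv ψ z0‖ / (2 * ‖b‖) := by
      have h1 := congrArg norm e3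
      rw [norm_mul, norm_mul, norm_mul] at h1
      have h2 : ‖(1 - (‖a‖:ℂ) ^ 2)‖ = 1 - ‖a‖ ^ 2 := by
        rw [show (1 - (‖a‖:ℂ) ^ 2) = ((1 - ‖a‖ ^ 2 : ℝ) : ℂ) by push_cast; rfl, Complex.norm_real,
          Real.norm_of_nonneg]
        nlinarith [norm_nonneg a]
      rw [h2] at h1
      rw [eq_div_iff (by positivity), h1]
      simp
      ring
    have e7 : ‖(1 - (‖b‖:ℂ) ^ 2)‖ = 1 - ‖b‖ ^ 2 := by
      rw [show (1 - (‖b‖:ℂ) ^ 2) = ((1 - ‖b‖ ^ 2 : ℝ) : ℂ) by push_cast; rfl, Complex.norm_real,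
          Real.norm_of_nonneg hpos.le]
    rw [norm_mul, norm_div, norm_pow, e7, e6, ← hb2]
    have hD : 0 < ‖deriv ψ z0‖ := norm_pos_iff.mpr hd
    have e8 : (1 - ‖b‖ ^ 2) / (1 - ‖b‖ ^ 2) ^ 2 * ((1 - (‖b‖ ^ 2) ^ 2) * ‖deriv ψ z0‖ / (2 * ‖b‖))
        = (1 + ‖b‖ ^ 2) / (2 * ‖b‖) * ‖deriv ψ z0‖ := by
      field_simp
      ring
    rw [e8]
    have e9 : 1 < (1 + ‖b‖ ^ 2) / (2 * ‖b‖) := by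
      rw [one_lt_div (by positivity)]
      nlinarith
    nlinarith

theorem riemann_aux {U : Set ℂ} (hUo : IsOpen U) (hUc : IsPreconnected U)
    (hUb : Bornology.IsBounded U) (hS : SLog U) {z0 : ℂ} (hz0 : z0 ∈ U) :
    ∃ ψ : ℂ → ℂ, DifferentiableOn ℂ ψ U ∧ BijOn ψ U (Metric.ball 0 1) ∧ ψ z0 = 0 := by
  obtain ⟨R, hR0, hR⟩ := hUb.subset_ball_lt 0 z0
  have hfam0 : RMFam U z0 (fun z => (z - z0) / R) := by
    refine ⟨by fun_prop, ?_, ?_, by simp⟩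
    · intro z hz
      have := hR hz
      rw [Metric.mem_ball, dist_eq_norm] at this
      rw [mem_ball_zero_iff, norm_div, Complex.norm_real, Real.norm_of_nonneg hR0.le,
        div_lt_one hR0]
      exact this
    · intro z _ w _ h
      have hRc : (R : ℂ) ≠ 0 := by exact_mod_cast hR0.ne'
      have h1 : z - z0 = w - z0 := by
        have := congrArg (· * (R:ℂ)) h
        simpa [hRc] using this
      linear_combination h1
  have hd0 : deriv (fun z => (z - z0) / (R:ℂ)) z0 = 1 / R := by
    simp [deriv_div_const]
  let S : Set ℝ := {x | ∃ f, RMFam U z0 f ∧ x = ‖deriv f z0‖}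
  have hSne : S.Nonempty := ⟨_, _, hfam0, rfl⟩
  obtain ⟨ρ, hρ0, hρ⟩ := Metric.isOpen_iff.mp hUo z0 hz0
  have hSb : BddAbove S := by
    refine ⟨2 / ρ, ?_⟩
    rintro x ⟨f, ⟨hfd, hfm, -, hf0⟩, rfl⟩
    apply Complex.norm_deriv_le_div_of_mapsTo_ball (hfd.mono hρ) _ hρ0
    intro w hw
    have := hfm (hρ hw)
    rw [mem_ball_zero_iff] at this
    rw [hf0, mem_closedBall_zero_iff]; linarith
  obtain ⟨u, -, hu, huS⟩ := exists_seq_tendsto_sSup hSne hSb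
  choose f hf hfu using huS
  obtain ⟨ψ, hψlu, hψp⟩ := montel hUo (fun n => (hf n).1) (fun n => (hf n).2.1)
  have hψd : DifferentiableOn ℂ ψ U :=
    hψlu.differentiableOn (Eventually.of_forall fun n => (hf n).1) hUo
  have hderiv := hψlu.deriv (Eventually.of_forall fun n => (hf n).1) hUo
  have hhl : (hyperfilter ℕ : Filter ℕ) ≤ atTop := by
    rw [← Nat.cofinite_eq_atTop]; exact hyperfilter_le_cofinite
  have hsup : ‖deriv ψ z0‖ = sSup S := by
    have h1 := (hderiv.tendsto_at hz0).norm
    have h2 : Tendsto u (hyperfilter ℕ : Filter ℕ) (𝓝 (sSup S)) := hu.mono_left hhl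
    refine tendsto_nhds_unique h1 (h2.congr fun n => ?_)
    rw [hfu n]; rfl
  have hψd0 : deriv ψ z0 ≠ 0 := by
    rw [← norm_pos_iff, hsup]
    refine lt_of_lt_of_le ?_ (le_csSup hSb ⟨_, hfam0, rfl⟩)
    rw [hd0, norm_pos_iff]
    have hRc : (R : ℂ) ≠ 0 := by exact_mod_cast hR0.ne'
    simpa using hRc
  have hψi : InjOn ψ U := hurwitz hUo hUc (fun n => (hf n).1) (fun n => (hf n).2.2.1) hψlu hψd hz0 hψd0
  have hψ0 : ψ z0 = 0 := by
    refine tendsto_nhds_unique (hψp z0 hz0) ?_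
    simp only [(hf _).2.2.2]
    exact tendsto_const_nhds
  have hψle : ∀ z ∈ U, ‖ψ z‖ ≤ 1 := by
    intro z hz
    refine le_of_tendsto (hψp z hz).norm (Eventually.of_forall fun n => ?_)
    have := (hf n).2.1 hz
    rw [mem_ball_zero_iff] at this
    exact this.le
  have hψm : MapsTo ψ U (Metric.ball 0 1) := by
    intro z hz
    rw [mem_ball_zero_iff]
    refine lt_of_le_of_ne (hψle z hz) fun heq => ?_
    have hmax : IsMaxOn (norm ∘ ψ) U z := by
      intro w hw
      simp only [Function.comp, mem_ofPred_eq]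
      rw [heq]; exact hψle w hw
    have := Complex.norm_eqOn_of_isPreconnected_of_isMaxOn hUc hUo hψd hz hmax hz0
    simp [hψ0, heq] at this
  refine ⟨ψ, hψd, ⟨hψm, hψi, ?_⟩, hψ0⟩
  intro a ha
  rw [mem_ball_zero_iff] at ha
  by_contra hna
  obtain ⟨k, hk, hlt⟩ := koebe hUo hS hz0 ⟨hψd, hψm, hψi, hψ0⟩ hψd0 ha
    (fun z hz h => hna ⟨z, hz, h⟩)
  have : ‖deriv k z0‖ ≤ sSup S := le_csSup hSb ⟨k, hk, rfl⟩
  rw [hsup] at hlt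
  linarith

end Schoen

namespace Schoen
open Set Filter Topology

lemma inv_holo {U D : Set ℂ} (hUo : IsOpen U) (hUc : IsPreconnected U) (hDo : IsOpen D)
    {x y : ℂ} (hx : x ∈ U) (hy : y ∈ U) (hxy : x ≠ y) {ψ φ : ℂ → ℂ}
    (hψ : DifferentiableOn ℂ ψ U) (hb : BijOn ψ U D) (hinv : InvOn φ ψ U D) (hφm : MapsTo φ D U) :
    DifferentiableOn ℂ φ D := by
  have han : AnalyticOnNhd ℂ ψ U := hψ.analyticOnNhd hUo
  have hopen : ∀ s ⊆ U, IsOpen s → IsOpen (ψ '' s) := by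
    rcases han.is_constant_or_isOpen hUc with ⟨w, hw⟩ | h
    · exact absurd (hb.injOn hx hy ((hw x hx).trans (hw y hy).symm)) hxy
    · exact h
  have hφc : ContinuousOn φ D := by
    rw [continuousOn_open_iff hDo]
    intro V hV
    have : D ∩ φ ⁻¹' V = ψ '' (U ∩ V) := by
      ext w
      constructor
      · rintro ⟨hw, hwV⟩
        exact ⟨φ w, ⟨hφm hw, hwV⟩, hinv.2 hw⟩
      · rintro ⟨z, ⟨hz, hzV⟩, rfl⟩
        refine ⟨hb.mapsTo hz, ?_⟩
        rw [mem_preimage, hinv.1 hz]; exact hzV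
    rw [this]
    exact hopen _ inter_subset_left (hUo.inter hV)
  have hgood : ∀ w ∈ D, deriv ψ (φ w) ≠ 0 → DifferentiableAt ℂ φ w := by
    intro w hw hd
    have h1 : HasDerivAt ψ (deriv ψ (φ w)) (φ w) :=
      (hψ.differentiableAt (hUo.mem_nhds (hφm hw))).hasDerivAt
    refine (HasDerivAt.of_local_left_inverse (hφc.continuousAt (hDo.mem_nhds hw)) h1 hd ?_).differentiableAt
    filter_upwards [hDo.mem_nhds hw] with v hv
    exact hinv.2 hv
  intro w hw
  apply DifferentiableAt.differentiableWithinAt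
  have hcont := hφc.continuousAt (hDo.mem_nhds hw)
  have hz := hφm hw
  have hder : AnalyticOnNhd ℂ (deriv ψ) U := han.deriv
  have hnz : ∀ᶠ z in 𝓝[≠] (φ w), deriv ψ z ≠ 0 := by
    rcases (hder _ hz).eventually_eq_zero_or_eventually_ne_zero with h | h
    · exfalso
      have h1 := hder.eqOn_zero_of_preconnected_of_eventuallyEq_zero hUc hz h
      have h2 := hUo.is_const_of_deriv_eq_zero hUc hψ h1 hx hy
      exact hxy (hb.injOn hx hy h2)
    · exact h
  have htend : Tendsto φ (𝓝[≠] w) (𝓝[≠] (φ w)) := by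
    apply tendsto_nhdsWithin_of_tendsto_nhds_of_eventually_within
    · exact hcont.tendsto.mono_left nhdsWithin_le_nhds
    · filter_upwards [self_mem_nhdsWithin, mem_nhdsWithin_of_mem_nhds (hDo.mem_nhds hw)] with v hv hvD h
      apply hv
      have := congrArg ψ h
      rwa [hinv.2 hvD, hinv.2 hw] at this
  apply AnalyticAt.differentiableAt
  apply Complex.analyticAt_of_differentiable_on_punctured_nhds_of_continuousAt _ hcont
  filter_upwards [htend.eventually hnz, mem_nhdsWithin_of_mem_nhds (hDo.mem_nhds hw)] with v hv hvD
  exact hgood v hvD hv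

theorem riemann {U : Set ℂ} (hUo : IsOpen U) (hUc : IsPreconnected U)
    (hUb : Bornology.IsBounded U) (hS : SLog U) {z0 : ℂ} (hz0 : z0 ∈ U) :
    ∃ ψ φ : ℂ → ℂ, DifferentiableOn ℂ ψ U ∧ DifferentiableOn ℂ φ (Metric.ball 0 1) ∧
      MapsTo ψ U (Metric.ball 0 1) ∧ MapsTo φ (Metric.ball 0 1) U ∧
      InvOn φ ψ U (Metric.ball 0 1) ∧ ψ z0 = 0 := by
  obtain ⟨ψ, hψ, hb, h0⟩ := riemann_aux hUo hUc hUb hS hz0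
  have hinv := hb.invOn_invFunOn
  have hm : MapsTo (Function.invFunOn ψ U) (Metric.ball 0 1) U := hb.surjOn.mapsTo_invFunOn
  obtain ⟨y, hy, hy2⟩ := hb.surjOn (show (1/2 : ℂ) ∈ Metric.ball (0:ℂ) 1 by
    rw [mem_ball_zero_iff]; norm_num)
  have hne : z0 ≠ y := by
    rintro rfl
    rw [h0] at hy2
    norm_num at hy2
  exact ⟨ψ, _, hψ, inv_holo hUo hUc Metric.isOpen_ball hz0 hy hne hψ hb hinv hm, hb.mapsTo, hm, hinv, h0⟩

end Schoen

namespace Schoen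
open Set Filter Topology

lemma exists_T {O : Set ℂ} (hO : IsOpen O) {z1 p : ℂ} (hp : p ∈ O) (hne : p ≠ z1) :
    ∃ T : Finset ℂ, (∀ ω ∈ T, ‖ω‖ = 1) ∧
      ∀ z ∈ Metric.sphere z1 (dist p z1), ∃ ω ∈ T, z1 + ω * (z - z1) ∈ O := by
  classical
  have hd : 0 < dist p z1 := dist_pos.mpr hne
  obtain ⟨t, ht, hcov⟩ := (isCompact_sphere z1 (dist p z1)).elim_nhds_subcover
    (fun z => {z' | z1 + (p - z1) / (z - z1) * (z' - z1) ∈ O}) (by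
      intro z hz
      have hz0 : z - z1 ≠ 0 := by
        rw [← norm_pos_iff, ← dist_eq_norm, Metric.mem_sphere.mp hz]; exact hd
      have hop : IsOpen {z' | z1 + (p - z1) / (z - z1) * (z' - z1) ∈ O} :=
        hO.preimage (f := fun z' => z1 + (p - z1) / (z - z1) * (z' - z1)) (by fun_prop)
      apply hop.mem_nhds
      simp only [mem_ofPred_eq]
      rw [div_mul_cancel₀ _ hz0]
      simpa using hp)
  refine ⟨t.image (fun z => (p - z1) / (z - z1)), ?_, ?_⟩
  · intro ω hω
    obtain ⟨z, hz, rfl⟩ := Finset.mem_image.mp hω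
    have := ht z hz
    rw [Metric.mem_sphere, dist_eq_norm] at this
    rw [norm_div, this, dist_eq_norm, div_self]
    rw [← dist_eq_norm]; exact hd.ne'
  · intro z hz
    obtain ⟨y, hy, hzy⟩ := mem_iUnion₂.mp (hcov hz)
    exact ⟨_, Finset.mem_image_of_mem _ hy, hzy⟩

lemma rotation_max {Ω : Set ℂ} (hΩ : IsOpen Ω) {z1 : ℂ} (hz1 : z1 ∈ Ω) {ρ : ℝ} (hρ : 0 < ρ)
    {T : Finset ℂ} (hT : ∀ ω ∈ T, ‖ω‖ = 1) {f : ℂ → ℂ} (hf : DifferentiableOn ℂ f Ω)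
    (hfc : ContinuousOn f (closure Ω ∩ Metric.closedBall z1 ρ)) {M ε : ℝ}
    (hM : ∀ z ∈ closure Ω ∩ Metric.closedBall z1 ρ, ‖f z‖ ≤ M)
    (hε : ∀ z ∈ frontier Ω ∩ Metric.closedBall z1 ρ, ‖f z‖ ≤ ε) (hε0 : 0 ≤ ε)
    (hrot : ∀ z ∈ Metric.sphere z1 ρ, ∃ ω ∈ T, z1 + ω * (z - z1) ∉ closure Ω) :
    0 < T.card ∧ ‖f z1‖ ^ T.card ≤ ε * M ^ (T.card - 1) := by
  classical
  have hM0 : 0 ≤ M := (norm_nonneg _).trans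
    (hM z1 ⟨subset_closure hz1, Metric.mem_closedBall_self hρ.le⟩)
  have hcard : 0 < T.card := by
    obtain ⟨z, hz⟩ : (Metric.sphere z1 ρ).Nonempty := NormedSpace.sphere_nonempty.mpr hρ.le
    obtain ⟨ω, hω, -⟩ := hrot z hz
    exact Finset.card_pos.mpr ⟨ω, hω⟩
  refine ⟨hcard, ?_⟩
  let rot : ℂ → ℂ → ℂ := fun ω z => z1 + ω * (z - z1)
  have hrc : ∀ ω, Continuous (rot ω) := fun ω => by fun_prop
  have hrd : ∀ ω, Differentiable ℂ (rot ω) := fun ω => by fun_prop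
  have hr1 : ∀ ω, rot ω z1 = z1 := fun ω => by simp [rot]
  have hrdist : ∀ ω ∈ T, ∀ z, dist (rot ω z) z1 = dist z z1 := by
    intro ω hω z
    simp [rot, dist_eq_norm, hT ω hω]
  let W : Set ℂ := Metric.ball z1 ρ ∩ ⋂ ω ∈ T, (rot ω) ⁻¹' Ω
  have hWo : IsOpen W := by
    apply Metric.isOpen_ball.inter
    exact isOpen_biInter_finset fun ω _ => hΩ.preimage (hrc ω)
  have hW1 : z1 ∈ W := by
    refine ⟨Metric.mem_ball_self hρ, ?_⟩
    simp only [mem_iInter, mem_preimage, hr1]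
    exact fun _ _ => hz1
  have hcl1 : closure W ⊆ Metric.closedBall z1 ρ :=
    (closure_mono inter_subset_left).trans Metric.closure_ball_subset_closedBall
  have hcl2 : ∀ ω ∈ T, ∀ z ∈ closure W, rot ω z ∈ closure Ω := by
    intro ω hω z hz
    have h1 : MapsTo (rot ω) W Ω := by
      intro x hx
      exact mem_iInter₂.mp hx.2 ω hω
    exact h1.closure (hrc ω) hz
  have hcl3 : ∀ ω ∈ T, ∀ z ∈ closure W, rot ω z ∈ closure Ω ∩ Metric.closedBall z1 ρ := by
    intro ω hω z hz
    refine ⟨hcl2 ω hω z hz, ?_⟩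
    rw [Metric.mem_closedBall, hrdist ω hω]
    exact hcl1 hz
  let g : ℂ → ℂ := fun z => ∏ ω ∈ T, f (rot ω z)
  have hg : DiffContOnCl ℂ g W := by
    constructor
    · apply DifferentiableOn.fun_finsetProd
      intro ω hω
      exact hf.comp (hrd ω).differentiableOn fun x hx => mem_iInter₂.mp hx.2 ω hω
    · apply continuousOn_finsetProd
      intro ω hω
      exact hfc.comp (hrc ω).continuousOn (hcl3 ω hω)
  have hmax := Complex.norm_le_of_forall_mem_frontier_norm_le
    (Metric.isBounded_ball.subset inter_subset_left) hg (C := ε * M ^ (T.card - 1)) (by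
      intro z hz
      have hzc := frontier_subset_closure hz
      have hzW : z ∉ W := by rw [frontier, hWo.interior_eq] at hz; exact hz.2
      have hzb : z ∈ Metric.ball z1 ρ := by
        have h1 := hcl1 hzc
        rw [Metric.mem_closedBall] at h1
        refine lt_of_le_of_ne h1 fun heq => ?_
        obtain ⟨ω, hω, hno⟩ := hrot z heq
        exact hno (hcl2 ω hω z hzc)
      have hex : ∃ ω ∈ T, rot ω z ∉ Ω := by
        by_contra hcon
        push Not at hcon
        exact hzW ⟨hzb, mem_iInter₂.mpr hcon⟩
      obtain ⟨ω, hω, hno⟩ := hex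
      have h3 := hcl3 ω hω z hzc
      have h2 : ‖f (rot ω z)‖ ≤ ε := by
        apply hε _ ⟨_, h3.2⟩
        rw [frontier, hΩ.interior_eq]
        exact ⟨h3.1, hno⟩
      simp only [g]
      rw [norm_prod, ← Finset.mul_prod_erase T _ hω]
      have h4 : ∏ x ∈ T.erase ω, ‖f (rot x z)‖ ≤ M ^ (T.card - 1) := by
        rw [← Finset.card_erase_of_mem hω]
        refine (Finset.prod_le_prod (fun _ _ => norm_nonneg _) (g := fun _ => M) (fun x hx => ?_)).trans_eq
          (by rw [Finset.prod_const])
        exact hM _ (hcl3 x (Finset.mem_of_mem_erase hx) z hzc)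
      exact mul_le_mul h2 h4 (Finset.prod_nonneg fun _ _ => norm_nonneg _) hε0) (subset_closure hW1)
  simpa [g, hr1] using hmax

lemma slit_one_sub {z : ℂ} (hz : ‖z‖ ≤ 1) (h1 : z ≠ 1) : 1 - z ∈ Complex.slitPlane := by
  by_cases hre : z.re < 1
  · left; simp; exact hre
  · exfalso
    push Not at hre
    have h2 : z.re ≤ 1 := (Complex.re_le_norm z).trans hz
    have h3 : z.re = 1 := le_antisymm h2 hre
    have h4 : ‖z‖ ^ 2 ≤ 1 := by nlinarith [norm_nonneg z]
    rw [← Complex.normSq_eq_norm_sq, Complex.normSq_apply] at h4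
    have h5 : z.im = 0 := by nlinarith [mul_self_nonneg z.im]
    exact h1 (Complex.ext (by simpa using h3) (by simpa using h5))

/-- the angle function on the circle -/
noncomputable def angA (ζ1 ζ2 y : ℂ) : ℝ := Complex.arg (1 - ζ1 / y) - Complex.arg (1 - ζ2 / y)

lemma angA_eq {ζ1 ζ2 y1 y2 : ℂ} (hζ1 : ‖ζ1‖ = 1) (hζ2 : ‖ζ2‖ = 1) (hy1 : ‖y1‖ = 1) (hy2 : ‖y2‖ = 1)
    (h11 : ζ1 ≠ y1) (h12 : ζ1 ≠ y2) (h21 : ζ2 ≠ y1) (h22 : ζ2 ≠ y2)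
    {K Ω : Set ℂ} (hK : IsCompact K) (hKp : IsPreconnected K)
    (hKD : K ⊆ Metric.ball 0 1 ∪ {ζ1, ζ2}) (hK1 : ζ1 ∈ K) (hK2 : ζ2 ∈ K)
    (hΩ : IsPreconnected Ω) (hΩD : Ω ⊆ Metric.ball 0 1) (hΩK : Disjoint Ω K)
    (hc1 : y1 ∈ closure Ω) (hc2 : y2 ∈ closure Ω) : angA ζ1 ζ2 y1 = angA ζ1 ζ2 y2 := by
  have hy10 : y1 ≠ 0 := by rw [← norm_pos_iff, hy1]; exact one_pos
  have hy20 : y2 ≠ 0 := by rw [← norm_pos_iff, hy2]; exact one_pos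
  -- the exterior connected set
  let r : ℂ → Set ℂ := fun ζ => (fun t : ℝ => (t : ℂ) * ζ) '' Icc 1 2
  let E : Set ℂ := (r ζ1 ∪ Metric.sphere 0 2) ∪ r ζ2
  have hrc : ∀ ζ, IsCompact (r ζ) := fun ζ => isCompact_Icc.image (by fun_prop)
  have hrp : ∀ ζ, IsPreconnected (r ζ) := fun ζ => isPreconnected_Icc.image _ (by fun_prop)
  have hsp : IsPreconnected (Metric.sphere (0:ℂ) 2) :=
    isPreconnected_sphere (by rw [Complex.rank_real_complex]; norm_num) _ _
  have hr2 : ∀ ζ : ℂ, ‖ζ‖ = 1 → ((2:ℝ):ℂ) * ζ ∈ r ζ ∩ Metric.sphere (0:ℂ) 2 := by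
    intro ζ hζ
    refine ⟨⟨2, by norm_num, rfl⟩, ?_⟩
    rw [mem_sphere_zero_iff_norm, norm_mul, hζ, Complex.norm_real]; norm_num
  have hEp : IsPreconnected E := by
    apply IsPreconnected.union (((2:ℝ):ℂ) * ζ2) (Or.inr (hr2 ζ2 hζ2).2) (hr2 ζ2 hζ2).1 _ (hrp _)
    exact IsPreconnected.union (((2:ℝ):ℂ) * ζ1) (hr2 ζ1 hζ1).1 (hr2 ζ1 hζ1).2 (hrp _) hsp
  have hEc : IsCompact E := ((hrc _).union (isCompact_sphere _ _)).union (hrc _)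
  have hr1 : ∀ ζ, ζ ∈ r ζ := fun ζ => ⟨1, by norm_num, by simp⟩
  have hE1 : ζ1 ∈ E := Or.inl (Or.inl (hr1 _))
  have hE2 : ζ2 ∈ E := Or.inr (hr1 _)
  have hrn : ∀ ζ : ℂ, ‖ζ‖ = 1 → ∀ z ∈ r ζ, 1 ≤ ‖z‖ ∧ (‖z‖ = 1 → z = ζ) := by
    rintro ζ hζ z ⟨t, ht, rfl⟩
    have h0 : 0 ≤ t := by linarith [ht.1]
    simp only [norm_mul, hζ, Complex.norm_real, Real.norm_of_nonneg h0, mul_one]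
    refine ⟨ht.1, fun h => ?_⟩
    simp [h]
  have hEn : ∀ z ∈ E, 1 ≤ ‖z‖ ∧ (‖z‖ = 1 → z = ζ1 ∨ z = ζ2) := by
    rintro z ((hz | hz) | hz)
    · exact ⟨(hrn ζ1 hζ1 z hz).1, fun h => Or.inl ((hrn ζ1 hζ1 z hz).2 h)⟩
    · rw [mem_sphere_zero_iff_norm] at hz
      rw [hz]
      exact ⟨by norm_num, fun h => by norm_num at h⟩
    · exact ⟨(hrn ζ2 hζ2 z hz).1, fun h => Or.inr ((hrn ζ2 hζ2 z hz).2 h)⟩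
  have hKn : ∀ z ∈ K, ‖z‖ ≤ 1 ∧ (‖z‖ = 1 → z = ζ1 ∨ z = ζ2) := by
    intro z hz
    rcases hKD hz with h | h | h
    · rw [mem_ball_zero_iff] at h
      exact ⟨h.le, fun h' => by linarith⟩
    · subst h; exact ⟨hζ1.le, fun _ => Or.inl rfl⟩
    · rw [mem_singleton_iff] at h; subst h; exact ⟨hζ2.le, fun _ => Or.inr rfl⟩
  have hyno : ∀ y : ℂ, ‖y‖ = 1 → ζ1 ≠ y → ζ2 ≠ y → y ∉ K ∪ E := by
    rintro y hy h1 h2 (h | h)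
    · rcases (hKn y h).2 hy with e | e
      · exact h1 e.symm
      · exact h2 e.symm
    · rcases (hEn y h).2 hy with e | e
      · exact h1 e.symm
      · exact h2 e.symm
  have hy1no := hyno y1 hy1 h11 h21
  have hy2no := hyno y2 hy2 h12 h22
  have hσ : IsPreconnected (Ω ∪ {y1, y2}) := by
    apply hΩ.subset_closure subset_union_left
    apply union_subset subset_closure
    rintro z (rfl | rfl)
    · exact hc1
    · exact hc2
  have hdis : Disjoint (Ω ∪ {y1, y2}) (K ∪ E) := by
    rw [Set.disjoint_left]
    rintro z (hz | hz | hz)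
    · rintro (h | h)
      · exact Set.disjoint_left.mp hΩK hz h
      · have h1 := hΩD hz
        rw [mem_ball_zero_iff] at h1
        linarith [(hEn z h).1]
    · subst hz; exact hy1no
    · rw [mem_singleton_iff] at hz; subst hz; exact hy2no
  obtain ⟨g, hg, hge⟩ := hasLog_of_connected (hK.union hEc).isClosed hσ hdis
    (a := y1) (b := y2) (by simp) (by simp)
  -- interior
  have hin : ∀ y : ℂ, ‖y‖ = 1 → y ∉ K → ∀ z ∈ K, 1 - z / y ∈ Complex.slitPlane := by
    intro y hy hyK z hz
    apply slit_one_sub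
    · rw [norm_div, hy, div_one]; exact (hKn z hz).1
    · intro h
      have hy0 : y ≠ 0 := by rw [← norm_pos_iff, hy]; exact one_pos
      rw [div_eq_one_iff_eq hy0] at h
      exact hyK (h ▸ hz)
  have hout : ∀ y : ℂ, ‖y‖ = 1 → y ∉ E → ∀ z ∈ E, 1 - y / z ∈ Complex.slitPlane := by
    intro y hy hyE z hz
    have hz1 := (hEn z hz).1
    have hz0 : z ≠ 0 := by rw [← norm_pos_iff]; linarith
    apply slit_one_sub
    · rw [norm_div, hy]
      rw [div_le_one (by linarith)]; exact hz1
    · intro h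
      rw [div_eq_one_iff_eq hz0] at h
      exact hyE (h ▸ hz)
  have hy1K : y1 ∉ K := fun h => hy1no (Or.inl h)
  have hy2K : y2 ∉ K := fun h => hy2no (Or.inl h)
  have hy1E : y1 ∉ E := fun h => hy1no (Or.inr h)
  have hy2E : y2 ∉ E := fun h => hy2no (Or.inr h)
  have e1 := log_diff_const hKp (hg.mono subset_union_left)
    (h := fun z => Complex.log (1 - z / y1) - Complex.log (1 - z / y2) + Complex.log (y1 / y2)) (by
      refine ContinuousOn.add (ContinuousOn.sub ?_ ?_) continuousOn_const
      · exact ContinuousOn.clog (by fun_prop) (hin y1 hy1 hy1K)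
      · exact ContinuousOn.clog (by fun_prop) (hin y2 hy2 hy2K)) (by
      intro z hz
      have s1 := Complex.slitPlane_ne_zero (hin y1 hy1 hy1K z hz)
      have s2 := Complex.slitPlane_ne_zero (hin y2 hy2 hy2K z hz)
      have s3 : z - y2 ≠ 0 := fun h => hy2K ((sub_eq_zero.mp h) ▸ hz)
      rw [hge z (Or.inl hz), Complex.exp_add, Complex.exp_sub, Complex.exp_log s1,
        Complex.exp_log s2, Complex.exp_log (div_ne_zero hy10 hy20), div_mul_div_comm,
        div_eq_div_iff s3 (mul_ne_zero s2 hy20)]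
      field_simp
      ring) ζ1 hK1 ζ2 hK2
  have hE0 : ∀ z ∈ E, z ≠ 0 := fun z hz => by
    rw [← norm_pos_iff]; linarith [(hEn z hz).1]
  have e2 := log_diff_const hEp (hg.mono subset_union_right)
    (h := fun z => Complex.log (1 - y1 / z) - Complex.log (1 - y2 / z)) (by
      refine ContinuousOn.sub ?_ ?_
      · exact ContinuousOn.clog (continuousOn_const.sub (continuousOn_const.div continuousOn_id hE0))
          (hout y1 hy1 hy1E)
      · exact ContinuousOn.clog (continuousOn_const.sub (continuousOn_const.div continuousOn_id hE0))
          (hout y2 hy2 hy2E)) (by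
      intro z hz
      have s1 := Complex.slitPlane_ne_zero (hout y1 hy1 hy1E z hz)
      have s2 := Complex.slitPlane_ne_zero (hout y2 hy2 hy2E z hz)
      have s3 : z - y2 ≠ 0 := fun h => hy2E ((sub_eq_zero.mp h) ▸ hz)
      have s0 := hE0 z hz
      rw [hge z (Or.inr hz), Complex.exp_sub, Complex.exp_log s1,
        Complex.exp_log s2, div_eq_div_iff s3 s2]
      field_simp
      ) ζ1 hE1 ζ2 hE2
  have hconj : ∀ ζ y : ℂ, ‖ζ‖ = 1 → ‖y‖ = 1 → ζ ∈ E → y ∉ E →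
      (Complex.log (1 - y / ζ)).im = - Complex.arg (1 - ζ / y) := by
    intro ζ y hζ hy hζE hyE
    have h1 : 1 - ζ / y = (starRingEnd ℂ) (1 - y / ζ) := by
      have a1 : ζ * (starRingEnd ℂ) ζ = 1 := by
        rw [Complex.mul_conj, Complex.normSq_eq_norm_sq, hζ]; simp
      have a2 : y * (starRingEnd ℂ) y = 1 := by
        rw [Complex.mul_conj, Complex.normSq_eq_norm_sq, hy]; simp
      have b1 : ζ ≠ 0 := left_ne_zero_of_mul_eq_one a1
      have b2 : y ≠ 0 := left_ne_zero_of_mul_eq_one a2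
      rw [map_sub, map_one, map_div₀, eq_inv_of_mul_eq_one_right a1, eq_inv_of_mul_eq_one_right a2]
      field_simp
    rw [h1, Complex.arg_conj, if_neg (Complex.slitPlane_arg_ne_pi (hout y hy hyE ζ hζE)), neg_neg,
      Complex.log_im]
  have i1 := congrArg Complex.im e1
  have i2 := congrArg Complex.im e2
  simp only [Complex.sub_im, Complex.add_im] at i1 i2
  rw [hconj ζ1 y1 hζ1 hy1 hE1 hy1E, hconj ζ1 y2 hζ1 hy2 hE1 hy2E,
    hconj ζ2 y1 hζ2 hy1 hE2 hy1E, hconj ζ2 y2 hζ2 hy2 hE2 hy2E] at i2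
  simp only [Complex.log_im] at i1
  unfold angA
  linarith

end Schoen

namespace Schoen
open Set Filter Topology

lemma rot_half {f : ℂ → ℂ} {M : ℝ} (hf : DifferentiableOn ℂ f (Metric.ball 0 1))
    (hM : ∀ z ∈ Metric.ball (0:ℂ) 1, ‖f z‖ ≤ M) (hnz : ∀ z ∈ Metric.ball (0:ℂ) 1, f z ≠ 0)
    {x : ℂ} {τ : ℝ} (hx : ‖x‖ = 1) (hτ : 0 < τ) (hτ1 : τ < 1) :
    ∃ ε > 0, ∀ Ω : Set ℂ, IsOpen Ω → Ω ⊆ Metric.ball 0 1 → ((1 - τ : ℝ) : ℂ) * x ∈ Ω →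
      (∀ z ∈ closure Ω ∩ Metric.closedBall (((1 - τ : ℝ) : ℂ) * x) (2 * τ), ‖z‖ < 1) →
      (∀ z ∈ frontier Ω ∩ Metric.closedBall (((1 - τ : ℝ) : ℂ) * x) (2 * τ), ‖f z‖ ≤ ε) → False := by
  set z1 : ℂ := ((1 - τ : ℝ) : ℂ) * x with hz1
  have hz1n : ‖z1‖ = 1 - τ := by
    rw [hz1, norm_mul, hx, Complex.norm_real, Real.norm_of_nonneg (by linarith), mul_one]
  have hz1b : z1 ∈ Metric.ball (0:ℂ) 1 := by rw [mem_ball_zero_iff, hz1n]; linarith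
  set p : ℂ := ((1 + τ : ℝ) : ℂ) * x with hp
  have hpn : ‖p‖ = 1 + τ := by
    rw [hp, norm_mul, hx, Complex.norm_real, Real.norm_of_nonneg (by linarith), mul_one]
  have hpd : dist p z1 = 2 * τ := by
    rw [dist_eq_norm, hp, hz1, ← sub_mul, norm_mul, hx, ← Complex.ofReal_sub, Complex.norm_real,
      mul_one, show 1 + τ - (1 - τ) = 2 * τ by ring, Real.norm_of_nonneg (by linarith)]
  obtain ⟨T, hT, hrot⟩ := exists_T (O := (Metric.closedBall (0:ℂ) 1)ᶜ) (z1 := z1) (p := p)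
    Metric.isClosed_closedBall.isOpen_compl (by
      rw [mem_compl_iff, mem_closedBall_zero_iff, hpn]; linarith) (by
      rw [← dist_pos, hpd]; linarith)
  rw [hpd] at hrot
  have hpos : 0 < ‖f z1‖ ^ T.card := pow_pos (norm_pos_iff.mpr (hnz z1 hz1b)) _
  obtain ⟨ε, hε, hlt⟩ := exists_pos_mul_lt hpos (M ^ (T.card - 1))
  refine ⟨ε, hε, fun Ω hΩ hΩb hzΩ hcl hfr => ?_⟩
  have hsub : closure Ω ∩ Metric.closedBall z1 (2 * τ) ⊆ Metric.ball 0 1 := fun z hz => by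
    rw [mem_ball_zero_iff]; exact hcl z hz
  have := (rotation_max hΩ hzΩ (ρ := 2 * τ) (by linarith) hT (hf.mono hΩb)
    (hf.continuousOn.mono hsub) (fun z hz => hM z (hsub hz)) hfr hε.le (by
      intro z hz
      obtain ⟨ω, hω, h⟩ := hrot z hz
      refine ⟨ω, hω, fun hc => h ?_⟩
      exact (closure_mono hΩb).trans Metric.closure_ball_subset_closedBall hc)).2
  rw [mul_comm] at this
  linarith

lemma angA_sep {ζ1 ζ2 : ℂ} (hζ1 : ‖ζ1‖ = 1) (hζ2 : ‖ζ2‖ = 1) (hne : ζ1 ≠ ζ2) :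
    ∃ x1 x2 : ℂ, ‖x1‖ = 1 ∧ ‖x2‖ = 1 ∧ angA ζ1 ζ2 x1 < 0 ∧ 0 < angA ζ1 ζ2 x2 ∧
      x1 ≠ ζ1 ∧ x1 ≠ ζ2 ∧ x2 ≠ ζ1 ∧ x2 ≠ ζ2 := by
  obtain ⟨c, hc⟩ := IsAlgClosed.exists_pow_nat_eq (ζ1 * ζ2) (n := 2) (by norm_num)
  have hcn : ‖c‖ = 1 := by
    have h1 : ‖c‖ ^ 2 = 1 := by rw [← norm_pow, hc, norm_mul, hζ1, hζ2, mul_one]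
    nlinarith [norm_nonneg c]
  have hc0 : c ≠ 0 := by rw [← norm_pos_iff, hcn]; exact one_pos
  set u := ζ1 / c with hu
  have hζe1 : ζ1 = u * c := by rw [hu]; field_simp
  have hun : ‖u‖ = 1 := by rw [hu, norm_div, hζ1, hcn, div_one]
  have huu : u * (starRingEnd ℂ) u = 1 := by
    rw [Complex.mul_conj, Complex.normSq_eq_norm_sq, hun]; simp
  have hu0 : u ≠ 0 := left_ne_zero_of_mul_eq_one huu
  have hv : ζ2 / c = (starRingEnd ℂ) u := by
    apply mul_left_cancel₀ hu0
    rw [huu, hu]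
    field_simp
    rw [hc]
  have hζe2 : ζ2 = (starRingEnd ℂ) u * c := by rw [← hv]; field_simp
  have him : u.im ≠ 0 := by
    intro h
    apply hne
    rw [hζe1, hζe2, Complex.conj_eq_iff_im.mpr h]
  -- values of the angle
  have key : ∀ s : ℂ, (s = 1 ∨ s = -1) → ‖s * c‖ = 1 ∧ s * c ≠ ζ1 ∧ s * c ≠ ζ2 ∧
      angA ζ1 ζ2 (s * c) = 2 * Complex.arg (1 - s * u) := by
    intro s hs
    have hs0 : s ≠ 0 := by rcases hs with rfl | rfl <;> norm_num
    have hss : s * s = 1 := by rcases hs with rfl | rfl <;> norm_num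
    have hsn : ‖s‖ = 1 := by rcases hs with rfl | rfl <;> simp
    have hsi : s.im = 0 := by rcases hs with rfl | rfl <;> simp
    have hsr : s.re ≠ 0 := by rcases hs with rfl | rfl <;> simp
    have hsc : (starRingEnd ℂ) s = s := Complex.conj_eq_iff_im.mpr hsi
    have e1 : ζ1 / (s * c) = s * u := by
      rw [hζe1]; field_simp; rw [pow_two, hss]
    have e2 : ζ2 / (s * c) = (starRingEnd ℂ) (s * u) := by
      rw [hζe2, map_mul, hsc]; field_simp; rw [pow_two, hss, mul_one]
    refine ⟨by rw [norm_mul, hsn, hcn, one_mul], ?_, ?_, ?_⟩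
    · intro h
      rw [hζe1] at h
      have := mul_right_cancel₀ hc0 h
      rw [← this] at him; exact him hsi
    · intro h
      rw [hζe2] at h
      have := mul_right_cancel₀ hc0 h
      rw [← hsc] at this
      have := (starRingEnd ℂ).injective this
      rw [← this] at him; exact him hsi
    · unfold angA
      rw [e1, e2, show 1 - (starRingEnd ℂ) (s * u) = (starRingEnd ℂ) (1 - s * u) by simp,
        Complex.arg_conj, if_neg]
      · ring
      · intro h
        have := (Complex.arg_eq_pi_iff.mp h).2
        simp [hsi, hsr, him] at this
  obtain ⟨a1, a2, a3, a4⟩ := key 1 (Or.inl rfl)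
  obtain ⟨b1, b2, b3, b4⟩ := key (-1) (Or.inr rfl)
  have hneg : ∀ w : ℂ, w.im < 0 → 2 * Complex.arg w < 0 := fun w hw => by
    have := Complex.arg_neg_iff.mpr hw; linarith
  have hpos : ∀ w : ℂ, 0 < w.im → 0 < 2 * Complex.arg w := fun w hw => by
    have h1 := Complex.arg_nonneg_iff.mpr hw.le
    have h2 : Complex.arg w ≠ 0 := fun h => by
      have := (Complex.arg_eq_zero_iff.mp h).2; linarith
    have := lt_of_le_of_ne h1 h2.symm
    linarith
  rcases lt_or_gt_of_ne him with h | h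
  · refine ⟨-1 * c, 1 * c, b1, a1, ?_, ?_, b2, b3, a2, a3⟩
    · rw [b4]; apply hneg; simpa using h
    · rw [a4]; apply hpos; simpa using h
  · refine ⟨1 * c, -1 * c, a1, b1, ?_, ?_, a2, a3, b2, b3⟩
    · rw [a4]; apply hneg; simpa using h
    · rw [b4]; apply hpos; simpa using h

lemma angA_cont {ζ1 ζ2 x : ℂ} (hζ1 : ‖ζ1‖ = 1) (hζ2 : ‖ζ2‖ = 1) (hx : ‖x‖ = 1)
    (h1 : x ≠ ζ1) (h2 : x ≠ ζ2) : ContinuousAt (angA ζ1 ζ2) x := by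
  have hx0 : x ≠ 0 := by rw [← norm_pos_iff, hx]; exact one_pos
  have aux : ∀ ζ : ℂ, ‖ζ‖ = 1 → x ≠ ζ → ContinuousAt (fun y => Complex.arg (1 - ζ / y)) x := by
    intro ζ hζ hne
    have hs : 1 - ζ / x ∈ Complex.slitPlane := slit_one_sub (by rw [norm_div, hζ, hx, div_one]) (by
      intro h; rw [div_eq_one_iff_eq hx0] at h; exact hne h.symm)
    exact (Complex.continuousAt_arg hs).comp
      (f := fun y => 1 - ζ / y) (continuousAt_const.sub (continuousAt_const.div continuousAt_id hx0))
  exact (aux ζ1 hζ1 h1).sub (aux ζ2 hζ2 h2)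

lemma crosscut {f : ℂ → ℂ} {M : ℝ} (hf : DifferentiableOn ℂ f (Metric.ball 0 1))
    (hM : ∀ z ∈ Metric.ball (0:ℂ) 1, ‖f z‖ ≤ M) (hnz : ∀ z ∈ Metric.ball (0:ℂ) 1, f z ≠ 0)
    {ζ1 ζ2 : ℂ} (hζ1 : ‖ζ1‖ = 1) (hζ2 : ‖ζ2‖ = 1) (hne : ζ1 ≠ ζ2) :
    ∃ ε > 0, ∃ τ > 0, ∀ Γ : Set ℂ, IsCompact Γ → IsPreconnected Γ → Γ ⊆ Metric.ball 0 1 →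
      (∃ p ∈ Γ, dist p ζ1 < τ) → (∃ q ∈ Γ, dist q ζ2 < τ) → (∀ z ∈ Γ, ‖f z‖ < ε) → False := by
  obtain ⟨x1, x2, hx1, hx2, hs1, hs2, h11, h12, h21, h22⟩ := angA_sep hζ1 hζ2 hne
  obtain ⟨r1, hr1, hb1⟩ := Metric.eventually_nhds_iff_ball.mp
    ((angA_cont hζ1 hζ2 hx1 h11 h12).eventually_lt_const hs1)
  obtain ⟨r2, hr2, hb2⟩ := Metric.eventually_nhds_iff_ball.mp
    ((angA_cont hζ1 hζ2 hx2 h21 h22).eventually_const_lt hs2)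
  have hev : ∀ᶠ τ in 𝓝[>] (0:ℝ), 0 < τ ∧ τ < 1 ∧ 3 * τ < r1 ∧ 3 * τ < r2 ∧ 4 * τ < dist x1 ζ1 ∧
      4 * τ < dist x1 ζ2 ∧ 4 * τ < dist x2 ζ1 ∧ 4 * τ < dist x2 ζ2 := by
    have hc : ∀ k b : ℝ, 0 < b → ∀ᶠ τ in 𝓝[>] (0:ℝ), k * τ < b := by
      intro k b hb
      have : ContinuousAt (fun τ : ℝ => k * τ) 0 := by fun_prop
      exact (this.eventually_lt_const (by simpa using hb)).filter_mono nhdsWithin_le_nhds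
    have h0 : ∀ᶠ τ in 𝓝[>] (0:ℝ), 0 < τ := eventually_mem_nhdsWithin
    have h1 := hc 1 1 one_pos
    filter_upwards [h0, h1, hc 3 r1 hr1, hc 3 r2 hr2, hc 4 _ (dist_pos.mpr h11),
      hc 4 _ (dist_pos.mpr h12), hc 4 _ (dist_pos.mpr h21), hc 4 _ (dist_pos.mpr h22)]
      with τ a1 a2 a3 a4 a5 a6 a7 a8
    exact ⟨a1, by simpa using a2, a3, a4, a5, a6, a7, a8⟩
  obtain ⟨τ, hτ, hτ1, c1, c2, d11, d12, d21, d22⟩ := hev.exists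
  obtain ⟨ε1, hε1, H1⟩ := rot_half hf hM hnz hx1 hτ hτ1
  obtain ⟨ε2, hε2, H2⟩ := rot_half hf hM hnz hx2 hτ hτ1
  have hin : Metric.closedBall (0:ℂ) (1 - τ) ⊆ Metric.ball 0 1 :=
    Metric.closedBall_subset_ball (by linarith)
  obtain ⟨zm, hzm, hmin⟩ := (isCompact_closedBall (0:ℂ) (1 - τ)).exists_isMinOn
    ⟨0, Metric.mem_closedBall_self (by linarith)⟩ (hf.continuousOn.mono hin).norm
  have hε3 : 0 < ‖f zm‖ := norm_pos_iff.mpr (hnz zm (hin hzm))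
  refine ⟨min (min ε1 ε2) ‖f zm‖, lt_min (lt_min hε1 hε2) hε3, τ, hτ, ?_⟩
  rintro Γ hΓc hΓp hΓb ⟨p, hp, hpd⟩ ⟨q, hq, hqd⟩ hΓf
  have hseg : ∀ p ζ : ℂ, p ∈ Metric.ball (0:ℂ) 1 → ‖ζ‖ = 1 → dist p ζ < τ →
      (∀ z ∈ segment ℝ p ζ, dist z ζ < τ ∧ (‖z‖ < 1 ∨ z = ζ)) := by
    intro p ζ hp hζ hd z hz
    constructor
    · have h1 : segment ℝ p ζ ⊆ Metric.ball ζ τ :=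
        (convex_ball ζ τ).segment_subset hd (Metric.mem_ball_self hτ)
      exact h1 hz
    · rw [mem_ball_zero_iff] at hp
      obtain ⟨a, b, ha, hb, hab, rfl⟩ := hz
      rcases eq_or_lt_of_le ha with h | h
      · right; rw [← h] at hab ⊢; simp at hab; simp [hab]
      · left
        calc ‖a • p + b • ζ‖ ≤ ‖a • p‖ + ‖b • ζ‖ := norm_add_le _ _
          _ = a * ‖p‖ + b := by
            rw [norm_smul, norm_smul, hζ, Real.norm_of_nonneg ha, Real.norm_of_nonneg hb, mul_one]
          _ < 1 := by nlinarith
  have hsegc : ∀ p ζ : ℂ, IsCompact (segment ℝ p ζ) := fun p ζ => by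
    rw [← Path.range_segment p ζ]
    exact isCompact_range (Path.segment p ζ).continuous
  have S1 := hseg p ζ1 (hΓb hp) hζ1 hpd
  have S2 := hseg q ζ2 (hΓb hq) hζ2 hqd
  set K : Set ℂ := (Γ ∪ segment ℝ p ζ1) ∪ segment ℝ q ζ2 with hK
  have hKc : IsCompact K := (hΓc.union (hsegc _ _)).union (hsegc _ _)
  have hKp : IsPreconnected K := by
    apply IsPreconnected.union q (Or.inl hq) (left_mem_segment ℝ q ζ2) _
      (convex_segment _ _).isPreconnected
    exact IsPreconnected.union p hp (left_mem_segment ℝ p ζ1) hΓp (convex_segment _ _).isPreconnected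
  have hKD : K ⊆ Metric.ball 0 1 ∪ {ζ1, ζ2} := by
    rintro z ((hz | hz) | hz)
    · exact Or.inl (hΓb hz)
    · rcases (S1 z hz).2 with h | h
      · left; rw [mem_ball_zero_iff]; exact h
      · right; left; exact h
    · rcases (S2 z hz).2 with h | h
      · left; rw [mem_ball_zero_iff]; exact h
      · right; right; exact h
  have hK1 : ζ1 ∈ K := Or.inl (Or.inr (right_mem_segment ℝ p ζ1))
  have hK2 : ζ2 ∈ K := Or.inr (right_mem_segment ℝ q ζ2)
  have hnear : ∀ z ζ : ℂ, ‖ζ‖ = 1 → dist z ζ < τ → 1 - τ < ‖z‖ := by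
    intro z ζ hζ hd
    rw [dist_eq_norm] at hd
    have := norm_sub_norm_le ζ z
    rw [norm_sub_rev] at this
    linarith
  have hKin : ∀ z ∈ K, 1 - τ < ‖z‖ := by
    rintro z ((hz | hz) | hz)
    · by_contra hcon
      push Not at hcon
      have h1 : ‖f zm‖ ≤ ‖f z‖ := hmin (by rw [mem_closedBall_zero_iff]; exact hcon)
      exact absurd (hΓf z hz) (not_lt.mpr ((min_le_right _ _).trans h1))
    · exact hnear z ζ1 hζ1 (S1 z hz).1
    · exact hnear z ζ2 hζ2 (S2 z hz).1
  set Ω : Set ℂ := connectedComponentIn (Metric.ball 0 1 \ K) 0 with hΩ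
  have hΩo : IsOpen Ω := (Metric.isOpen_ball.sdiff hKc.isClosed).connectedComponentIn
  have hΩs : Ω ⊆ Metric.ball 0 1 \ K := connectedComponentIn_subset _ _
  have hcb : Metric.closedBall (0:ℂ) (1 - τ) ⊆ Ω := by
    apply (convex_closedBall (0:ℂ) (1-τ)).isPreconnected.subset_connectedComponentIn
    · exact Metric.mem_closedBall_self (by linarith)
    · intro z hz
      refine ⟨hin hz, fun h => ?_⟩
      rw [mem_closedBall_zero_iff] at hz
      linarith [hKin z h]
  have hzn : ∀ x : ℂ, ‖x‖ = 1 → ((1 - τ : ℝ) : ℂ) * x ∈ Ω := by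
    intro x hx
    apply hcb
    rw [mem_closedBall_zero_iff, norm_mul, hx, Complex.norm_real,
      Real.norm_of_nonneg (by linarith), mul_one]
  have hfar : ∀ x z : ℂ, ‖x‖ = 1 → z ∈ Metric.closedBall (((1 - τ : ℝ) : ℂ) * x) (2 * τ) →
      dist z x ≤ 3 * τ := by
    intro x z hx hz
    have h1 : dist (((1 - τ : ℝ) : ℂ) * x) x = τ := by
      rw [dist_eq_norm, show ((1 - τ : ℝ) : ℂ) * x - x = ((-τ : ℝ) : ℂ) * x by push_cast; ring,
        norm_mul, hx, Complex.norm_real, norm_neg, Real.norm_of_nonneg hτ.le, mul_one]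
    have := dist_triangle z (((1 - τ : ℝ) : ℂ) * x) x
    rw [Metric.mem_closedBall] at hz
    linarith
  have hcl : closure Ω ⊆ Metric.closedBall 0 1 :=
    (closure_mono (hΩs.trans sdiff_subset)).trans Metric.closure_ball_subset_closedBall
  have hfrK : ∀ z ∈ frontier Ω, ‖z‖ < 1 → z ∈ K := by
    intro z hz hz1
    by_contra hzK
    have hzm : z ∈ Metric.ball (0:ℂ) 1 \ K := ⟨by rw [mem_ball_zero_iff]; exact hz1, hzK⟩
    rw [frontier, hΩo.interior_eq] at hz
    have h1 := isPreconnected_connectedComponentIn.subset_closure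
      (s := Ω) (t := Ω ∪ {z}) subset_union_left (union_subset subset_closure (by simpa using hz.1))
    have h2 := h1.subset_connectedComponentIn (F := Metric.ball 0 1 \ K) (x := 0)
      (Or.inl (hcb (Metric.mem_closedBall_self (by linarith)))) (union_subset hΩs (by simpa using hzm))
    exact hz.2 (h2 (Or.inr rfl))
  have hall : ∀ x : ℂ, ‖x‖ = 1 → 4 * τ < dist x ζ1 → 4 * τ < dist x ζ2 → ∀ ε',
      min (min ε1 ε2) ‖f zm‖ ≤ ε' → (∀ Ω : Set ℂ, IsOpen Ω → Ω ⊆ Metric.ball 0 1 → ((1 - τ : ℝ) : ℂ) * x ∈ Ω →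
      (∀ z ∈ closure Ω ∩ Metric.closedBall (((1 - τ : ℝ) : ℂ) * x) (2 * τ), ‖z‖ < 1) →
      (∀ z ∈ frontier Ω ∩ Metric.closedBall (((1 - τ : ℝ) : ℂ) * x) (2 * τ), ‖f z‖ ≤ ε') → False) →
      ∃ y, ‖y‖ = 1 ∧ y ∈ closure Ω ∧ dist y x ≤ 3 * τ := by
    intro x hx e1 e2 ε' hε' H
    by_contra hcon
    push Not at hcon
    have hlt : ∀ z ∈ closure Ω ∩ Metric.closedBall (((1 - τ : ℝ) : ℂ) * x) (2 * τ), ‖z‖ < 1 := by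
      intro z hz
      have h1 := hcl hz.1
      rw [mem_closedBall_zero_iff] at h1
      refine lt_of_le_of_ne h1 fun h => ?_
      have h2 := hcon z h hz.1
      linarith [hfar x z hx hz.2]
    apply H Ω hΩo (hΩs.trans sdiff_subset) (hzn x hx) hlt
    intro z hz
    have hzd := hfar x z hx hz.2
    rcases hfrK z hz.1 (hlt z ⟨frontier_subset_closure hz.1, hz.2⟩) with (h | h) | h
    · exact (hΓf z h).le.trans hε'
    · exfalso
      have := dist_triangle_left x ζ1 z
      linarith [(S1 z h).1]
    · exfalso
      have := dist_triangle_left x ζ2 z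
      linarith [(S2 z h).1]
  obtain ⟨y1, hy1, hyc1, hyd1⟩ := hall x1 hx1 d11 d12 ε1
    ((min_le_left _ _).trans (min_le_left _ _)) H1
  obtain ⟨y2, hy2, hyc2, hyd2⟩ := hall x2 hx2 d21 d22 ε2
    ((min_le_left _ _).trans (min_le_right _ _)) H2
  have hyne : ∀ x y ζ : ℂ, 4 * τ < dist x ζ → dist y x ≤ 3 * τ → ζ ≠ y := by
    rintro x y ζ h1 h2 rfl
    rw [dist_comm] at h2
    linarith
  have hEq := angA_eq hζ1 hζ2 hy1 hy2 (hyne _ _ _ d11 hyd1) (hyne _ _ _ d21 hyd2)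
    (hyne _ _ _ d12 hyd1) (hyne _ _ _ d22 hyd2) hKc hKp hKD hK1 hK2
    isPreconnected_connectedComponentIn (hΩs.trans sdiff_subset)
    (Set.disjoint_left.mpr fun z hz => (hΩs hz).2) hyc1 hyc2
  have g1 := hb1 y1 (by rw [Metric.mem_ball]; linarith)
  have g2 := hb2 y2 (by rw [Metric.mem_ball]; linarith)
  linarith

end Schoen

namespace Schoen
open Set Filter Topology

/-- a Riemann map from `U` to the unit disc with inverse -/
structure RMap (U : Set ℂ) (ψ φ : ℂ → ℂ) : Prop where
  dψ : DifferentiableOn ℂ ψ U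
  dφ : DifferentiableOn ℂ φ (Metric.ball 0 1)
  mψ : MapsTo ψ U (Metric.ball 0 1)
  mφ : MapsTo φ (Metric.ball 0 1) U
  inv : InvOn φ ψ U (Metric.ball 0 1)

lemma RMap.norm_one {U : Set ℂ} {ψ φ : ℂ → ℂ} (h : RMap U ψ φ) {ι : Type*} {l : Filter ι} [l.NeBot]
    {a : ι → ℂ} (ha : ∀ᶠ i in l, a i ∈ U) {w ζ : ℂ} (hw : w ∉ U) (haw : Tendsto a l (𝓝 w))
    (hζ : Tendsto (fun i => ψ (a i)) l (𝓝 ζ)) : ‖ζ‖ = 1 := by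
  have hle : ‖ζ‖ ≤ 1 := by
    apply le_of_tendsto hζ.norm
    filter_upwards [ha] with i hi
    exact (mem_ball_zero_iff.mp (h.mψ hi)).le
  refine le_antisymm hle (not_lt.mp fun hlt => hw ?_)
  have hb : ζ ∈ Metric.ball (0:ℂ) 1 := mem_ball_zero_iff.mpr hlt
  have hc : ContinuousAt φ ζ := (h.dφ.differentiableAt (Metric.isOpen_ball.mem_nhds hb)).continuousAt
  have h1 : Tendsto (fun i => φ (ψ (a i))) l (𝓝 (φ ζ)) := hc.tendsto.comp hζ
  have h2 : Tendsto a l (𝓝 (φ ζ)) := by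
    refine h1.congr' ?_
    filter_upwards [ha] with i hi
    exact h.inv.1 hi
  rw [tendsto_nhds_unique haw h2]
  exact h.mφ hb

lemma sub_of_frontier {U W : Set ℂ} (hUo : IsOpen U) (hW : IsPreconnected W)
    (hd : Disjoint W (frontier U)) (hne : (W ∩ U).Nonempty) : W ⊆ U := by
  refine hW.subset_left_of_subset_union hUo isClosed_closure.isOpen_compl
    (Set.disjoint_left.mpr fun x hx hx' => hx' (subset_closure hx)) ?_ hne
  intro x hx
  by_cases h : x ∈ closure U
  · left
    by_contra h2
    apply Set.disjoint_left.mp hd hx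
    rw [frontier, hUo.interior_eq]
    exact ⟨h, h2⟩
  · exact Or.inr h

lemma psi_cauchy {f : Circle → ℂ} (hf : Continuous f) (hinj : Function.Injective f) {U : Set ℂ}
    (hUo : IsOpen U) (hUc : IsPreconnected U) (hUb : Bornology.IsBounded U)
    (hfr : frontier U = range f) {ψ φ : ℂ → ℂ} (h : RMap U ψ φ) {w0 : ℂ} (hw0 : w0 ∈ range f)
    {η : ℝ} (hη : 0 < η) :
    ∃ δ > 0, ∀ a ∈ U ∩ Metric.ball w0 δ, ∀ b ∈ U ∩ Metric.ball w0 δ, dist (ψ a) (ψ b) < η := by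
  by_contra hcon
  push Not at hcon
  have hdU : Disjoint U (range f) := by
    rw [← hfr, Set.disjoint_left]
    intro x hx hx'
    rw [frontier, hUo.interior_eq] at hx'
    exact hx'.2 hx
  have hwU : w0 ∉ U := fun hh => Set.disjoint_left.mp hdU hh hw0
  have hcon' : ∀ n : ℕ, ∃ a b : ℂ, (a ∈ U ∧ dist a w0 < 1 / ((n:ℝ) + 1)) ∧
      (b ∈ U ∧ dist b w0 < 1 / ((n:ℝ) + 1)) ∧ η ≤ dist (ψ a) (ψ b) := by
    intro n
    obtain ⟨a, ha, b, hb, hab⟩ := hcon (1 / ((n:ℝ) + 1)) (by positivity)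
    exact ⟨a, b, ⟨ha.1, ha.2⟩, ⟨hb.1, hb.2⟩, hab⟩
  choose a b ha hb hab using hcon'
  have hlim : ∀ c : ℕ → ℂ, (∀ n, dist (c n) w0 < 1 / ((n:ℝ) + 1)) → Tendsto c atTop (𝓝 w0) := by
    intro c hc
    rw [tendsto_iff_dist_tendsto_zero]
    exact squeeze_zero (fun _ => dist_nonneg) (fun n => (hc n).le) tendsto_one_div_add_atTop_nhds_zero_nat
  have haw := hlim a fun n => (ha n).2
  have hbw := hlim b fun n => (hb n).2
  have hcomp : IsCompact (Metric.closedBall (0:ℂ) 1 ×ˢ Metric.closedBall (0:ℂ) 1) :=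
    (isCompact_closedBall _ _).prod (isCompact_closedBall _ _)
  obtain ⟨⟨ζ1, ζ2⟩, -, θ, hθ, hlimθ⟩ := hcomp.tendsto_subseq
    (x := fun n => (ψ (a n), ψ (b n))) (fun n =>
      ⟨Metric.ball_subset_closedBall (h.mψ (ha n).1), Metric.ball_subset_closedBall (h.mψ (hb n).1)⟩)
  have hl1 : Tendsto (fun n => ψ (a (θ n))) atTop (𝓝 ζ1) := hlimθ.fst_nhds
  have hl2 : Tendsto (fun n => ψ (b (θ n))) atTop (𝓝 ζ2) := hlimθ.snd_nhds
  have haw' : Tendsto (fun n => a (θ n)) atTop (𝓝 w0) := haw.comp hθ.tendsto_atTop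
  have hbw' : Tendsto (fun n => b (θ n)) atTop (𝓝 w0) := hbw.comp hθ.tendsto_atTop
  have hn1 := h.norm_one (Eventually.of_forall fun n => (ha (θ n)).1) hwU haw' hl1
  have hn2 := h.norm_one (Eventually.of_forall fun n => (hb (θ n)).1) hwU hbw' hl2
  have hne : ζ1 ≠ ζ2 := by
    have : η ≤ dist ζ1 ζ2 := ge_of_tendsto (hl1.dist hl2) (Eventually.of_forall fun n => hab (θ n))
    rw [← dist_pos]; linarith
  obtain ⟨M, hM⟩ := hUb.subset_closedBall w0
  obtain ⟨ε, hε, τ, hτ, H⟩ := crosscut (f := fun z => φ z - w0) (M := M) (h.dφ.sub_const w0)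
    (fun z hz => by
      have := hM (h.mφ hz)
      rwa [Metric.mem_closedBall, dist_eq_norm] at this)
    (fun z hz h0 => hwU (by rw [← sub_eq_zero.mp h0]; exact h.mφ hz)) hn1 hn2 hne
  obtain ⟨δ, hδ, -, hW⟩ := ulc hf hinj hUc hdU hw0 hε
  obtain ⟨n, m1, m2, m3, m4⟩ := ((haw'.eventually_mem (Metric.ball_mem_nhds w0 hδ)).and
    ((hbw'.eventually_mem (Metric.ball_mem_nhds w0 hδ)).and
    ((hl1.eventually_mem (Metric.ball_mem_nhds ζ1 hτ)).and
    (hl2.eventually_mem (Metric.ball_mem_nhds ζ2 hτ))))).exists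
  obtain ⟨W, hWo, hWp, hWε, hWf, haW, hbW⟩ := hW _ ⟨(ha (θ n)).1, m1⟩ _ ⟨(hb (θ n)).1, m2⟩
  have hWU : W ⊆ U := sub_of_frontier hUo hWp (by
    rw [hfr]; exact disjoint_compl_left.mono_left hWf) ⟨_, haW, (ha (θ n)).1⟩
  have hpc : IsPathConnected W := hWo.isConnected_iff_isPathConnected.mp ⟨⟨_, haW⟩, hWp⟩
  obtain ⟨γ, hγ⟩ := hpc.joinedIn _ haW _ hbW
  have hγW : range γ ⊆ W := by rintro _ ⟨t, rfl⟩; exact hγ t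
  have hψc : ContinuousOn ψ (range γ) := h.dψ.continuousOn.mono (hγW.trans hWU)
  refine H (ψ '' range γ) ((isCompact_range γ.continuous).image_of_continuousOn hψc)
    ((isPreconnected_range γ.continuous).image _ hψc) ?_ ?_ ?_ ?_
  · rintro _ ⟨x, hx, rfl⟩; exact h.mψ (hWU (hγW hx))
  · exact ⟨_, ⟨_, ⟨0, γ.source⟩, rfl⟩, m3⟩
  · exact ⟨_, ⟨_, ⟨1, γ.target⟩, rfl⟩, m4⟩
  · rintro _ ⟨x, hx, rfl⟩
    have := hWε (hγW hx)
    simp only [h.inv.1 (hWU (hγW hx))]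
    rwa [Metric.mem_ball, dist_eq_norm] at this

lemma ext_exists {f : Circle → ℂ} (hf : Continuous f) (hinj : Function.Injective f) {U : Set ℂ}
    (hUo : IsOpen U) (hUc : IsPreconnected U) (hUb : Bornology.IsBounded U)
    (hfr : frontier U = range f) {ψ φ : ℂ → ℂ} (h : RMap U ψ φ) :
    ∃ Ψ : ℂ → ℂ, ContinuousOn Ψ (closure U) ∧ EqOn Ψ ψ U ∧ ∀ w ∈ range f, ‖Ψ w‖ = 1 := by
  have hlim : ∀ w ∈ closure U, ∃ y, Tendsto ψ (𝓝[U] w) (𝓝 y) := by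
    intro w hw
    by_cases hwU : w ∈ U
    · exact ⟨ψ w, h.dψ.continuousOn w hwU⟩
    · have hwf : w ∈ range f := by rw [← hfr, frontier, hUo.interior_eq]; exact ⟨hw, hwU⟩
      have : (𝓝[U] w).NeBot := mem_closure_iff_nhdsWithin_neBot.mp hw
      apply cauchy_map_iff_exists_tendsto.mp
      rw [Metric.cauchy_iff]
      refine ⟨inferInstance, fun η hη => ?_⟩
      obtain ⟨δ, hδ, H⟩ := psi_cauchy hf hinj hUo hUc hUb hfr h hwf hη
      refine ⟨ψ '' (U ∩ Metric.ball w δ), image_mem_map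
        (inter_mem self_mem_nhdsWithin (mem_nhdsWithin_of_mem_nhds (Metric.ball_mem_nhds w hδ))), ?_⟩
      rintro _ ⟨a, ha, rfl⟩ _ ⟨b, hb, rfl⟩
      exact H a ha b hb
  refine ⟨extendFrom U ψ, continuousOn_extendFrom Subset.rfl hlim,
    extendFrom_extends h.dψ.continuousOn, ?_⟩
  intro w hw
  rw [← hfr] at hw
  have hwc := frontier_subset_closure hw
  rw [frontier, hUo.interior_eq] at hw
  have : (𝓝[U] w).NeBot := mem_closure_iff_nhdsWithin_neBot.mp hwc
  exact h.norm_one (l := 𝓝[U] w) (a := id) self_mem_nhdsWithin hw.2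
    (tendsto_id.mono_left nhdsWithin_le_nhds) (tendsto_extendFrom (hlim w hwc))

end Schoen

namespace Schoen
open Set Filter Topology

lemma preconn_iInter {K : ℕ → Set ℂ} (ha : Antitone K) (hc : ∀ n, IsCompact (K n))
    (hp : ∀ n, IsPreconnected (K n)) : IsPreconnected (⋂ n, K n) := by
  have hP : IsCompact (⋂ n, K n) := 
    (hc 0).of_isClosed_subset (isClosed_iInter fun n => (hc n).isClosed) (iInter_subset _ 0)
  rw [isPreconnected_closed_iff]
  rintro A B hA hB hAB ⟨x, hxP, hxA⟩ ⟨y, hyP, hyB⟩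
  by_contra hcon
  have hdis : Disjoint ((⋂ n, K n) ∩ A) ((⋂ n, K n) ∩ B) := by
    rw [Set.disjoint_left]
    rintro z ⟨hz, hzA⟩ ⟨_, hzB⟩
    exact hcon ⟨z, hz, hzA, hzB⟩
  obtain ⟨V1, V2, hV1, hV2, hs1, hs2, hV⟩ := SeparatedNhds.of_isCompact_isCompact
    (hP.inter_right hA) (hP.inter_right hB) hdis
  obtain ⟨n, hn⟩ := exists_subset_nhds_of_isCompact (V := K) (directed_of_isDirected_le (fun _ _ h => ha h)) hc
    (U := V1 ∪ V2) (fun z hz => (hV1.union hV2).mem_nhds (by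
      rcases hAB hz with h | h
      · exact Or.inl (hs1 ⟨hz, h⟩)
      · exact Or.inr (hs2 ⟨hz, h⟩)))
  obtain ⟨z, -, h1, h2⟩ := hp n V1 V2 hV1 hV2 hn ⟨x, mem_iInter.mp hxP n, hs1 ⟨hxP, hxA⟩⟩
    ⟨y, mem_iInter.mp hyP n, hs2 ⟨hyP, hyB⟩⟩
  exact Set.disjoint_left.mp hV h1 h2

lemma circle_interior {Q : Set Circle} (hQ : IsPreconnected Q) {x1 x2 : Circle} (h1 : x1 ∈ Q)
    (h2 : x2 ∈ Q) (hne : x1 ≠ x2) : ∃ x, Q ∈ 𝓝 x := by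
  by_cases hu : Q = univ
  · exact ⟨x1, by rw [hu]; exact univ_mem⟩
  obtain ⟨q, hq⟩ := (ne_univ_iff_exists_notMem Q).mp hu
  let g : Circle → ℝ := fun x => Complex.arg (-(x : ℂ) / q)
  have hginj : Function.Injective g := by
    intro x y hxy
    have hn : ∀ x : Circle, ‖-(x : ℂ) / q‖ = 1 := fun x => by
      rw [norm_div, norm_neg, Circle.norm_coe, Circle.norm_coe, div_one]
    have := Complex.ext_norm_arg ((hn x).trans (hn y).symm) hxy
    rw [div_left_inj' (Circle.coe_ne_zero q), neg_inj] at this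
    exact Circle.ext this
  have hgc : ∀ x, x ≠ q → ContinuousAt g x := by
    intro x hx
    apply ContinuousAt.comp (g := Complex.arg) (f := fun x : Circle => -(x : ℂ) / q)
    · apply Complex.continuousAt_arg
      have hn : ‖(x : ℂ) / q‖ = 1 := by
        rw [norm_div, Circle.norm_coe, Circle.norm_coe, div_one]
      rw [Complex.mem_slitPlane_iff_arg]
      constructor
      · intro h
        apply hx
        apply hginj
        simp only [g]
        rw [h, neg_div, div_self (Circle.coe_ne_zero q), Complex.arg_neg_one]
      · exact div_ne_zero (neg_ne_zero.mpr (Circle.coe_ne_zero x)) (Circle.coe_ne_zero q)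
    · exact ((cont_coe.neg).div_const _).continuousAt
  have hQq : ∀ x ∈ Q, x ≠ q := fun x hx h => hq (h ▸ hx)
  have hgQ : IsPreconnected (g '' Q) := hQ.image _ fun x hx => (hgc x (hQq x hx)).continuousWithinAt
  have hord := hgQ.ordConnected
  have key : ∀ y1 ∈ Q, ∀ y2 ∈ Q, g y1 < g y2 → ∃ x, Q ∈ 𝓝 x := by
    intro y1 hy1 y2 hy2 hlt
    have hsub := hord.out (mem_image_of_mem g hy1) (mem_image_of_mem g hy2)
    obtain ⟨t, ht1, ht2⟩ := exists_between hlt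
    obtain ⟨x, hx, rfl⟩ := hsub ⟨ht1.le, ht2.le⟩
    refine ⟨x, ?_⟩
    filter_upwards [(hgc x (hQq x hx)).eventually_mem (Ioo_mem_nhds ht1 ht2)] with y hy
    obtain ⟨y', hy', he⟩ := hsub ⟨hy.1.le, hy.2.le⟩
    rwa [← hginj he]
  rcases lt_or_gt_of_ne (hginj.ne hne) with h | h
  · exact key x1 h1 x2 h2 h
  · exact key x2 h2 x1 h1 h

lemma ext_inj {f : Circle → ℂ} (hf : Continuous f) (hinj : Function.Injective f) {U : Set ℂ}
    (hUo : IsOpen U) (hUb : Bornology.IsBounded U)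
    (hfr : frontier U = range f) (hext : range f ⊆ closure (closure U)ᶜ)
    {ψ φ : ℂ → ℂ} (h : RMap U ψ φ) {Ψ : ℂ → ℂ} (hΨ : ContinuousOn Ψ (closure U)) (he : EqOn Ψ ψ U)
    (h1 : ∀ w ∈ range f, ‖Ψ w‖ = 1) {w1 w2 : ℂ} (hw1 : w1 ∈ range f) (hw2 : w2 ∈ range f)
    (heq : Ψ w1 = Ψ w2) : w1 = w2 := by
  by_contra hne
  have hcl : closure U = U ∪ range f := by rw [← hfr, closure_eq_self_union_frontier]
  have hrc : range f ⊆ closure U := by rw [hcl]; exact subset_union_right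
  set ζ := Ψ w1 with hζ
  have hζn : ‖ζ‖ = 1 := h1 w1 hw1
  let S : ℕ → Set ℂ := fun n => φ '' (Metric.ball 0 1 ∩ Metric.ball ζ (1 / ((n:ℝ) + 1)))
  have hSU : ∀ n, S n ⊆ U := by
    rintro n _ ⟨z, hz, rfl⟩; exact h.mφ hz.1
  let K : ℕ → Set ℂ := fun n => closure (S n)
  have hKU : ∀ n, K n ⊆ closure U := fun n => closure_mono (hSU n)
  have hKa : Antitone K := by
    intro m n hmn
    apply closure_mono
    apply image_mono
    apply inter_subset_inter_right
    apply Metric.ball_subset_ball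
    exact Nat.one_div_le_one_div hmn
  have hKp : ∀ n, IsPreconnected (K n) := by
    intro n
    apply IsPreconnected.closure
    apply IsPreconnected.image
    · exact ((convex_ball _ _).inter (convex_ball _ _)).isPreconnected
    · exact h.dφ.continuousOn.mono inter_subset_left
  have hUcc : IsCompact (closure U) := hUb.isCompact_closure
  have hKc : ∀ n, IsCompact (K n) := fun n => hUcc.of_isClosed_subset isClosed_closure (hKU n)
  have hP := preconn_iInter hKa hKc hKp
  set P := ⋂ n, K n with hPdef
  have hPζ : ∀ w ∈ P, Ψ w = ζ := by
    intro w hw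
    have hle : ∀ n : ℕ, dist (Ψ w) ζ ≤ 1 / ((n:ℝ) + 1) := by
      intro n
      have hwn := mem_iInter.mp hw n
      have hwc := (hΨ w (hKU n hwn)).mono ((hSU n).trans subset_closure)
      have hm := hwc.mem_closure hwn (t := Metric.ball ζ (1 / ((n:ℝ) + 1))) (by
        rintro _ ⟨z, hz, rfl⟩
        rw [he (h.mφ hz.1), h.inv.2 hz.1]
        exact hz.2)
      exact Metric.closure_ball_subset_closedBall hm
    have := ge_of_tendsto' tendsto_one_div_add_atTop_nhds_zero_nat hle
    exact dist_le_zero.mp this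
  have hin : ∀ w ∈ range f, Ψ w = ζ → w ∈ P := by
    intro w hw hwζ
    rw [hPdef, mem_iInter]
    intro n
    have hwcl := hrc hw
    have : (𝓝[U] w).NeBot := mem_closure_iff_nhdsWithin_neBot.mp hwcl
    apply mem_closure_of_tendsto (f := id) (b := 𝓝[U] w) (tendsto_id.mono_left nhdsWithin_le_nhds)
    have ht : Tendsto Ψ (𝓝[U] w) (𝓝 ζ) := by
      rw [← hwζ]; exact (hΨ w hwcl).mono_left (nhdsWithin_mono _ subset_closure)
    filter_upwards [self_mem_nhdsWithin, ht.eventually_mem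
      (Metric.ball_mem_nhds ζ (ε := 1 / ((n:ℝ) + 1)) (by positivity))] with a ha hb
    rw [he ha] at hb
    exact ⟨ψ a, ⟨h.mψ ha, hb⟩, h.inv.1 ha⟩
  have hPf : P ⊆ range f := by
    intro w hw
    have hwcl := hKU 0 (mem_iInter.mp hw 0)
    rw [hcl] at hwcl
    rcases hwcl with hU | hr
    · exfalso
      have h2 := h.mψ hU
      rw [← he hU, hPζ w hw, mem_ball_zero_iff] at h2
      linarith
    · exact hr
  have hemb := hf.isClosedEmbedding hinj
  have hQ : IsPreconnected (f ⁻¹' P) := hP.preimage_of_isClosedMap hinj hemb.isClosedMap hPf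
  obtain ⟨x1, rfl⟩ := hw1
  obtain ⟨x2, rfl⟩ := hw2
  obtain ⟨x, hx⟩ := circle_interior hQ (x1 := x1) (x2 := x2) (hin _ ⟨x1, rfl⟩ rfl)
    (hin _ ⟨x2, rfl⟩ heq.symm) (fun hh => hne (by rw [hh]))
  rw [hemb.isEmbedding.nhds_eq_comap, mem_comap] at hx
  obtain ⟨t, ht, hsub⟩ := hx
  obtain ⟨r, hr, hball⟩ := Metric.mem_nhds_iff.mp ht
  set w := f x with hw
  have hwr : w ∈ range f := ⟨x, rfl⟩
  obtain ⟨z1, hz1, hz1d⟩ := Metric.mem_closure_iff.mp (hrc hwr) (r / 4) (by linarith)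
  obtain ⟨e, hee, hed⟩ := Metric.mem_closure_iff.mp (hext hwr) (r / 4) (by linarith)
  have hez : e ≠ z1 := fun hh => hee (hh ▸ subset_closure hz1)
  have hρ := dist_pos.mpr hez
  obtain ⟨T, hT, hrot⟩ := exists_T isClosed_closure.isOpen_compl hee hez
  have hsubr : Metric.closedBall z1 (dist e z1) ⊆ Metric.ball w r := by
    intro z hz
    rw [Metric.mem_closedBall] at hz
    rw [Metric.mem_ball]
    have a1 := dist_triangle z z1 w
    have a2 := dist_triangle e w z1
    rw [dist_comm z1 w] at a1
    rw [dist_comm e w] at a2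
    linarith
  have hΨle : ∀ z ∈ closure U, ‖Ψ z‖ ≤ 1 := by
    intro z hz
    rw [hcl] at hz
    rcases hz with hz | hz
    · rw [he hz]; exact (mem_ball_zero_iff.mp (h.mψ hz)).le
    · exact (h1 z hz).le
  have hmain := rotation_max hUo hz1 hρ hT (f := fun z => Ψ z - ζ)
    ((h.dψ.congr he).sub_const ζ) ((hΨ.mono inter_subset_left).sub continuousOn_const)
    (M := 2) (ε := 0) (by
      intro z hz
      refine (norm_sub_le _ _).trans ?_
      rw [hζn]; linarith [hΨle z hz.1]) (by
      intro z hz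
      have hz2 := hz.1
      rw [hfr] at hz2
      obtain ⟨y, rfl⟩ := hz2
      have : Ψ (f y) = ζ := hPζ _ (hsub (hball (hsubr hz.2)))
      simp [this]) le_rfl hrot
  obtain ⟨hc, hpow⟩ := hmain
  rw [zero_mul] at hpow
  have h0 := pow_eq_zero_iff hc.ne' |>.mp (le_antisymm hpow (by positivity))
  have h0' : Ψ z1 = ζ := by simpa [sub_eq_zero] using h0
  have h2 := h.mψ hz1
  rw [← he hz1, h0', mem_ball_zero_iff] at h2
  linarith

end Schoen

namespace Schoen
open Set Filter Topology

/-- inside and outside of a Jordan curve -/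
structure JData (f : Circle → ℂ) (U E : Set ℂ) : Prop where
  hf : Continuous f
  inj : Function.Injective f
  oU : IsOpen U
  oE : IsOpen E
  cU : IsConnected U
  cE : IsConnected E
  dis : Disjoint U E
  cover : U ∪ E = (range f)ᶜ
  bU : Bornology.IsBounded U
  ubE : ¬ Bornology.IsBounded E
  frU : frontier U = range f
  frE : frontier E = range f

lemma exists_jdata {f : Circle → ℂ} (hf : Continuous f) (hinj : Function.Injective f) :
    ∃ U E, JData f U E := by
  obtain ⟨U, E, h1, h2, h3, h4, h5, h6, h7, h8, h9, h10⟩ := jordan hf hinj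
  exact ⟨U, E, hf, hinj, h1, h2, h3, h4, h5, h6, h7, h8, h9, h10⟩

section
variable {f : Circle → ℂ} {U E : Set ℂ}

lemma JData.clU (h : JData f U E) : closure U = U ∪ range f := by
  rw [← h.frU, closure_eq_self_union_frontier]

lemma JData.clE (h : JData f U E) : closure E = E ∪ range f := by
  rw [← h.frE, closure_eq_self_union_frontier]

lemma JData.cases (h : JData f U E) (z : ℂ) : z ∈ U ∨ z ∈ E ∨ z ∈ range f := by
  by_cases hz : z ∈ range f
  · exact Or.inr (Or.inr hz)
  · have : z ∈ U ∪ E := by rw [h.cover]; exact hz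
    rcases this with h | h
    · exact Or.inl h
    · exact Or.inr (Or.inl h)

lemma JData.notU (h : JData f U E) {z : ℂ} (hz : z ∈ U) : z ∉ E ∧ z ∉ range f := by
  refine ⟨fun h' => Set.disjoint_left.mp h.dis hz h', ?_⟩
  have : z ∈ (range f)ᶜ := by rw [← h.cover]; exact Or.inl hz
  exact this

lemma JData.notE (h : JData f U E) {z : ℂ} (hz : z ∈ E) : z ∉ U ∧ z ∉ range f := by
  refine ⟨fun h' => Set.disjoint_left.mp h.dis h' hz, ?_⟩
  have : z ∈ (range f)ᶜ := by rw [← h.cover]; exact Or.inr hz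
  exact this

lemma JData.complU (h : JData f U E) : Uᶜ = closure E := by
  rw [h.clE]
  ext z
  constructor
  · intro hz
    exact (h.cases z).resolve_left hz
  · rintro (hz | hz) hU
    · exact (h.notE hz).1 hU
    · exact (h.notU hU).2 hz

lemma JData.ext (h : JData f U E) : range f ⊆ closure (closure U)ᶜ := by
  have h1 : E ⊆ (closure U)ᶜ := by
    intro z hz hz'
    rw [h.clU] at hz'
    rcases hz' with hh | hh
    · exact (h.notE hz).1 hh
    · exact (h.notE hz).2 hh
  refine Subset.trans ?_ (closure_mono h1)
  rw [h.clE]; exact subset_union_right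

end

lemma inv_cont {A B : Set ℂ} (hA : IsCompact A) {Ψ Φ : ℂ → ℂ} (hΨ : ContinuousOn Ψ A)
    (hinv : InvOn Φ Ψ A B) (h1 : MapsTo Ψ A B) (h2 : MapsTo Φ B A) : ContinuousOn Φ B := by
  rw [continuousOn_iff_isClosed]
  intro t ht
  refine ⟨Ψ '' (A ∩ t), ((hA.inter_right ht).image_of_continuousOn (hΨ.mono inter_subset_left)).isClosed, ?_⟩
  ext z
  constructor
  · rintro ⟨hz, hzB⟩
    exact ⟨⟨Φ z, ⟨h2 hzB, hz⟩, hinv.2 hzB⟩, hzB⟩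
  · rintro ⟨⟨a, ⟨ha, hat⟩, rfl⟩, hzB⟩
    refine ⟨?_, hzB⟩
    rw [mem_preimage, hinv.1 ha]; exact hat

/-- Caratheodory extension -/
structure Cara (f : Circle → ℂ) (U : Set ℂ) (z0 : ℂ) (Ψ Φ : ℂ → ℂ) : Prop where
  cΨ : ContinuousOn Ψ (closure U)
  cΦ : ContinuousOn Φ (Metric.closedBall 0 1)
  mΨ : MapsTo Ψ (closure U) (Metric.closedBall 0 1)
  mΦ : MapsTo Φ (Metric.closedBall 0 1) (closure U)
  inv : InvOn Φ Ψ (closure U) (Metric.closedBall 0 1)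
  inU : ∀ w ∈ U, ‖Ψ w‖ < 1
  onC : ∀ w ∈ range f, ‖Ψ w‖ = 1
  zero : Ψ z0 = 0

lemma JData.cara {f : Circle → ℂ} {U E : Set ℂ} (h : JData f U E) {z0 : ℂ} (hz0 : z0 ∈ U) :
    ∃ Ψ Φ : ℂ → ℂ, Cara f U z0 Ψ Φ := by
  have hS : SLog U := slog_of_compl h.oU h.cU h.bU (by
    rw [h.complU]; exact h.cE.isPreconnected.closure)
  obtain ⟨ψ, φ, r1, r2, r3, r4, r5, r6⟩ := riemann h.oU h.cU.isPreconnected h.bU hS hz0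
  have hR : RMap U ψ φ := ⟨r1, r2, r3, r4, r5⟩
  obtain ⟨Ψ, hΨ, he, hn⟩ := ext_exists h.hf h.inj h.oU h.cU.isPreconnected h.bU h.frU hR
  have hinU : ∀ w ∈ U, ‖Ψ w‖ < 1 := fun w hw => by
    rw [he hw]; exact mem_ball_zero_iff.mp (r3 hw)
  have hm : MapsTo Ψ (closure U) (Metric.closedBall 0 1) := by
    intro w hw
    rw [mem_closedBall_zero_iff]
    rw [h.clU] at hw
    rcases hw with hw | hw
    · exact (hinU w hw).le
    · exact (hn w hw).le
  have hinj : InjOn Ψ (closure U) := by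
    intro x hx y hy hxy
    rw [h.clU] at hx hy
    rcases hx with hx | hx <;> rcases hy with hy | hy
    · rw [he hx, he hy] at hxy
      rw [← r5.1 hx, ← r5.1 hy, hxy]
    · have := hinU x hx; rw [hxy, hn y hy] at this; exact absurd this (lt_irrefl _)
    · have := hinU y hy; rw [← hxy, hn x hx] at this; exact absurd this (lt_irrefl _)
    · exact ext_inj h.hf h.inj h.oU h.bU h.frU h.ext hR hΨ he hn hx hy hxy
  have hcomp : IsCompact (closure U) := h.bU.isCompact_closure
  have hsurj : SurjOn Ψ (closure U) (Metric.closedBall 0 1) := by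
    have h1 : Metric.ball (0:ℂ) 1 ⊆ Ψ '' closure U := by
      intro z hz
      refine ⟨φ z, subset_closure (r4 hz), ?_⟩
      rw [he (r4 hz), r5.2 hz]
    have h2 := (hcomp.image_of_continuousOn hΨ).isClosed.closure_subset_iff.mpr h1
    rw [closure_ball (0:ℂ) one_ne_zero] at h2
    exact h2
  have hb : BijOn Ψ (closure U) (Metric.closedBall 0 1) := ⟨hm, hinj, hsurj⟩
  refine ⟨Ψ, Function.invFunOn Ψ (closure U), hΨ, ?_, hm, hsurj.mapsTo_invFunOn, hb.invOn_invFunOn,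
    hinU, hn, by rw [he hz0, r6]⟩
  exact inv_cont hcomp hΨ hb.invOn_invFunOn hm hsurj.mapsTo_invFunOn

/-- the inverted curve -/
lemma JData.invert {f : Circle → ℂ} {U E : Set ℂ} (h : JData f U E) {a : ℂ} (ha : a ∈ U) :
    ∃ U' E', JData (fun x => (f x - a)⁻¹) U' E' ∧ 0 ∈ U' ∧
      (∀ w, w ∈ E → (w - a)⁻¹ ∈ U') ∧ ∀ v ∈ U', v ≠ 0 → a + v⁻¹ ∈ E := by
  have hfa : ∀ x, f x - a ≠ 0 := fun x hx => (h.notU ha).2 ⟨x, sub_eq_zero.mp hx⟩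
  have hc : Continuous (fun x => (f x - a)⁻¹) := (h.hf.sub continuous_const).inv₀ hfa
  have hi : Function.Injective (fun x => (f x - a)⁻¹) := by
    intro x y hxy
    exact h.inj (sub_left_injective (inv_injective hxy))
  obtain ⟨U', E', h'⟩ := exists_jdata hc hi
  have hEa : ∀ w ∈ E, w - a ≠ 0 := fun w hw hh => (h.notU ha).1 (sub_eq_zero.mp hh ▸ hw)
  set j : ℂ → ℂ := fun w => (w - a)⁻¹ with hj
  have hjE : IsPreconnected (j '' E) := h.cE.isPreconnected.image _
    (ContinuousOn.inv₀ (by fun_prop) hEa)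
  set V : Set ℂ := insert 0 (j '' E) with hV
  -- a small ball around a lies in U
  obtain ⟨r, hr, hrU⟩ := Metric.isOpen_iff.mp h.oU a ha
  have hVb : Bornology.IsBounded V := by
    rw [hV, Bornology.isBounded_insert]
    refine (Metric.isBounded_closedBall (x := (0:ℂ)) (r := r⁻¹)).subset ?_
    rintro _ ⟨w, hw, rfl⟩
    rw [mem_closedBall_zero_iff, hj]
    simp only [norm_inv]
    apply inv_anti₀ hr
    by_contra hcon
    push Not at hcon
    exact (h.notE hw).1 (hrU (by rw [Metric.mem_ball, dist_eq_norm]; exact hcon))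
  -- large points lie in E
  obtain ⟨R, hR⟩ := (h.bU.union (isCompact_range h.hf).isBounded).subset_closedBall a
  have hlarge : ∀ w, R < ‖w - a‖ → w ∈ E := by
    intro w hw
    rcases h.cases w with hh | hh | hh
    · have := hR (Or.inl hh); rw [Metric.mem_closedBall, dist_eq_norm] at this; linarith
    · exact hh
    · have := hR (Or.inr hh); rw [Metric.mem_closedBall, dist_eq_norm] at this; linarith
  have h0cl : (0:ℂ) ∈ closure (j '' E) := by
    rw [Metric.mem_closure_iff]
    intro ε hε
    set t : ℝ := max R (max 0 ε⁻¹) + 1 with ht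
    have t1 : R < t := by have := le_max_left R (max 0 ε⁻¹); linarith
    have t2 : 0 < t := by
      have := le_max_right R (max 0 ε⁻¹); have := le_max_left 0 ε⁻¹; linarith
    have t3 : ε⁻¹ < t := by
      have := le_max_right R (max 0 ε⁻¹); have := le_max_right 0 ε⁻¹; linarith
    have hn : ‖(a + (t:ℂ)) - a‖ = t := by
      rw [add_sub_cancel_left, Complex.norm_real, Real.norm_of_nonneg t2.le]
    refine ⟨j (a + t), mem_image_of_mem j (hlarge _ (by rw [hn]; exact t1)), ?_⟩
    rw [dist_comm, dist_zero_right]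
    simp only [j, norm_inv, hn]
    exact inv_lt_of_inv_lt₀ hε t3
  have hVp : IsPreconnected V := hjE.subset_closure (subset_insert _ _)
    (insert_subset h0cl subset_closure)
  -- membership via the inverse
  have hmem : ∀ v : ℂ, v ≠ 0 → (v ∈ V ↔ a + v⁻¹ ∈ E) := by
    intro v hv
    constructor
    · rintro (hh | ⟨w, hw, rfl⟩)
      · exact absurd hh hv
      · simp only [j, inv_inv, add_sub_cancel]; exact hw
    · intro hh
      right
      exact ⟨_, hh, by simp [j]⟩
  have hran : ∀ v : ℂ, v ≠ 0 → (v ∈ range (fun x => (f x - a)⁻¹) ↔ a + v⁻¹ ∈ range f) := by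
    intro v hv
    constructor
    · rintro ⟨x, rfl⟩; exact ⟨x, by simp⟩
    · rintro ⟨x, hx⟩
      exact ⟨x, by simp [hx]⟩
  have h0ran : (0:ℂ) ∉ range (fun x => (f x - a)⁻¹) := by
    rintro ⟨x, hx⟩
    exact inv_ne_zero (hfa x) hx
  have hVran : Disjoint V (range (fun x => (f x - a)⁻¹)) := by
    rw [Set.disjoint_left]
    intro v hv hv'
    by_cases hv0 : v = 0
    · rw [hv0] at hv'; exact h0ran hv'
    · exact (h.notE ((hmem v hv0).mp hv)).2 ((hran v hv0).mp hv')
  have hjc : ∀ v : ℂ, v ≠ 0 → ContinuousAt (fun v : ℂ => a + v⁻¹) v := fun v hv =>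
    continuousAt_const.add (continuousAt_inv₀ hv)
  have hVo : IsOpen V := by
    rw [isOpen_iff_mem_nhds]
    intro v hv
    by_cases hv0 : v = 0
    · subst hv0
      have hR1 : 0 < max R 0 + 1 := by have := le_max_right R 0; linarith
      filter_upwards [Metric.ball_mem_nhds (0:ℂ) (inv_pos.mpr hR1)] with z hz
      by_cases hz0 : z = 0
      · exact Or.inl hz0
      · rw [hmem z hz0]
        apply hlarge
        rw [add_sub_cancel_left, norm_inv]
        rw [mem_ball_zero_iff] at hz
        have := (lt_inv_comm₀ (norm_pos_iff.mpr hz0) hR1).mp hz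
        have := le_max_left R 0
        linarith
    · have hE := (hmem v hv0).mp hv
      filter_upwards [(hjc v hv0).eventually_mem (h.oE.mem_nhds hE), isOpen_ne.mem_nhds hv0] with z hz hz0
      exact (hmem z hz0).mpr hz
  have hfrV : ∀ v ∈ frontier V, v ∈ range (fun x => (f x - a)⁻¹) := by
    intro v hv
    rw [frontier, hVo.interior_eq] at hv
    have hv0 : v ≠ 0 := fun hh => hv.2 (hh ▸ mem_insert _ _)
    rw [hran v hv0]
    rcases h.cases (a + v⁻¹) with hh | hh | hh
    · exfalso
      have hev : ∀ᶠ z in 𝓝 v, a + z⁻¹ ∈ U ∧ z ≠ 0 :=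
        ((hjc v hv0).eventually_mem (h.oU.mem_nhds hh)).and (isOpen_ne.mem_nhds hv0)
      obtain ⟨z, hzV, hz⟩ := (mem_closure_iff_frequently.mp hv.1).and_eventually hev |>.exists
      exact (h.notU hz.1).1 ((hmem z hz.2).mp hzV)
    · exact absurd ((hmem v hv0).mpr hh) hv.2
    · exact hh
  have hE'V : ¬ (E' ∩ V).Nonempty := by
    intro hne
    have := sub_of_frontier hVo h'.cE.isPreconnected
      (Set.disjoint_left.mpr fun z hz hz' => (h'.notE hz).2 (hfrV z hz')) hne
    exact h'.ubE (hVb.subset this)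
  have hVU : V ⊆ U' := by
    intro v hv
    rcases h'.cases v with hh | hh | hh
    · exact hh
    · exact absurd ⟨v, hh, hv⟩ hE'V
    · exact absurd hh (Set.disjoint_left.mp hVran hv)
  have hUV : U' ⊆ V := sub_of_frontier hVo h'.cU.isPreconnected
    (Set.disjoint_left.mpr fun z hz hz' => (h'.notU hz).2 (hfrV z hz'))
    ⟨0, hVU (mem_insert _ _), mem_insert _ _⟩
  exact ⟨U', E', h', hVU (mem_insert _ _),
    fun w hw => hVU (mem_insert_of_mem _ (mem_image_of_mem j hw)),
    fun v hv hv0 => (hmem v hv0).mp (hUV hv)⟩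

end Schoen

namespace Schoen
open Set Filter Topology

theorem schoen_complex {f : Circle → ℂ} (hf : Continuous f) (hinj : Function.Injective f) :
    ∃ H : ℂ ≃ₜ ℂ, H '' range f = Metric.sphere 0 1 := by
  classical
  obtain ⟨U, E, h⟩ := exists_jdata hf hinj
  obtain ⟨a, ha⟩ := h.cU.nonempty
  obtain ⟨Ψ1, Φ1, c1⟩ := h.cara ha
  obtain ⟨U', E', h', h0', hEU, hUE⟩ := h.invert ha
  obtain ⟨Ψ2, Φ2, c2⟩ := h'.cara h0'
  have hfa : ∀ x, f x - a ≠ 0 := fun x hx => (h.notU ha).2 ⟨x, sub_eq_zero.mp hx⟩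
  have hEa : ∀ w ∈ closure E, w - a ≠ 0 := by
    intro w hw hh
    rw [h.clE] at hw
    rw [sub_eq_zero] at hh
    subst hh
    rcases hw with hw | hw
    · exact (h.notU ha).1 hw
    · exact (h.notU ha).2 hw
  have hJ : ∀ w ∈ closure E, (w - a)⁻¹ ∈ closure U' := by
    intro w hw
    rw [h.clE] at hw
    rw [h'.clU]
    rcases hw with hw | ⟨x, rfl⟩
    · exact Or.inl (hEU w hw)
    · exact Or.inr ⟨x, rfl⟩
  have hJ' : ∀ v ∈ closure U', v ≠ 0 → a + v⁻¹ ∈ closure E := by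
    intro v hv hv0
    rw [h'.clU] at hv
    rw [h.clE]
    rcases hv with hv | ⟨x, rfl⟩
    · exact Or.inl (hUE v hv hv0)
    · exact Or.inr ⟨x, by simp⟩
  have hinj1 : InjOn Ψ1 (closure U) := c1.inv.1.injOn
  have hinj2 : InjOn Ψ2 (closure U') := c2.inv.1.injOn
  have hinjΦ2 : InjOn Φ2 (Metric.closedBall 0 1) := c2.inv.2.injOn
  have h0cl : (0:ℂ) ∈ closure U' := subset_closure h0'
  have hrU : range f ⊆ closure U := by rw [h.clU]; exact subset_union_right
  have hrE : range f ⊆ closure E := by rw [h.clE]; exact subset_union_right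
  set Z : ℂ → ℂ := fun w => Ψ2 ((w - a)⁻¹) with hZ
  have hZc : ContinuousOn Z (closure E) :=
    c2.cΨ.comp (ContinuousOn.inv₀ (by fun_prop) hEa) hJ
  have hZ0 : ∀ w ∈ closure E, Z w ≠ 0 := by
    intro w hw hz
    have := hinj2 (hJ w hw) h0cl (hz.trans c2.zero.symm)
    exact inv_ne_zero (hEa w hw) this
  have hZ1 : ∀ w ∈ closure E, ‖Z w‖ ≤ 1 := fun w hw => mem_closedBall_zero_iff.mp (c2.mΨ (hJ w hw))
  have hZE : ∀ w ∈ E, ‖Z w‖ < 1 := fun w hw => c2.inU _ (hEU w hw)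
  have hZr : ∀ w ∈ range f, ‖Z w‖ = 1 := by
    rintro _ ⟨x, rfl⟩; exact c2.onC _ ⟨x, rfl⟩
  have hZinj : InjOn Z (closure E) := by
    intro x hx y hy hxy
    have := inv_injective (hinj2 (hJ x hx) (hJ y hy) hxy)
    exact sub_left_injective this
  set q : ℂ → ℂ := fun ζ => a + (Φ2 ζ)⁻¹ with hq
  have hsb : Metric.sphere (0:ℂ) 1 ⊆ Metric.closedBall 0 1 := Metric.sphere_subset_closedBall
  have hΦrr : ∀ ζ ∈ Metric.sphere (0:ℂ) 1, Φ2 ζ ∈ range (fun x => (f x - a)⁻¹) := by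
    intro ζ hζ
    have h1 := c2.mΦ (hsb hζ)
    rw [h'.clU] at h1
    refine h1.resolve_left fun hU => ?_
    have := c2.inU _ hU
    rw [c2.inv.2 (hsb hζ), mem_sphere_zero_iff_norm.mp hζ] at this
    exact lt_irrefl _ this
  have hΦ20 : ∀ ζ ∈ Metric.sphere (0:ℂ) 1, Φ2 ζ ≠ 0 := by
    intro ζ hζ
    obtain ⟨x, hx⟩ := hΦrr ζ hζ
    rw [← hx]
    exact inv_ne_zero (hfa x)
  have hqr : ∀ ζ ∈ Metric.sphere (0:ℂ) 1, q ζ ∈ range f := by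
    intro ζ hζ
    obtain ⟨x, hx⟩ := hΦrr ζ hζ
    exact ⟨x, by simp only [q]; rw [← hx]; simp⟩
  have hqc : ContinuousOn q (Metric.sphere 0 1) :=
    continuousOn_const.add ((c2.cΦ.mono hsb).inv₀ hΦ20)
  have hqinj : InjOn q (Metric.sphere 0 1) := by
    intro x hx y hy hxy
    have := inv_injective (add_left_cancel hxy)
    exact hinjΦ2 (hsb hx) (hsb hy) this
  have hqZ : ∀ w ∈ range f, q (Z w) = w := by
    intro w hw
    simp only [q, Z]
    rw [c2.inv.1 (hJ w (hrE hw))]; simp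
  have hZq : ∀ ζ ∈ Metric.sphere (0:ℂ) 1, Z (q ζ) = ζ := by
    intro ζ hζ
    simp only [q, Z]
    rw [add_sub_cancel_left, inv_inv, c2.inv.2 (hsb hζ)]
  -- normalised direction
  set D : ℂ → ℂ := fun z => z / (‖z‖ : ℂ) with hD
  have hDs : ∀ z : ℂ, z ≠ 0 → D z ∈ Metric.sphere (0:ℂ) 1 := by
    intro z hz
    rw [mem_sphere_zero_iff_norm]
    simp only [D]
    rw [norm_div, Complex.norm_real, norm_norm, div_self (norm_ne_zero_iff.mpr hz)]
  have hDr : ∀ z : ℂ, z ≠ 0 → (‖z‖ : ℂ) * D z = z := by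
    intro z hz
    have : (‖z‖ : ℂ) ≠ 0 := by exact_mod_cast norm_ne_zero_iff.mpr hz
    simp only [D]; field_simp
  have hD1 : ∀ z : ℂ, ‖z‖ = 1 → D z = z := by
    intro z hz; simp [D, hz]
  have hDc : ContinuousOn D {0}ᶜ := by
    apply ContinuousOn.div continuousOn_id (by fun_prop)
    intro z hz
    exact_mod_cast norm_ne_zero_iff.mpr hz
  set H2 : ℂ → ℂ := fun w => ((‖Z w‖⁻¹ : ℝ) : ℂ) * Ψ1 (q (D (Z w))) with hH2
  have hH2c : ContinuousOn H2 (closure E) := by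
    apply ContinuousOn.mul
    · apply Complex.continuous_ofReal.comp_continuousOn
      exact hZc.norm.inv₀ fun w hw => norm_ne_zero_iff.mpr (hZ0 w hw)
    · refine c1.cΨ.comp (t := closure U) ?_ ?_
      · refine hqc.comp (f := fun w => D (Z w)) (t := Metric.sphere 0 1) ?_ ?_
        · exact hDc.comp hZc fun w hw => hZ0 w hw
        · exact fun w hw => hDs _ (hZ0 w hw)
      · exact fun w hw => hrU (hqr _ (hDs _ (hZ0 w hw)))
  have hΨq : ∀ ζ ∈ Metric.sphere (0:ℂ) 1, ‖Ψ1 (q ζ)‖ = 1 := fun ζ hζ => c1.onC _ (hqr ζ hζ)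
  have hH2n : ∀ w ∈ closure E, ‖H2 w‖ = ‖Z w‖⁻¹ := by
    intro w hw
    simp only [H2]
    rw [norm_mul, hΨq _ (hDs _ (hZ0 w hw)), Complex.norm_real, mul_one,
      Real.norm_of_nonneg (by positivity)]
  have hH2C : ∀ w ∈ range f, H2 w = Ψ1 w := by
    intro w hw
    simp only [H2]
    rw [hZr w hw, hD1 _ (hZr w hw), hqZ w hw]; simp
  have hH2inj : InjOn H2 (closure E) := by
    intro x hx y hy hxy
    have hn : ‖Z x‖ = ‖Z y‖ := by
      have := congrArg norm hxy
      rw [hH2n x hx, hH2n y hy] at this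
      exact inv_injective this
    simp only [H2] at hxy
    rw [hn] at hxy
    have hne : ((‖Z y‖⁻¹ : ℝ) : ℂ) ≠ 0 := by
      exact_mod_cast inv_ne_zero (norm_ne_zero_iff.mpr (hZ0 y hy))
    have h1 := mul_left_cancel₀ hne hxy
    have sx := hDs _ (hZ0 x hx)
    have sy := hDs _ (hZ0 y hy)
    have h2 := hqinj sx sy (hinj1 (hrU (hqr _ sx)) (hrU (hqr _ sy)) h1)
    apply hZinj hx hy
    rw [← hDr _ (hZ0 x hx), ← hDr _ (hZ0 y hy), h2, hn]
  have hH2surj : ∀ y : ℂ, 1 ≤ ‖y‖ → ∃ w ∈ closure E, H2 w = y := by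
    intro y hy
    have hy0 : y ≠ 0 := by rw [← norm_pos_iff]; linarith
    have hyn : (‖y‖ : ℂ) ≠ 0 := by exact_mod_cast norm_ne_zero_iff.mpr hy0
    have hDy := hDs y hy0
    set c := Φ1 (D y) with hc
    have hcU := c1.mΦ (hsb hDy)
    have hcΨ : Ψ1 c = D y := c1.inv.2 (hsb hDy)
    have hcr : c ∈ range f := by
      rw [h.clU] at hcU
      refine hcU.resolve_left fun hU => ?_
      have := c1.inU _ hU
      rw [← hc, hcΨ, mem_sphere_zero_iff_norm.mp hDy] at this
      exact lt_irrefl _ this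
    set ζ := Z c with hζ
    have hζ1 : ‖ζ‖ = 1 := hZr c hcr
    have hζ0 : ζ ≠ 0 := by rw [← norm_pos_iff, hζ1]; exact one_pos
    set z : ℂ := ((‖y‖⁻¹ : ℝ) : ℂ) * ζ with hz
    have hzn : ‖z‖ = ‖y‖⁻¹ := by
      rw [hz, norm_mul, hζ1, mul_one, Complex.norm_real, Real.norm_of_nonneg (by positivity)]
    have hz0 : z ≠ 0 := mul_ne_zero (by exact_mod_cast inv_ne_zero (norm_ne_zero_iff.mpr hy0)) hζ0
    have hzb : z ∈ Metric.closedBall (0:ℂ) 1 := by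
      rw [mem_closedBall_zero_iff, hzn]; exact inv_le_one_of_one_le₀ hy
    have hΦz : Φ2 z ≠ 0 := by
      intro hh
      apply hz0
      rw [← c2.inv.2 hzb, hh, c2.zero]
    refine ⟨a + (Φ2 z)⁻¹, hJ' _ (c2.mΦ hzb) hΦz, ?_⟩
    have hZw : Z (a + (Φ2 z)⁻¹) = z := by
      simp only [Z]; rw [add_sub_cancel_left, inv_inv, c2.inv.2 hzb]
    have hDz : D z = ζ := by
      simp only [D]
      rw [hzn, hz]
      have : ((‖y‖⁻¹ : ℝ) : ℂ) ≠ 0 := by exact_mod_cast inv_ne_zero (norm_ne_zero_iff.mpr hy0)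
      exact mul_div_cancel_left₀ ζ this
    simp only [H2]
    rw [hZw, hzn, inv_inv, hDz, hζ, hqZ c hcr, hcΨ, hDr y hy0]
  -- the piecewise map
  set H : ℂ → ℂ := fun w => if w ∈ closure U then Ψ1 w else H2 w with hH
  have hHU : ∀ w ∈ closure U, H w = Ψ1 w := fun w hw => if_pos hw
  have hHE : ∀ w ∈ closure E, H w = H2 w := by
    intro w hw
    by_cases hwU : w ∈ closure U
    · rw [hHU w hwU]
      rw [h.clE] at hw
      rcases hw with hw | hw
      · rw [h.clU] at hwU
        rcases hwU with hh | hh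
        · exact absurd hh (h.notE hw).1
        · exact absurd hh (h.notE hw).2
      · exact (hH2C w hw).symm
    · exact if_neg hwU
  have hcov : closure U ∪ closure E = univ := by
    rw [eq_univ_iff_forall]
    intro w
    rcases h.cases w with hw | hw | hw
    · exact Or.inl (subset_closure hw)
    · exact Or.inr (subset_closure hw)
    · exact Or.inl (hrU hw)
  have hHc : Continuous H := by
    rw [← continuousOn_univ, ← hcov]
    exact (c1.cΨ.congr hHU).union_of_isClosed (hH2c.congr hHE) isClosed_closure isClosed_closure
  have hlt : ∀ w ∈ U, ‖H w‖ < 1 := fun w hw => by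
    rw [hHU w (subset_closure hw)]; exact c1.inU w hw
  have hge : ∀ w ∈ closure E, 1 ≤ ‖H w‖ := by
    intro w hw
    rw [hHE w hw, hH2n w hw]
    exact (one_le_inv₀ (norm_pos_iff.mpr (hZ0 w hw))).mpr (hZ1 w hw)
  have hUE' : ∀ w, w ∈ U ∨ w ∈ closure E := by
    intro w
    rw [← h.complU]
    exact em _
  have hHinj : Function.Injective H := by
    intro x y hxy
    rcases hUE' x with hx | hx <;> rcases hUE' y with hy | hy
    · rw [hHU x (subset_closure hx), hHU y (subset_closure hy)] at hxy
      exact hinj1 (subset_closure hx) (subset_closure hy) hxy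
    · have h1 := hlt x hx; have h2 := hge y hy; rw [hxy] at h1; linarith
    · have h1 := hlt y hy; have h2 := hge x hx; rw [hxy] at h2; linarith
    · rw [hHE x hx, hHE y hy] at hxy
      exact hH2inj hx hy hxy
  have hHsurj : Function.Surjective H := by
    intro y
    rcases le_total ‖y‖ 1 with hy | hy
    · have hyb : y ∈ Metric.closedBall (0:ℂ) 1 := mem_closedBall_zero_iff.mpr hy
      exact ⟨Φ1 y, by rw [hHU _ (c1.mΦ hyb), c1.inv.2 hyb]⟩
    · obtain ⟨w, hw, he⟩ := hH2surj y hy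
      exact ⟨w, by rw [hHE w hw, he]⟩
  -- properness
  have hprop : Tendsto H (cocompact ℂ) (cocompact ℂ) := by
    rw [← Metric.cobounded_eq_cocompact, ← tendsto_norm_atTop_iff_cobounded]
    have hevE : ∀ᶠ w in Bornology.cobounded ℂ, w ∈ closure E := by
      have := Bornology.isBounded_def.mp h.bU
      filter_upwards [this] with w hw
      exact (hUE' w).resolve_left hw
    have t1 : Tendsto (fun w : ℂ => (w - a)⁻¹) (Bornology.cobounded ℂ) (𝓝 0) := by
      apply Filter.tendsto_inv₀_cobounded.comp
      rw [← tendsto_norm_atTop_iff_cobounded]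
      have : Tendsto (fun w : ℂ => ‖w‖ - ‖a‖) (Bornology.cobounded ℂ) atTop :=
        tendsto_atTop_add_const_right _ _ tendsto_norm_cobounded_atTop
      exact tendsto_atTop_mono (fun w => norm_sub_norm_le w a) this
    have t2 : Tendsto Z (Bornology.cobounded ℂ) (𝓝 0) := by
      have hca : ContinuousAt Ψ2 0 := c2.cΨ.continuousAt
        (mem_of_superset (h'.oU.mem_nhds h0') subset_closure)
      have := hca.tendsto.comp t1
      rw [c2.zero] at this
      exact this
    have t3 : Tendsto (fun w => ‖Z w‖) (Bornology.cobounded ℂ) (𝓝[>] 0) := by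
      rw [tendsto_nhdsWithin_iff]
      refine ⟨by simpa using t2.norm, ?_⟩
      filter_upwards [hevE] with w hw
      exact norm_pos_iff.mpr (hZ0 w hw)
    refine (tendsto_inv_nhdsGT_zero.comp t3).congr' ?_
    filter_upwards [hevE] with w hw
    rw [hHE w hw, hH2n w hw]; rfl
  have hclosed : IsClosedMap H :=
    (isProperMap_iff_tendsto_cocompact.mpr ⟨hHc, hprop⟩).isClosedMap
  have hhomeo : IsHomeomorph H :=
    isHomeomorph_iff_continuous_isClosedMap_bijective.mpr ⟨hHc, hclosed, hHinj, hHsurj⟩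
  refine ⟨hhomeo.homeomorph, ?_⟩
  change H '' range f = _
  ext y
  constructor
  · rintro ⟨w, hw, rfl⟩
    rw [mem_sphere_zero_iff_norm, hHU w (hrU hw)]
    exact c1.onC w hw
  · intro hy
    obtain ⟨w, rfl⟩ := hHsurj y
    rw [mem_sphere_zero_iff_norm] at hy
    refine ⟨w, ?_, rfl⟩
    rcases h.cases w with hw | hw | hw
    · have := hlt w hw; linarith
    · have hwE := subset_closure hw
      have h1 := hZE w hw
      rw [hHE w hwE, hH2n w hwE, inv_eq_one] at hy
      linarith
    · exact hw

end Schoen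

/-- **The Schönflies theorem.** For every Jordan curve `C` in the plane (the image of a
continuous injective map from the unit circle into `ℝ²`) there is a homeomorphism `h` of
`ℝ²` onto itself carrying `C` onto the unit circle. -/
theorem schoenflies_theorem (C : Set (EuclideanSpace ℝ (Fin 2)))
    (f : Metric.sphere (0 : EuclideanSpace ℝ (Fin 2)) 1 → EuclideanSpace ℝ (Fin 2))
    (hf : Continuous f) (hinj : Function.Injective f) (hC : C = Set.range f) :
    ∃ h : EuclideanSpace ℝ (Fin 2) ≃ₜ EuclideanSpace ℝ (Fin 2),
      h '' C = Metric.sphere (0 : EuclideanSpace ℝ (Fin 2)) 1 := by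
  let e : ℂ ≃ₗᵢ[ℝ] EuclideanSpace ℝ (Fin 2) := Complex.orthonormalBasisOneI.repr
  have hes : ∀ x : Circle, e (x : ℂ) ∈ Metric.sphere (0 : EuclideanSpace ℝ (Fin 2)) 1 := by
    intro x
    rw [mem_sphere_zero_iff_norm, e.norm_map, Circle.norm_coe]
  let g : Circle → ℂ := fun x => e.symm (f ⟨e (x : ℂ), hes x⟩)
  have hg : Continuous g := by
    apply e.symm.continuous.comp
    apply hf.comp
    exact Continuous.subtype_mk (e.continuous.comp Schoen.cont_coe) _
  have hgi : Function.Injective g := by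
    intro x y hxy
    have h1 := hinj (e.symm.injective hxy)
    have h2 := e.injective (Subtype.ext_iff.mp h1)
    exact Circle.ext h2
  have hrange : e '' Set.range g = C := by
    rw [hC]
    ext w
    constructor
    · rintro ⟨_, ⟨x, rfl⟩, rfl⟩
      exact ⟨⟨e (x : ℂ), hes x⟩, by simp [g]⟩
    · rintro ⟨⟨s, hs⟩, rfl⟩
      have hn : ‖e.symm s‖ = 1 := by
        rw [e.symm.norm_map]; exact mem_sphere_zero_iff_norm.mp hs
      refine ⟨_, ⟨⟨e.symm s, mem_sphere_zero_iff_norm.mpr hn⟩, rfl⟩, ?_⟩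
      simp [g]
  obtain ⟨H, hH⟩ := Schoen.schoen_complex hg hgi
  refine ⟨(e.symm.toHomeomorph.trans H).trans e.toHomeomorph, ?_⟩
  rw [← hrange]
  have h1 : ((e.symm.toHomeomorph.trans H).trans e.toHomeomorph) '' (e '' Set.range g)
      = e '' (H '' Set.range g) := by
    rw [Set.image_image, Set.image_image]
    apply Set.image_congr
    intro w _
    simp
  rw [h1, hH, e.image_sphere, map_zero]
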